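/- arXiv:1901.06951 — 2 statements merged into one kernel-verified Lean document; each statement's English description precedes it below -/
import Mathlib

section
/- Assume V ∈ C¹(ℝ^N) satisfies (V3) and (V4). If c ≥ 0 is such that condition (V^c) holds, then the coercivity condition (1.7) holds, and there exists q_c ∈ C²(ℝ, ℝ^N) with q̈_c(t) = ∇V(q_c(t)) for all t ∈ ℝ, inf_{t∈ℝ} dist(q_c(t), 𝒱^c₋) = 0, inf_{t∈ℝ} dist(q_c(t), 𝒱^c₊) = 0, and ½|q̇_c(t)|² − V(q_c(t)) = −c for all t ∈ ℝ. -/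
open MeasureTheory Filter Metric Set Topology
open scoped ENNReal

noncomputable section

/-- Euclidean space `ℝ^N`. -/
abbrev Euc (N : ℕ) := EuclideanSpace ℝ (Fin N)

/-- Distance between two subsets of a metric space. -/
def setDist {E : Type*} [PseudoMetricSpace E] (A B : Set E) : ℝ :=
  sInf ((fun p : E × E => dist p.1 p.2) '' (A ×ˢ B))

/-- `q ∈ H¹_loc(ℝ, ℝ^N)` with derivative `q'`: `q` is locally absolutely continuous with
locally square-integrable derivative `q'`. -/
def IsH1loc {N : ℕ} (q q' : ℝ → Euc N) : Prop :=
  LocallyIntegrable q' volume ∧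
  (∀ a b : ℝ, IntegrableOn (fun t => ‖q' t‖ ^ 2) (Icc a b) volume) ∧
  (∀ a b : ℝ, q b - q a = ∫ t in a..b, q' t)

/-- The action `J_{c,I}(q) = ∫_I (½|q̇(t)|² + (V(q(t)) − c)) dt`, valued in `[0,+∞]`. -/
def lagJ {N : ℕ} (V : Euc N → ℝ) (c : ℝ) (q q' : ℝ → Euc N) (I : Set ℝ) : ℝ≥0∞ :=
  ∫⁻ t in I, ENNReal.ofReal (2⁻¹ * ‖q' t‖ ^ 2 + (V (q t) - c))

/-- The admissible class `Γ_c` of pairs (function, derivative): `q ∈ H¹_loc`,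
`V(q(t)) ≥ c` for all `t`, `liminf_{t→−∞} dist(q(t),𝒱⁻) = 0` and
`liminf_{t→+∞} dist(q(t),𝒱⁺) = 0`. -/
def Gamma {N : ℕ} (V : Euc N → ℝ) (c : ℝ) (Vm Vp : Set (Euc N)) :
    Set ((ℝ → Euc N) × (ℝ → Euc N)) :=
  {p | IsH1loc p.1 p.2 ∧ (∀ t, c ≤ V (p.1 t)) ∧
    (∀ ε > 0, ∃ᶠ t in atBot, infDist (p.1 t) Vm < ε) ∧
    (∀ ε > 0, ∃ᶠ t in atTop, infDist (p.1 t) Vp < ε)}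

/-- `m_c := inf_{q ∈ Γ_c} J_c(q)`. -/
def mc {N : ℕ} (V : Euc N → ℝ) (c : ℝ) (Vm Vp : Set (Euc N)) : ℝ≥0∞ :=
  ⨅ (p) (_ : p ∈ Gamma V c Vm Vp), lagJ V c p.1 p.2 univ

/-- Coercivity condition (1.7) for the constant `R`. -/
def Coercive {N : ℕ} (V : Euc N → ℝ) (c : ℝ) (Vm Vp : Set (Euc N)) (R : ℝ) : Prop :=
  mc V c Vm Vp =
    ⨅ (p) (_ : p ∈ Gamma V c Vm Vp) (_ : ∀ t, ‖p.1 t‖ ≤ R), lagJ V c p.1 p.2 univ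

set_option linter.unusedSectionVars false
set_option linter.unusedVariables false

namespace Duff

variable {E : Type*} [NormedAddCommGroup E] [InnerProductSpace ℝ E]

/-- `G` controls the kinetic energy of `q` on `[a,b]`. -/
def Adm (q : ℝ → E) (G : ℝ → ℝ) (a b : ℝ) : Prop :=
  ∀ s t, a ≤ s → s ≤ t → t ≤ b → ‖q t - q s‖ ^ 2 ≤ (t - s) * (G t - G s)

/-- The action of the pair `(q, G)` on `[a,b]`. -/
def Act (U : E → ℝ) (q : ℝ → E) (G : ℝ → ℝ) (a b : ℝ) : ℝ :=
  2⁻¹ * (G b - G a) + ∫ t in a..b, U (q t)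

/-- There is a path from `x` to `y` inside the ball of radius `R` with action at most `A`. -/
def Cost (U : E → ℝ) (R : ℝ) (x y : E) (A : ℝ) : Prop :=
  ∃ a b : ℝ, a ≤ b ∧ ∃ (q : ℝ → E) (G : ℝ → ℝ), Adm q G a b ∧ q a = x ∧ q b = y ∧
    (∀ t ∈ Icc a b, ‖q t‖ ≤ R) ∧ Act U q G a b ≤ A

lemma Adm.mono {q : ℝ → E} {G : ℝ → ℝ} {a b : ℝ} (h : Adm q G a b) {s t : ℝ}
    (hs : a ≤ s) (hst : s ≤ t) (ht : t ≤ b) : G s ≤ G t := by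
  rcases hst.eq_or_lt with rfl | hlt
  · exact le_rfl
  · have h1 := h s t hs hst ht
    have h2 : 0 ≤ (t - s) * (G t - G s) := le_trans (by positivity) h1
    have h3 := nonneg_of_mul_nonneg_right h2 (sub_pos.2 hlt)
    linarith

lemma Adm.sub {q : ℝ → E} {G : ℝ → ℝ} {a b a' b' : ℝ} (h : Adm q G a b)
    (ha : a ≤ a') (hb : b' ≤ b) : Adm q G a' b' := fun s t hs hst ht =>
  h s t (ha.trans hs) hst (ht.trans hb)

lemma Adm.continuousOn {q : ℝ → E} {G : ℝ → ℝ} {a b : ℝ} (h : Adm q G a b) :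
    ContinuousOn q (Icc a b) := by
  by_cases hab : a ≤ b
  swap
  · rw [Icc_eq_empty hab]; exact continuousOn_empty q
  have hG : 0 ≤ G b - G a := sub_nonneg.2 (h.mono le_rfl hab le_rfl)
  have key : ∀ s ∈ Icc a b, ∀ t ∈ Icc a b, ‖q t - q s‖ ^ 2 ≤ |t - s| * (G b - G a) := by
    intro s hs t ht
    rcases le_total s t with hst | hst
    · have h1 := h s t hs.1 hst ht.2
      have h2 := h.mono le_rfl hs.1 hs.2
      have h3 := h.mono ht.1 ht.2 le_rfl
      rw [abs_of_nonneg (sub_nonneg.2 hst)]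
      exact h1.trans (mul_le_mul_of_nonneg_left (by linarith) (sub_nonneg.2 hst))
    · have h1 := h t s ht.1 hst hs.2
      have h2 := h.mono le_rfl ht.1 ht.2
      have h3 := h.mono hs.1 hs.2 le_rfl
      rw [abs_sub_comm, abs_of_nonneg (sub_nonneg.2 hst), norm_sub_rev]
      exact h1.trans (mul_le_mul_of_nonneg_left (by linarith) (sub_nonneg.2 hst))
  intro s hs
  rw [ContinuousWithinAt, tendsto_iff_norm_sub_tendsto_zero]
  have h2 : Tendsto (fun t => √(|t - s| * (G b - G a))) (𝓝[Icc a b] s) (𝓝 0) := by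
    have : Continuous (fun t => √(|t - s| * (G b - G a))) := by fun_prop
    have h3 := (this.tendsto s).mono_left (nhdsWithin_le_nhds (s := Icc a b))
    simpa using h3
  refine squeeze_zero' (Eventually.of_forall fun t => norm_nonneg _) ?_ h2
  filter_upwards [self_mem_nhdsWithin] with t ht
  exact Real.le_sqrt_of_sq_le (key s hs t ht)

lemma cs_glue {x y : E} {a b A B : ℝ} (ha : 0 ≤ a) (hb : 0 ≤ b) (hA : 0 ≤ A) (hB : 0 ≤ B)
    (hx : ‖x‖ ^ 2 ≤ a * A) (hy : ‖y‖ ^ 2 ≤ b * B) :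
    ‖x + y‖ ^ 2 ≤ (a + b) * (A + B) := by
  have h1 : ‖x‖ * ‖y‖ ≤ (a * B + b * A) / 2 := by
    refine abs_le_of_sq_le_sq' ?_ (by positivity) |>.2
    have h2 : (‖x‖ * ‖y‖) ^ 2 ≤ (a * A) * (b * B) := by
      rw [mul_pow]; exact mul_le_mul hx hy (by positivity) (by positivity)
    nlinarith [sq_nonneg (a * B - b * A)]
  have h3 : ‖x + y‖ ^ 2 ≤ (‖x‖ + ‖y‖) ^ 2 := by
    gcongr; exact norm_add_le x y
  nlinarith

lemma Adm.glue {q : ℝ → E} {G : ℝ → ℝ} {a b d : ℝ}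
    (h1 : Adm q G a b) (h2 : Adm q G b d) : Adm q G a d := by
  intro s t hs hst ht
  rcases le_total t b with h | h
  · exact h1 s t hs hst h
  rcases le_total b s with h' | h'
  · exact h2 s t h' hst ht
  have e1 := h1 s b hs h' le_rfl
  have e2 := h2 b t le_rfl h ht
  have := cs_glue (sub_nonneg.2 h') (sub_nonneg.2 h) (sub_nonneg.2 (h1.mono hs h' le_rfl))
    (sub_nonneg.2 (h2.mono le_rfl h ht)) e1 e2
  convert this using 2
  · congr 1; abel_nf
  · ring
  · ring

lemma Adm.congr {q q' : ℝ → E} {G G' : ℝ → ℝ} {a b k : ℝ} (h : Adm q G a b)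
    (hq : ∀ t ∈ Icc a b, q' t = q t) (hG : ∀ t ∈ Icc a b, G' t = G t + k) : Adm q' G' a b := by
  intro s t hs hst ht
  rw [hq s ⟨hs, hst.trans ht⟩, hq t ⟨hs.trans hst, ht⟩, hG s ⟨hs, hst.trans ht⟩,
    hG t ⟨hs.trans hst, ht⟩, add_sub_add_right_eq_sub]
  exact h s t hs hst ht

lemma Adm.intervalIntegrable {q : ℝ → E} {G : ℝ → ℝ} {a b : ℝ} (h : Adm q G a b) {U : E → ℝ}
    (hU : Continuous U) {s t : ℝ} (hs : a ≤ s) (hst : s ≤ t) (ht : t ≤ b) :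
    IntervalIntegrable (fun t => U (q t)) volume s t := by
  apply ContinuousOn.intervalIntegrable
  rw [uIcc_of_le hst]
  exact hU.comp_continuousOn ((h.sub hs ht).continuousOn)

lemma Act.add {q : ℝ → E} {G : ℝ → ℝ} {a b : ℝ} (h : Adm q G a b) {U : E → ℝ}
    (hU : Continuous U) {r s t : ℝ} (hr : a ≤ r) (hrs : r ≤ s) (hst : s ≤ t) (ht : t ≤ b) :
    Act U q G r t = Act U q G r s + Act U q G s t := by
  unfold Act
  rw [← intervalIntegral.integral_add_adjacent_intervals
    (h.intervalIntegrable hU hr hrs (hst.trans ht))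
    (h.intervalIntegrable hU (hr.trans hrs) hst ht)]
  ring

lemma Act.nonneg {q : ℝ → E} {G : ℝ → ℝ} {a b : ℝ} (h : Adm q G a b) {U : E → ℝ}
    (hU0 : ∀ x, 0 ≤ U x) (hab : a ≤ b) : 0 ≤ Act U q G a b := by
  unfold Act
  have := h.mono le_rfl hab le_rfl
  have := intervalIntegral.integral_nonneg (μ := volume) hab (f := fun t => U (q t))
    (fun t _ => hU0 _)
  linarith

/-- Affine reparametrization by the factor `l`, moving the start to `τ`. -/
lemma Adm.reparam {q : ℝ → E} {G : ℝ → ℝ} {a b : ℝ} (h : Adm q G a b) {l : ℝ} (hl : 0 < l)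
    (τ : ℝ) : Adm (fun t => q (a + (t - τ) / l)) (fun t => G (a + (t - τ) / l) / l)
      τ (τ + l * (b - a)) := by
  intro s t hs hst ht
  have := h (a + (s - τ) / l) (a + (t - τ) / l)
    (by have : 0 ≤ (s - τ) / l := div_nonneg (by linarith) hl.le
        linarith)
    (by gcongr)
    (by have : (t - τ) / l ≤ b - a := by rw [div_le_iff₀ hl]; linarith
        linarith)
  refine this.trans (le_of_eq ?_)
  field_simp
  ring

lemma act_reparam {q : ℝ → E} {G : ℝ → ℝ} {a b : ℝ} {U : E → ℝ} {l : ℝ} (hl : 0 < l)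
    (τ : ℝ) : Act U (fun t => q (a + (t - τ) / l)) (fun t => G (a + (t - τ) / l) / l)
      τ (τ + l * (b - a)) = 2⁻¹ * (G b - G a) / l + l * ∫ t in a..b, U (q t) := by
  unfold Act
  have e1 : a + (τ + l * (b - a) - τ) / l = b := by field_simp; ring
  have e2 : a + (τ - τ) / l = a := by simp
  have e3 : ∫ t in τ..(τ + l * (b - a)), U (q (a + (t - τ) / l)) = l * ∫ t in a..b, U (q t) := by
    have h1 : ∀ t, a + (t - τ) / l = t / l + (a - τ / l) := by intro t; ring
    simp_rw [h1]
    rw [intervalIntegral.integral_comp_div_add (fun t => U (q t)) hl.ne' (a - τ / l)]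
    rw [smul_eq_mul]
    congr 2
    · field_simp; ring
    · field_simp; ring
  rw [e3]
  simp only [e1, e2]
  ring

lemma Cost.trans {U : E → ℝ} (hU : Continuous U) {R : ℝ} {x y z : E} {A B : ℝ}
    (h1 : Cost U R x y A) (h2 : Cost U R y z B) : Cost U R x z (A + B) := by
  obtain ⟨a, b, hab, q, G, hq, hqa, hqb, hR, hA⟩ := h1
  obtain ⟨a', b', hab', q', G', hq', hqa', hqb', hR', hB⟩ := h2
  -- shift the second path
  have hs := hq'.reparam one_pos b
  have hact := act_reparam (q := q') (G := G') (a := a') (b := b') (U := U) one_pos b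
  set p : ℝ → E := fun t => q' (a' + (t - b) / 1) with hp
  set H : ℝ → ℝ := fun t => G' (a' + (t - b) / 1) / 1 with hH
  set d := b + 1 * (b' - a') with hd
  have hbd : b ≤ d := by rw [hd]; linarith
  have hpb : p b = y := by simp [hp, hqa']
  have hpd : p d = z := by simp [hp, hd, hqb']
  have hpR : ∀ t ∈ Icc b d, ‖p t‖ ≤ R := by
    intro t ht
    apply hR'
    constructor
    · have := ht.1; simp; linarith
    · have := ht.2; simp; linarith
  have hact' : Act U p H b d ≤ B := by
    rw [hact]; unfold Act at hB; linarith
  let r : ℝ → E := fun t => if t ≤ b then q t else p t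
  let K : ℝ → ℝ := fun t => if t ≤ b then G t else H t + (G b - H b)
  have hr1 : ∀ t ∈ Icc a b, r t = q t := fun t ht => if_pos ht.2
  have hr2 : ∀ t ∈ Icc b d, r t = p t := by
    intro t ht
    rcases ht.1.eq_or_lt with h | h
    · subst h; simp [r, hpb, hqb]
    · exact if_neg (not_le.2 h)
  have hK1 : ∀ t ∈ Icc a b, K t = G t + 0 := fun t ht => by simp [K, ht.2]
  have hK2 : ∀ t ∈ Icc b d, K t = H t + (G b - H b) := by
    intro t ht
    rcases ht.1.eq_or_lt with h | h
    · subst h; simp [K]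
    · exact if_neg (not_le.2 h)
  have ad1 : Adm r K a b := hq.congr hr1 hK1
  have ad2 : Adm r K b d := hs.congr hr2 hK2
  have ad := Adm.glue ad1 ad2
  refine ⟨a, d, hab.trans hbd, r, K, ad, ?_, ?_, ?_, ?_⟩
  · rw [hr1 a ⟨le_rfl, hab⟩, hqa]
  · rw [hr2 d ⟨hbd, le_rfl⟩, hpd]
  · intro t ht
    rcases le_total t b with h | h
    · rw [hr1 t ⟨ht.1, h⟩]; exact hR t ⟨ht.1, h⟩
    · rw [hr2 t ⟨h, ht.2⟩]; exact hpR t ⟨h, ht.2⟩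
  · rw [Act.add ad hU le_rfl hab hbd le_rfl]
    have e1 : Act U r K a b = Act U q G a b := by
      unfold Act
      rw [hK1 b ⟨hab, le_rfl⟩, hK1 a ⟨le_rfl, hab⟩]
      congr 1
      · ring
      · apply intervalIntegral.integral_congr
        intro t ht
        rw [uIcc_of_le hab] at ht
        simp only [hr1 t ht]
    have e2 : Act U r K b d = Act U p H b d := by
      unfold Act
      rw [hK2 b ⟨le_rfl, hbd⟩, hK2 d ⟨hbd, le_rfl⟩]
      congr 1
      · ring
      · apply intervalIntegral.integral_congr
        intro t ht
        rw [uIcc_of_le hbd] at ht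
        simp only [hr2 t ht]
    rw [e1, e2]
    linarith

lemma Cost.refl {U : E → ℝ} {R : ℝ} {x : E} (hx : ‖x‖ ≤ R) : Cost U R x x 0 := by
  refine ⟨0, 0, le_rfl, fun _ => x, fun _ => 0, ?_, rfl, rfl, fun _ _ => hx, ?_⟩
  · intro s t _ _ _; simp
  · simp [Act]

/-- Straight segments. -/
lemma Cost.segment {U : E → ℝ} {R C : ℝ} {x y : E} (hU : Continuous U)
    (hC : ∀ z, ‖z‖ ≤ R → U z ≤ C) (hx : ‖x‖ ≤ R)
    (hy : ‖y‖ ≤ R) : Cost U R x y ((2⁻¹ + C) * ‖y - x‖) := by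
  rcases eq_or_ne x y with rfl | hne
  · simpa using Cost.refl hx
  have hl : 0 < ‖y - x‖ := norm_pos_iff.2 (sub_ne_zero.2 hne.symm)
  set l := ‖y - x‖ with hl_def
  let e : E := l⁻¹ • (y - x)
  have he : ‖e‖ = 1 := by
    simp only [e, norm_smul, norm_inv]
    rw [← hl_def, Real.norm_of_nonneg hl.le, inv_mul_cancel₀ hl.ne']
  have hle : l • e = y - x := by simp only [e]; rw [smul_inv_smul₀ hl.ne']
  have had : Adm (fun t => x + t • e) (fun t => t) 0 l := by
    intro s t _ hst _
    have : x + t • e - (x + s • e) = (t - s) • e := by rw [sub_smul]; abel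
    rw [this, norm_smul, he, mul_one, Real.norm_eq_abs, sq_abs, sq]
  have hball : ∀ t ∈ Icc 0 l, ‖x + t • e‖ ≤ R := by
    intro t ht
    have h1 : x + t • e = (1 - t / l) • x + (t / l) • y := by
      simp only [e]; rw [smul_smul, ← div_eq_mul_inv, smul_sub, sub_smul, one_smul]; abel
    have hc := convex_closedBall (0 : E) R
    have := hc (mem_closedBall_zero_iff.2 hx) (mem_closedBall_zero_iff.2 hy)
      (a := 1 - t / l) (b := t / l)
      (by rw [sub_nonneg, div_le_one hl]; exact ht.2) (div_nonneg ht.1 hl.le) (by ring)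
    rw [h1]; exact mem_closedBall_zero_iff.1 this
  refine ⟨0, l, hl.le, fun t => x + t • e, fun t => t, had, by simp, ?_, hball, ?_⟩
  · simp [hle]
  · unfold Act
    have : ∫ t in (0 : ℝ)..l, U (x + t • e) ≤ ∫ t in (0 : ℝ)..l, C := by
      apply intervalIntegral.integral_mono_on hl.le
      · exact had.intervalIntegrable hU le_rfl hl.le le_rfl
      · simp
      · intro t ht; exact hC _ (hball t ht)
    simp only [intervalIntegral.integral_const, smul_eq_mul] at this
    simp only [sub_zero] at this ⊢
    nlinarith

end Duff

namespace Duff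

variable {E : Type*} [NormedAddCommGroup E] [InnerProductSpace ℝ E]

lemma ultra_lim {X ι : Type*} [TopologicalSpace X] (F : Ultrafilter ι) (f : ι → X) {K : Set X}
    (hK : IsCompact K) (h : ∀ i, f i ∈ K) : ∃ x ∈ K, Tendsto f F (𝓝 x) := by
  have := hK.ultrafilter_le_nhds (F.map f) (by
    rw [le_principal_iff]
    exact Filter.mem_map.2 (Filter.univ_mem' h))
  obtain ⟨x, hx, hle⟩ := this
  exact ⟨x, hx, hle⟩

lemma hasDerivAt_of_est {F : Type*} [NormedAddCommGroup F] [NormedSpace ℝ F] {f : ℝ → F} {f' : F}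
    {t : ℝ} (h : ∀ η > 0, ∃ δ > 0, ∀ s, |s - t| < δ → ‖f s - f t - (s - t) • f'‖ ≤ η * |s - t|) :
    HasDerivAt f f' t := by
  rw [hasDerivAt_iff_isLittleO, Asymptotics.isLittleO_iff]
  intro η hη
  obtain ⟨δ, hδ, h⟩ := h η hη
  filter_upwards [Metric.ball_mem_nhds t hδ] with s hs
  exact h s hs

lemma Cost.normalize {U : E → ℝ} {R : ℝ} {x y : E} {A : ℝ} (h : Cost U R x y A) :
    ∃ S ≥ 0, ∃ (q : ℝ → E) (G : ℝ → ℝ), (∀ a b, Adm q G a b) ∧ q 0 = x ∧ q S = y ∧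
      (∀ t, ‖q t‖ ≤ R) ∧ (∀ t, 0 ≤ G t ∧ G t ≤ G S) ∧ G 0 = 0 ∧ Act U q G 0 S ≤ A := by
  obtain ⟨a, b, hab, q, G, hq, hqa, hqb, hR, hA⟩ := h
  have had := hq.reparam one_pos 0
  have hact := act_reparam (q := q) (G := G) (a := a) (b := b) (U := U) one_pos 0
  simp only [zero_add, one_mul, sub_zero, div_one] at had hact
  set S := b - a with hS
  have hS0 : 0 ≤ S := sub_nonneg.2 hab
  let cl : ℝ → ℝ := fun t => max 0 (min t S)
  have hcl0 : ∀ t, 0 ≤ cl t := fun t => le_max_left _ _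
  have hclS : ∀ t, cl t ≤ S := fun t => max_le hS0 (min_le_right _ _)
  have hclid : ∀ t ∈ Icc 0 S, cl t = t := by
    intro t ht; simp only [cl]; rw [min_eq_left ht.2, max_eq_right ht.1]
  have hclmono : ∀ s t, s ≤ t → cl s ≤ cl t := by
    intro s t hst; simp only [cl]; gcongr
  have hcllip : ∀ s t, s ≤ t → cl t - cl s ≤ t - s := by
    intro s t hst
    simp only [cl]
    rcases le_total t S with h1 | h1 <;> rcases le_total s S with h2 | h2 <;>
    rcases le_total 0 t with h3 | h3 <;> rcases le_total 0 s with h4 | h4 <;>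
    simp [h1, h2, h3, h4, hS0] <;> linarith
  refine ⟨S, hS0, fun t => q (a + cl t), fun t => G (a + cl t) - G a, ?_, ?_, ?_, ?_, ?_, ?_, ?_⟩
  · intro _ _ s t _ hst _
    have h1 := had (cl s) (cl t) (hcl0 s) (hclmono s t hst) (hclS t)
    have h2 := had.mono (hcl0 s) (hclmono s t hst) (hclS t)
    calc _ ≤ _ := h1
      _ ≤ (t - s) * (G (a + cl t) - G (a + cl s)) :=
        mul_le_mul_of_nonneg_right (hcllip s t hst) (sub_nonneg.2 h2)
      _ = _ := by ring
  · simp [hclid 0 ⟨le_rfl, hS0⟩, hqa]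
  · simp only [hclid S ⟨hS0, le_rfl⟩]; rw [hS, add_sub_cancel, hqb]
  · intro t
    apply hR
    constructor
    · have := hcl0 t; linarith
    · have := hclS t; linarith
  · intro t
    have h1 := had.mono le_rfl (hcl0 t) (hclS t)
    have h2 := had.mono (hcl0 t) (hclS t) le_rfl
    simp only [hclid S ⟨hS0, le_rfl⟩]
    simp only [add_zero] at h1
    constructor <;> linarith
  · simp [hclid 0 ⟨le_rfl, hS0⟩]
  · refine le_trans (le_of_eq ?_) hA
    unfold Act at hact ⊢
    simp only [add_zero] at hact
    rw [← hact]
    simp only [hclid 0 ⟨le_rfl, hS0⟩, hclid S ⟨hS0, le_rfl⟩, add_zero]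
    congr 1
    · ring
    · apply intervalIntegral.integral_congr
      intro t ht
      rw [uIcc_of_le hS0] at ht
      simp only [hclid t ht]

theorem exists_min [ProperSpace E] {U : E → ℝ} (hU : Continuous U) {ε : ℝ} (hε : 0 < ε)
    (hUε : ∀ x, ε ≤ U x) {A B : Set E} (hA : IsClosed A) (hB : IsClosed B) {R : ℝ}
    {x₀ y₀ : E} (hx₀ : x₀ ∈ A) (hy₀ : y₀ ∈ B) (hx₀R : ‖x₀‖ ≤ R) (hy₀R : ‖y₀‖ ≤ R) :
    ∃ (S : ℝ) (q : ℝ → E) (G : ℝ → ℝ), 0 ≤ S ∧ (∀ a b, Adm q G a b) ∧ q 0 ∈ A ∧ q S ∈ B ∧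
      (∀ t, ‖q t‖ ≤ R) ∧
      ∀ x ∈ A, ∀ y ∈ B, ∀ A', Cost U R x y A' → Act U q G 0 S ≤ A' := by
  have hKc : IsCompact (closedBall (0 : E) R) := isCompact_closedBall 0 R
  obtain ⟨C, hC⟩ := hKc.bddAbove_image hU.continuousOn
  have hC' : ∀ z, ‖z‖ ≤ R → U z ≤ C := fun z hz =>
    hC (mem_image_of_mem U (mem_closedBall_zero_iff.2 hz))
  have hU0 : ∀ x, 0 ≤ U x := fun x => hε.le.trans (hUε x)
  have hC0 : 0 ≤ C := (hU0 x₀).trans (hC' x₀ hx₀R)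
  let 𝒜 : Set ℝ := {A' | ∃ x ∈ A, ∃ y ∈ B, Cost U R x y A'}
  have hne : 𝒜.Nonempty := ⟨_, x₀, hx₀, y₀, hy₀, Cost.segment hU hC' hx₀R hy₀R⟩
  have hbdd : BddBelow 𝒜 := by
    refine ⟨0, ?_⟩
    rintro A' ⟨x, _, y, _, a, b, hab, q, G, hq, _, _, _, hA'⟩
    exact (Act.nonneg hq hU0 hab).trans hA'
  set m := sInf 𝒜 with hm
  have hm0 : 0 ≤ m := le_csInf hne (by
    rintro A' ⟨x, _, y, _, a, b, hab, q, G, hq, _, _, _, hA'⟩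
    exact (Act.nonneg hq hU0 hab).trans hA')
  have hseq : ∀ k : ℕ, ∃ S ≥ 0, ∃ (q : ℝ → E) (G : ℝ → ℝ), (∀ a b, Adm q G a b) ∧ q 0 ∈ A ∧
      q S ∈ B ∧ (∀ t, ‖q t‖ ≤ R) ∧ (∀ t, 0 ≤ G t ∧ G t ≤ G S) ∧ G 0 = 0 ∧
      Act U q G 0 S ≤ m + 1 / ((k : ℝ) + 1) := by
    intro k
    obtain ⟨A', ⟨x, hx, y, hy, hc⟩, hlt⟩ := exists_lt_of_csInf_lt hne
      (show sInf 𝒜 < m + 1 / ((k : ℝ) + 1) by rw [← hm]; have : 0 < 1 / ((k : ℝ) + 1) := by positivity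
                                              linarith)
    obtain ⟨S, hS, q, G, h1, h2, h3, h4, h5, h6, h7⟩ := hc.normalize
    exact ⟨S, hS, q, G, h1, h2 ▸ hx, h3 ▸ hy, h4, h5, h6, h7.trans hlt.le⟩
  choose S hS q G had hqA hqB hqR hGb hG0 hact using hseq
  set M := m + 1 with hM
  have hM0 : 0 < M := by linarith
  have hactM : ∀ k, Act U (q k) (G k) 0 (S k) ≤ M := by
    intro k
    refine (hact k).trans ?_
    have : 1 / ((k : ℝ) + 1) ≤ 1 := by
      rw [div_le_one (by positivity)]; linarith [(Nat.cast_nonneg k : (0 : ℝ) ≤ k)]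
    linarith
  have hqc : ∀ k, Continuous (q k) := by
    intro k
    rw [continuous_iff_continuousAt]
    intro t
    exact ((had k (t - 1) (t + 1)).continuousOn).continuousAt
      (Icc_mem_nhds (by linarith) (by linarith))
  have hUq : ∀ k, Continuous fun t => U (q k t) := fun k => hU.comp (hqc k)
  have hIntg : ∀ k a b, IntervalIntegrable (fun t => U (q k t)) volume a b := fun k a b =>
    (hUq k).intervalIntegrable a b
  have hGM : ∀ k, G k (S k) ≤ 2 * M := by
    intro k
    have h1 := hactM k
    unfold Act at h1
    have := intervalIntegral.integral_nonneg (μ := volume) (hS k) (f := fun t => U (q k t))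
      (fun t _ => hU0 _)
    rw [hG0 k] at h1
    linarith
  have hSM : ∀ k, S k ≤ M / ε := by
    intro k
    have h1 := hactM k
    unfold Act at h1
    rw [hG0 k] at h1
    have h2 : ∫ t in (0 : ℝ)..S k, ε ≤ ∫ t in (0 : ℝ)..S k, U (q k t) :=
      intervalIntegral.integral_mono_on (hS k) (by simp) (hIntg k _ _) (fun t _ => hUε _)
    simp only [intervalIntegral.integral_const, smul_eq_mul, sub_zero] at h2
    have h3 := (hGb k (S k)).1
    rw [le_div_iff₀ hε]
    linarith
  let P : ℕ → ℝ → ℝ := fun k t => ∫ r in (0 : ℝ)..t, U (q k r)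
  have hPdiff : ∀ k s t, P k t - P k s = ∫ r in s..t, U (q k r) := fun k s t =>
    intervalIntegral.integral_interval_sub_left (hIntg k _ _) (hIntg k _ _)
  have hPlip : ∀ k s t, |P k t - P k s| ≤ C * |t - s| := by
    intro k s t
    rw [hPdiff, ← Real.norm_eq_abs]
    apply intervalIntegral.norm_integral_le_of_norm_le_const
    intro r _
    rw [Real.norm_of_nonneg (hU0 _)]
    exact hC' _ (hqR k r)
  have hqh : ∀ k s t, ‖q k t - q k s‖ ^ 2 ≤ |t - s| * (2 * M) := by
    intro k s t
    rcases le_total s t with hst | hst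
    · rw [abs_of_nonneg (sub_nonneg.2 hst)]
      refine (had k s t s t le_rfl hst le_rfl).trans ?_
      refine mul_le_mul_of_nonneg_left ?_ (sub_nonneg.2 hst)
      have := (hGb k t).2; have := (hGb k s).1; have := hGM k; linarith
    · rw [abs_sub_comm, abs_of_nonneg (sub_nonneg.2 hst), norm_sub_rev]
      refine (had k t s t s le_rfl hst le_rfl).trans ?_
      refine mul_le_mul_of_nonneg_left ?_ (sub_nonneg.2 hst)
      have := (hGb k s).2; have := (hGb k t).1; have := hGM k; linarith
  -- ultrafilter limits
  let F : Ultrafilter ℕ := hyperfilter ℕ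
  have hFle : (F : Filter ℕ) ≤ atTop := by
    rw [← Nat.cofinite_eq_atTop]; exact hyperfilter_le_cofinite
  obtain ⟨Sl, hSl, hSlim⟩ := ultra_lim F S (isCompact_Icc (a := 0) (b := M / ε))
    (fun k => ⟨hS k, hSM k⟩)
  have hql : ∀ t, ∃ x ∈ closedBall (0 : E) R, Tendsto (fun k => q k t) F (𝓝 x) := fun t =>
    ultra_lim F _ hKc (fun k => mem_closedBall_zero_iff.2 (hqR k t))
  have hGl : ∀ t, ∃ x ∈ Icc 0 (2 * M), Tendsto (fun k => G k t) F (𝓝 x) := fun t =>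
    ultra_lim F _ isCompact_Icc (fun k => ⟨(hGb k t).1, (hGb k t).2.trans (hGM k)⟩)
  have hPl : ∀ t, ∃ x ∈ Icc (-(C * |t|)) (C * |t|), Tendsto (fun k => P k t) F (𝓝 x) := fun t =>
    ultra_lim F _ isCompact_Icc (fun k => by
      have h1 := hPlip k 0 t
      have h2 : P k 0 = 0 := by simp [P]
      rw [h2, sub_zero, sub_zero] at h1
      exact abs_le.1 h1)
  choose Q hQR hQ using hql
  choose H hHb hH using hGl
  choose Z hZb hZ using hPl
  have hQad : ∀ a b, Adm Q H a b := by
    intro a b s t _ hst _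
    exact le_of_tendsto_of_tendsto' ((((hQ t).sub (hQ s)).norm).pow 2)
      (((hH t).sub (hH s)).const_mul (t - s)) (fun k => had k s t s t le_rfl hst le_rfl)
  have hQc : Continuous Q := by
    rw [continuous_iff_continuousAt]
    intro t
    exact ((hQad (t - 1) (t + 1)).continuousOn).continuousAt
      (Icc_mem_nhds (by linarith) (by linarith))
  have hZd : ∀ t, HasDerivAt Z (U (Q t)) t := by
    intro t
    apply hasDerivAt_of_est
    intro η hη
    have huc := hKc.uniformContinuousOn_of_continuous hU.continuousOn
    rw [Metric.uniformContinuousOn_iff] at huc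
    obtain ⟨δ, hδ, huc⟩ := huc η hη
    refine ⟨δ ^ 2 / (2 * M), by positivity, ?_⟩
    intro s hs
    rw [lt_div_iff₀ (by positivity)] at hs
    have key : ∀ k, ‖P k s - P k t - (s - t) • U (q k t)‖ ≤ η * |s - t| := by
      intro k
      have : P k s - P k t - (s - t) • U (q k t) = ∫ r in t..s, (U (q k r) - U (q k t)) := by
        rw [hPdiff, intervalIntegral.integral_sub (hIntg k _ _) (by simp)]
        simp
      rw [this]
      apply intervalIntegral.norm_integral_le_of_norm_le_const
      intro r hr
      have hrt : |r - t| ≤ |s - t| := abs_sub_left_of_mem_uIcc (uIoc_subset_uIcc hr)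
      have h1 : ‖q k r - q k t‖ ^ 2 < δ ^ 2 := by
        refine (hqh k t r).trans_lt (lt_of_le_of_lt ?_ hs)
        gcongr
      have h2 : dist (q k r) (q k t) < δ := by
        rw [dist_eq_norm]; exact lt_of_pow_lt_pow_left₀ 2 hδ.le h1
      exact (huc _ (mem_closedBall_zero_iff.2 (hqR k r)) _
        (mem_closedBall_zero_iff.2 (hqR k t)) h2).le
    refine le_of_tendsto' (((hZ s).sub (hZ t)).sub
      ((tendsto_const_nhds (x := s - t)).smul ((hU.tendsto _).comp (hQ t)))).norm key
  have hZ0 : Z 0 = 0 := by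
    have := hZb 0; simp at this; exact this
  have hZint : Z Sl = ∫ t in (0 : ℝ)..Sl, U (Q t) := by
    rw [intervalIntegral.integral_eq_sub_of_hasDerivAt (fun t _ => hZd t)
      ((hU.comp hQc).intervalIntegrable _ _), hZ0, sub_zero]
  have habs : Tendsto (fun k => |S k - Sl|) F (𝓝 0) := by
    have := (hSlim.sub_const Sl).abs; simpa using this
  have hQS : Tendsto (fun k => q k (S k)) F (𝓝 (Q Sl)) := by
    have h1 : Tendsto (fun k => q k (S k) - q k Sl) F (𝓝 0) := by
      rw [tendsto_zero_iff_norm_tendsto_zero]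
      have h2 : Tendsto (fun k => √(|S k - Sl| * (2 * M))) F (𝓝 0) := by
        have := (habs.mul_const (2 * M)).sqrt; simpa using this
      exact squeeze_zero (fun _ => norm_nonneg _)
        (fun k => Real.le_sqrt_of_sq_le (hqh k Sl (S k))) h2
    have := h1.add (hQ Sl)
    simpa using this
  have hPS : Tendsto (fun k => P k (S k)) F (𝓝 (Z Sl)) := by
    have h1 : Tendsto (fun k => P k (S k) - P k Sl) F (𝓝 0) := by
      rw [tendsto_zero_iff_norm_tendsto_zero]
      have h2 : Tendsto (fun k => C * |S k - Sl|) F (𝓝 0) := by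
        have := habs.const_mul C; simpa using this
      exact squeeze_zero (fun _ => norm_nonneg _) (fun k => hPlip k Sl (S k)) h2
    have := h1.add (hZ Sl)
    simpa using this
  have hH0 : H 0 = 0 := by
    refine tendsto_nhds_unique (hH 0) ?_
    simp only [hG0]; exact tendsto_const_nhds
  have hfin : Act U Q H 0 Sl ≤ m := by
    have h1 : Tendsto (fun k => 2⁻¹ * G k Sl + P k (S k)) F (𝓝 (2⁻¹ * H Sl + Z Sl)) :=
      ((hH Sl).const_mul _).add hPS
    have h2 : Tendsto (fun k : ℕ => m + 1 / ((k : ℝ) + 1)) F (𝓝 (m + 0)) :=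
      (tendsto_const_nhds.add tendsto_one_div_add_atTop_nhds_zero_nat).mono_left hFle
    have h3 := le_of_tendsto_of_tendsto' h1 h2 (fun k => by
      refine le_trans ?_ (hact k)
      unfold Act
      rw [hG0 k]
      have := (hGb k Sl).2
      simp only [P]
      linarith)
    unfold Act
    rw [hH0, ← hZint]
    linarith
  refine ⟨Sl, Q, H, hSl.1, hQad, hA.mem_of_tendsto (hQ 0) (Eventually.of_forall hqA),
    hB.mem_of_tendsto hQS (Eventually.of_forall hqB),
    fun t => mem_closedBall_zero_iff.1 (hQR t), ?_⟩
  intro x hx y hy A' hc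
  exact hfin.trans (csInf_le hbdd ⟨x, hx, y, hy, hc⟩)

end Duff

namespace Duff

variable {E : Type*} [NormedAddCommGroup E] [InnerProductSpace ℝ E]

/-- Minimal action paths between the sets `A` and `B`. -/
structure IsMin (U : E → ℝ) (R : ℝ) (A B : Set E) (S : ℝ) (q : ℝ → E) (G : ℝ → ℝ) : Prop where
  hS : 0 ≤ S
  adm : ∀ a b, Adm q G a b
  hA : q 0 ∈ A
  hB : q S ∈ B
  ball : ∀ t, ‖q t‖ ≤ R
  hmin : ∀ x ∈ A, ∀ y ∈ B, ∀ A', Cost U R x y A' → Act U q G 0 S ≤ A'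

namespace IsMin

variable {U : E → ℝ} {R : ℝ} {A B : Set E} {S : ℝ} {q : ℝ → E} {G : ℝ → ℝ}

lemma continuous (h : IsMin U R A B S q G) : Continuous q := by
  rw [continuous_iff_continuousAt]
  intro t
  exact ((h.adm (t - 1) (t + 1)).continuousOn).continuousAt
    (Icc_mem_nhds (by linarith) (by linarith))

lemma sub (h : IsMin U R A B S q G) {a b : ℝ} (hab : a ≤ b) :
    Cost U R (q a) (q b) (Act U q G a b) :=
  ⟨a, b, hab, q, G, h.adm a b, rfl, rfl, fun t _ => h.ball t, le_rfl⟩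

lemma opt (h : IsMin U R A B S q G) (hU : Continuous U) {a b A' : ℝ} (ha : 0 ≤ a) (hab : a ≤ b)
    (hb : b ≤ S) (hc : Cost U R (q a) (q b) A') : Act U q G a b ≤ A' := by
  have h1 := h.hmin _ h.hA _ h.hB _ (((h.sub ha).trans hU hc).trans hU (h.sub hb))
  rw [Act.add (h.adm 0 S) hU le_rfl ha (hab.trans hb) le_rfl,
    Act.add (h.adm a S) hU le_rfl hab hb le_rfl] at h1
  linarith

lemma optR (h : IsMin U R A B S q G) (hU : Continuous U) {a A' : ℝ} {y : E} (ha : 0 ≤ a)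
    (hb : a ≤ S) (hy : y ∈ B) (hc : Cost U R (q a) y A') : Act U q G a S ≤ A' := by
  have h1 := h.hmin _ h.hA _ hy _ ((h.sub ha).trans hU hc)
  rw [Act.add (h.adm 0 S) hU le_rfl ha hb le_rfl] at h1
  linarith

lemma optL (h : IsMin U R A B S q G) (hU : Continuous U) {b A' : ℝ} {x : E} (ha : 0 ≤ b)
    (hb : b ≤ S) (hx : x ∈ A) (hc : Cost U R x (q b) A') : Act U q G 0 b ≤ A' := by
  have h1 := h.hmin _ hx _ h.hB _ (hc.trans hU (h.sub hb))
  rw [Act.add (h.adm 0 S) hU le_rfl ha hb le_rfl] at h1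
  linarith

lemma hUq (h : IsMin U R A B S q G) (hU : Continuous U) : Continuous fun t => U (q t) :=
  hU.comp h.continuous

lemma act_lower (h : IsMin U R A B S q G) (hU : Continuous U) {u a b : ℝ} (hab : a ≤ b)
    (hu : ∀ t ∈ Icc a b, u ≤ U (q t)) : u * (b - a) ≤ Act U q G a b := by
  have h1 := (h.adm a b).mono le_rfl hab le_rfl
  have h2 : ∫ t in a..b, u ≤ ∫ t in a..b, U (q t) :=
    intervalIntegral.integral_mono_on hab (by simp) ((h.hUq hU).intervalIntegrable _ _) hu
  simp only [intervalIntegral.integral_const, smul_eq_mul] at h2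
  unfold Act
  linarith

lemma notMemA (h : IsMin U R A B S q G) (hU : Continuous U) {ε : ℝ} (hε : 0 < ε)
    (hUε : ∀ x, ε ≤ U x) {t : ℝ} (ht : t ∈ Ioc 0 S) : q t ∉ A := by
  intro hA
  have h1 := h.optL hU ht.1.le ht.2 hA (Cost.refl (h.ball t))
  have h2 := h.act_lower hU ht.1.le (fun t _ => hUε (q t))
  have : 0 < ε * (t - 0) := by have := ht.1; simp only [sub_zero]; positivity
  linarith

lemma notMemB (h : IsMin U R A B S q G) (hU : Continuous U) {ε : ℝ} (hε : 0 < ε)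
    (hUε : ∀ x, ε ≤ U x) {t : ℝ} (ht : t ∈ Ico 0 S) : q t ∉ B := by
  intro hA
  have h1 := h.optR hU ht.1 ht.2.le hA (Cost.refl (h.ball t))
  have h2 := h.act_lower hU ht.2.le (fun t _ => hUε (q t))
  have : 0 < ε * (S - t) := mul_pos hε (sub_pos.2 ht.2)
  linarith

/-- Equipartition of the energy. -/
lemma equip (h : IsMin U R A B S q G) (hU : Continuous U) {ε : ℝ} (hε : 0 < ε)
    (hUε : ∀ x, ε ≤ U x) {a b : ℝ} (ha : 0 ≤ a) (hab : a ≤ b) (hb : b ≤ S) :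
    G b - G a = 2 * ∫ t in a..b, U (q t) := by
  set p := ∫ t in a..b, U (q t) with hp
  set g := 2⁻¹ * (G b - G a) with hg
  have hg0 : 0 ≤ g := by
    have := (h.adm a b).mono le_rfl hab le_rfl
    rw [hg]; linarith
  have hp0 : 0 ≤ p := intervalIntegral.integral_nonneg hab (fun t _ => hε.le.trans (hUε _))
  have key : ∀ l > 0, g + p ≤ g / l + l * p := by
    intro l hl
    have hc : Cost U R (q a) (q b) (g / l + l * p) := by
      refine ⟨0, 0 + l * (b - a), by simp only [zero_add]; exact mul_nonneg hl.le (sub_nonneg.2 hab), _, _,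
        (h.adm a b).reparam hl 0, by simp, ?_, fun t _ => h.ball _, (act_reparam hl 0).le⟩
      congr 1; field_simp; ring
    exact h.opt hU ha hab hb hc
  have hlim : g = p := by
    apply le_antisymm
    · -- use l slightly larger than one
      have h1 : ∀ l > 1, g ≤ l * p := by
        intro l hl
        have hl0 : 0 < l := by linarith
        have h2 := key l hl0
        have h3 : g / l = g - g * (l - 1) / l := by field_simp; ring
        rw [h3] at h2
        have h4 : g * (l - 1) / l ≤ (l - 1) * p := by linarith
        rw [div_le_iff₀ hl0] at h4
        have h5 : (l - 1) * g ≤ (l - 1) * (l * p) := by linarith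
        exact le_of_mul_le_mul_left h5 (by linarith)
      have h2 : Tendsto (fun l : ℝ => l * p) (𝓝[>] 1) (𝓝 (1 * p)) :=
        ((continuous_id.mul continuous_const).tendsto 1).mono_left nhdsWithin_le_nhds
      rw [one_mul] at h2
      exact ge_of_tendsto h2 (by filter_upwards [self_mem_nhdsWithin] with l hl using h1 l hl)
    · have h1 : ∀ l, 0 < l → l < 1 → l * p ≤ g := by
        intro l hl0 hl
        have h2 := key l hl0
        have h3 : g / l = g + g * (1 - l) / l := by field_simp; ring
        rw [h3] at h2
        have h4 : (1 - l) * p ≤ g * (1 - l) / l := by linarith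
        rw [le_div_iff₀ hl0] at h4
        have h5 : (1 - l) * (l * p) ≤ (1 - l) * g := by linarith
        exact le_of_mul_le_mul_left h5 (by linarith)
      have h2 : Tendsto (fun l : ℝ => l * p) (𝓝[<] 1) (𝓝 (1 * p)) :=
        ((continuous_id.mul continuous_const).tendsto 1).mono_left nhdsWithin_le_nhds
      rw [one_mul] at h2
      refine le_of_tendsto h2 ?_
      filter_upwards [Ioo_mem_nhdsLT (show (0 : ℝ) < 1 by norm_num)] with l hl using h1 l hl.1 hl.2
  linarith

lemma lip (h : IsMin U R A B S q G) (hU : Continuous U) {ε C : ℝ} (hε : 0 < ε)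
    (hUε : ∀ x, ε ≤ U x) (hC : ∀ z, ‖z‖ ≤ R → U z ≤ C)
    {a b : ℝ} (ha : 0 ≤ a) (hab : a ≤ b) (hb : b ≤ S) :
    ‖q b - q a‖ ≤ √(2 * C) * (b - a) := by
  have h1 := h.adm a b a b le_rfl hab le_rfl
  rw [h.equip hU hε hUε ha hab hb] at h1
  have h2 : ∫ t in a..b, U (q t) ≤ ∫ t in a..b, C :=
    intervalIntegral.integral_mono_on hab ((h.hUq hU).intervalIntegrable _ _) (by simp)
      (fun t _ => hC _ (h.ball t))
  simp only [intervalIntegral.integral_const, smul_eq_mul] at h2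
  have hC0 : 0 ≤ C := (hε.le.trans (hUε _)).trans (hC _ (h.ball 0))
  have hab' : 0 ≤ b - a := sub_nonneg.2 hab
  refine abs_le_of_sq_le_sq' ?_ (by positivity) |>.2
  rw [mul_pow, Real.sq_sqrt (by positivity)]
  nlinarith

end IsMin

lemma Adm.add_affine {q : ℝ → E} {G : ℝ → ℝ} {a b : ℝ} (h : Adm q G a b) (p w : E) :
    Adm (fun t => q t + (t • p + w)) (fun t => G t + (2 * inner ℝ p (q t) + ‖p‖ ^ 2 * t)) a b := by
  intro s t hs hst ht
  have h1 := h s t hs hst ht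
  have e1 : q t + (t • p + w) - (q s + (s • p + w)) = (q t - q s) + (t - s) • p := by
    rw [sub_smul]; abel
  simp only [e1]
  rw [norm_add_sq_real, norm_smul, inner_smul_right, real_inner_comm, inner_sub_right, mul_pow,
    Real.norm_eq_abs, sq_abs]
  linarith

/-- The first variation along a tent function. -/
lemma IsMin.second_diff {U : E → ℝ} {R : ℝ} {A B : Set E} {S : ℝ} {q : ℝ → E} {G : ℝ → ℝ}
    [CompleteSpace E]
    (hm : IsMin U R A B S q G) (hU : Continuous U) {K : NNReal}
    (hK : LipschitzOnWith K U (closedBall 0 R)) {g : E → E} (hg : Continuous g)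
    (hgU : ∀ t ∈ Ioo 0 S, HasGradientAt U (g (q t)) (q t))
    (hR : ∀ t ∈ Ioo 0 S, ‖q t‖ ≤ R - 1) {s h : ℝ} (hh : 0 < h) (h0 : 0 < s - h) (hS : s + h < S) :
    q (s + h) - (2 : ℝ) • q s + q (s - h) = ∫ t in (s - h)..(s + h), (h - |t - s|) • g (q t) := by
  have hqc := hm.continuous
  have hgq : Continuous fun t => g (q t) := hg.comp hqc
  refine ext_inner_left ℝ fun e => ?_
  have htent : ∀ t ∈ Icc (s - h) (s + h), 0 ≤ h - |t - s| ∧ h - |t - s| ≤ h := by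
    intro t ht
    have h1 : |t - s| ≤ h := abs_le.2 ⟨by linarith [ht.1], by linarith [ht.2]⟩
    exact ⟨by linarith, by linarith [abs_nonneg (t - s)]⟩
  have hball : ∀ l : ℝ, |l| * (h * ‖e‖) ≤ 1 → ∀ t ∈ Icc (s - h) (s + h),
      ‖q t + (l * (h - |t - s|)) • e‖ ≤ R := by
    intro l hl t ht
    have h1 := hR t ⟨by linarith [ht.1], by linarith [ht.2]⟩
    have h2 : ‖(l * (h - |t - s|)) • e‖ ≤ 1 := by
      rw [norm_smul, Real.norm_eq_abs, abs_mul, abs_of_nonneg (htent t ht).1]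
      refine le_trans ?_ hl
      rw [mul_assoc]
      gcongr
      exact (htent t ht).2
    linarith [norm_add_le (q t) ((l * (h - |t - s|)) • e)]
  let b : ℝ := inner ℝ e (q s - q (s - h)) - inner ℝ e (q (s + h) - q s)
  let f : ℝ → ℝ := fun l => 2⁻¹ * (G (s + h) - G (s - h)) + l * b + l ^ 2 * (‖e‖ ^ 2 * h) +
    ∫ t in (s - h)..(s + h), U (q t + (l * (h - |t - s|)) • e)
  have hcost : ∀ l : ℝ, |l| * (h * ‖e‖) ≤ 1 → Cost U R (q (s - h)) (q (s + h)) (f l) := by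
    intro l hl
    have a1 := (hm.adm (s - h) s).add_affine (l • e) ((l * (h - s)) • e)
    have a2 := (hm.adm s (s + h)).add_affine (-(l • e)) ((l * (h + s)) • e)
    let r : ℝ → E := fun t => q t + (l * (h - |t - s|)) • e
    let H : ℝ → ℝ := fun t => if t ≤ s then G t + (2 * inner ℝ (l • e) (q t) + ‖l • e‖ ^ 2 * t)
      else G t + (2 * inner ℝ (-(l • e)) (q t) + ‖-(l • e)‖ ^ 2 * t) + 4 * l * inner ℝ e (q s)
    have b1 : Adm r H (s - h) s := by
      refine a1.congr (k := 0) ?_ ?_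
      · intro t ht
        simp only [r]
        rw [abs_of_nonpos (by linarith [ht.2]), smul_smul, ← add_smul]
        congr 2; ring
      · intro t ht; simp [H, ht.2]
    have b2 : Adm r H s (s + h) := by
      refine a2.congr (k := 4 * l * inner ℝ e (q s)) ?_ ?_
      · intro t ht
        simp only [r]
        rw [abs_of_nonneg (by linarith [ht.1]), smul_neg, smul_smul, ← neg_smul, ← add_smul]
        congr 2; ring
      · intro t ht
        rcases ht.1.eq_or_lt with h' | h'
        · subst h'
          simp only [H, le_refl, if_true, inner_neg_left, inner_smul_left, norm_neg]
          simp; ring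
        · simp only [H, not_le.2 h', if_false]
    refine ⟨s - h, s + h, by linarith, r, H, Adm.glue b1 b2, ?_, ?_, hball l hl, ?_⟩
    · simp [r, abs_of_pos hh]
    · simp [r, abs_of_pos hh]
    · unfold Act
      simp only [f, r, H, b]
      rw [if_neg (by linarith), if_pos (by linarith)]
      simp only [inner_neg_left, inner_smul_left, norm_neg, norm_smul, inner_sub_right, mul_pow,
        Real.norm_eq_abs, sq_abs]
      simp
      nlinarith
  have hf0 : f 0 = Act U q G (s - h) (s + h) := by
    simp [f, Act]
  have hnear : ∀ᶠ l : ℝ in 𝓝 0, |l| * (h * ‖e‖) ≤ 1 := by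
    have : Tendsto (fun l : ℝ => |l| * (h * ‖e‖)) (𝓝 0) (𝓝 (|0| * (h * ‖e‖))) :=
      Continuous.tendsto (by fun_prop) 0
    simp only [abs_zero, zero_mul] at this
    exact (this.eventually (gt_mem_nhds one_pos)).mono fun l hl => hl.le
  have hmin : IsLocalMin f 0 := by
    filter_upwards [hnear] with l hl
    rw [hf0]
    exact hm.opt hU h0.le (by linarith) hS.le (hcost l hl)
  have hder : HasDerivAt f (b + ∫ t in (s - h)..(s + h), (h - |t - s|) * inner ℝ e (g (q t))) 0 := by
    have d1 : HasDerivAt (fun l : ℝ => 2⁻¹ * (G (s + h) - G (s - h)) + l * b + l ^ 2 * (‖e‖ ^ 2 * h))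
        b 0 := by
      have := (((hasDerivAt_id (0 : ℝ)).mul_const b).const_add
        (2⁻¹ * (G (s + h) - G (s - h)))).add
        ((hasDerivAt_pow 2 (0 : ℝ)).mul_const (‖e‖ ^ 2 * h))
      refine this.congr_deriv ?_
      simp
    have hsub : Set.uIoc (s - h) (s + h) ⊆ Icc (s - h) (s + h) := by
      rw [uIoc_of_le (by linarith)]; exact Ioc_subset_Icc_self
    have d2 : HasDerivAt (fun l : ℝ => ∫ t in (s - h)..(s + h), U (q t + (l * (h - |t - s|)) • e))
        (∫ t in (s - h)..(s + h), (h - |t - s|) * inner ℝ e (g (q t))) 0 := by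
      refine (intervalIntegral.hasDerivAt_integral_of_dominated_loc_of_lip
        (μ := volume) (bound := fun _ => K * (h * ‖e‖))
        (F := fun l t => U (q t + (l * (h - |t - s|)) • e))
        (F' := fun t => (h - |t - s|) * inner ℝ e (g (q t))) hnear ?_ ?_ ?_ ?_ ?_ ?_).2
      · refine Eventually.of_forall fun l => Continuous.aestronglyMeasurable ?_
        fun_prop
      · apply Continuous.intervalIntegrable
        fun_prop
      · apply Continuous.aestronglyMeasurable
        fun_prop
      · refine Eventually.of_forall fun t ht => ?_
        have ht' := hsub ht
        rw [lipschitzOnWith_iff_dist_le_mul]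
        intro l hl l' hl'
        have := hK.dist_le_mul _ (mem_closedBall_zero_iff.2 (hball l hl t ht'))
          _ (mem_closedBall_zero_iff.2 (hball l' hl' t ht'))
        refine this.trans ?_
        have h3 : dist (q t + (l * (h - |t - s|)) • e) (q t + (l' * (h - |t - s|)) • e)
            ≤ (h * ‖e‖) * dist l l' := by
          rw [dist_add_left, dist_eq_norm, ← sub_smul, ← sub_mul, norm_smul, norm_mul,
            Real.norm_of_nonneg (htent t ht').1, Real.dist_eq, Real.norm_eq_abs]
          have := (htent t ht').2
          have h5 : |l - l'| * (h - |t - s|) * ‖e‖ ≤ |l - l'| * h * ‖e‖ := by gcongr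
          linarith
        rw [Real.coe_nnabs, abs_of_nonneg (show (0 : ℝ) ≤ (K : ℝ) * (h * ‖e‖) by positivity), mul_assoc]
        gcongr
      · simp
      · refine Eventually.of_forall fun t ht => ?_
        have ht' := hsub ht
        have h4 := hgU t ⟨by linarith [ht'.1], by linarith [ht'.2]⟩
        have h5 : HasDerivAt (fun l : ℝ => q t + (l * (h - |t - s|)) • e) ((h - |t - s|) • e) 0 := by
          have := ((((hasDerivAt_id (0 : ℝ)).mul_const (h - |t - s|)).smul_const e).const_add (q t))
          simpa using this
        have h6 : HasFDerivAt U (InnerProductSpace.toDual ℝ E (g (q t)))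
            (q t + ((0 : ℝ) * (h - |t - s|)) • e) := by
          simpa using h4.hasFDerivAt
        have := h6.comp_hasDerivAt (0 : ℝ) h5
        refine this.congr_deriv ?_
        rw [map_smul, InnerProductSpace.toDual_apply_apply, real_inner_comm, smul_eq_mul]
    exact d1.add d2
  have hz := hmin.hasDerivAt_eq_zero hder
  have hcomm := (innerSL ℝ e).intervalIntegral_comp_comm (μ := volume) (a := s - h) (b := s + h)
    (f := fun t => (h - |t - s|) • g (q t))
    (Continuous.intervalIntegrable (by fun_prop) _ _)
  simp only [innerSL_apply_apply, inner_smul_right] at hcomm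
  rw [← hcomm]
  simp only [b, inner_sub_right] at hz
  simp only [inner_add_right, inner_sub_right, inner_smul_right]
  linarith

end Duff

namespace Duff

variable {E : Type*} [NormedAddCommGroup E] [InnerProductSpace ℝ E]

lemma affine_of_midpoint {r : ℝ → E} (hr : Continuous r) {S : ℝ} (hS : 0 < S)
    (hmid : ∀ s h, 0 < h → 0 < s - h → s + h < S → r (s + h) - (2 : ℝ) • r s + r (s - h) = 0) :
    ∀ t ∈ Icc 0 S, r t = r 0 + (t / S) • (r S - r 0) := by
  let ρ : ℝ → E := fun t => r t - (r 0 + (t / S) • (r S - r 0))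
  have hρc : Continuous ρ := by fun_prop
  have hρ0 : ρ 0 = 0 := by simp [ρ]
  have hρS : ρ S = 0 := by simp [ρ, div_self hS.ne']
  have hρm : ∀ s h, 0 < h → 0 < s - h → s + h < S → (2 : ℝ) • ρ s = ρ (s + h) + ρ (s - h) := by
    intro s h h1 h2 h3
    have := hmid s h h1 h2 h3
    have e : ρ (s + h) + ρ (s - h) - (2 : ℝ) • ρ s = r (s + h) - (2 : ℝ) • r s + r (s - h) := by
      simp only [ρ, add_div, sub_div, add_smul, sub_smul, smul_sub, smul_add, two_smul]
      abel
    rw [this, sub_eq_zero] at e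
    exact e.symm
  obtain ⟨tm, htm, hmax⟩ := isCompact_Icc.exists_isMaxOn (nonempty_Icc.2 hS.le)
    (hρc.norm.continuousOn (s := Icc 0 S))
  set M := ‖ρ tm‖ with hM
  have hmax' : ∀ t ∈ Icc 0 S, ‖ρ t‖ ≤ M := fun t ht => hmax ht
  have hcomp : IsCompact (Icc 0 S ∩ {t | ‖ρ t‖ = M}) :=
    isCompact_Icc.inter_right (isClosed_eq hρc.norm continuous_const)
  obtain ⟨t0, ⟨ht0, ht0M⟩, hleast⟩ := hcomp.exists_isLeast ⟨tm, htm, rfl⟩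
  have hM0 : M = 0 := by
    simp only [mem_setOf_eq] at ht0M
    rcases ht0.1.eq_or_lt with h | h
    · rw [← ht0M, ← h, hρ0, norm_zero]
    rcases ht0.2.eq_or_lt with h' | h'
    · rw [← ht0M, h', hρS, norm_zero]
    exfalso
    set d := min t0 (S - t0) / 2 with hd
    have hd0 : 0 < d := half_pos (lt_min h (sub_pos.2 h'))
    have hd1 : d < t0 := by have := min_le_left t0 (S - t0); linarith
    have hd2 : d < S - t0 := by have := min_le_right t0 (S - t0); linarith
    have h1 := hρm t0 d hd0 (by linarith) (by linarith)
    have h2 : 2 * M ≤ ‖ρ (t0 + d)‖ + ‖ρ (t0 - d)‖ := by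
      have := norm_add_le (ρ (t0 + d)) (ρ (t0 - d))
      rw [← h1, norm_smul, ht0M] at this
      simpa using this
    have h3 := hmax' (t0 + d) ⟨by linarith, by linarith⟩
    have h4 := hmax' (t0 - d) ⟨by linarith, by linarith⟩
    have h5 : t0 ≤ t0 - d := hleast ⟨⟨by linarith, by linarith⟩, by
      simp only [mem_setOf_eq]; linarith⟩
    linarith
  intro t ht
  have := hmax' t ht
  rw [hM0] at this
  exact sub_eq_zero.1 (norm_le_zero_iff.1 this)

lemma tent_identity [CompleteSpace E] {f v g : ℝ → E} (hf : Continuous f)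
    (hv : ∀ t, HasDerivAt v (f t) t) (hg : ∀ t, HasDerivAt g (v t) t) (s : ℝ) {h : ℝ} (hh : 0 < h) :
    g (s + h) - (2 : ℝ) • g s + g (s - h) = ∫ t in (s - h)..(s + h), (h - |t - s|) • f t := by
  have hi : ∀ a b, IntervalIntegrable (fun t => (h - |t - s|) • f t) volume a b := fun a b =>
    Continuous.intervalIntegrable (by fun_prop) _ _
  rw [← intervalIntegral.integral_add_adjacent_intervals (hi (s - h) s) (hi s (s + h))]
  have e1 : ∫ t in (s - h)..s, (h - |t - s|) • f t = h • v s - g s + g (s - h) := by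
    have : ∫ t in (s - h)..s, (h - |t - s|) • f t = ∫ t in (s - h)..s, (h + t - s) • f t := by
      apply intervalIntegral.integral_congr
      intro t ht
      rw [uIcc_of_le (by linarith)] at ht
      simp only
      rw [abs_of_nonpos (by linarith [ht.2])]
      congr 1; ring
    rw [this]
    have hd : ∀ t, HasDerivAt (fun t => (h + t - s) • v t - g t) ((h + t - s) • f t) t := by
      intro t
      have h1 : HasDerivAt (fun t : ℝ => h + t - s) 1 t := ((hasDerivAt_id t).const_add h).sub_const s
      have := (h1.smul (hv t)).sub (hg t)
      refine this.congr_deriv ?_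
      simp
    rw [intervalIntegral.integral_eq_sub_of_hasDerivAt (fun t _ => hd t)
      (Continuous.intervalIntegrable (by fun_prop) _ _)]
    have e2 : h + s - s = h := by ring
    have e3 : h + (s - h) - s = 0 := by ring
    rw [e2, e3, zero_smul]
    abel
  have e2 : ∫ t in s..(s + h), (h - |t - s|) • f t = g (s + h) - h • v s - g s := by
    have : ∫ t in s..(s + h), (h - |t - s|) • f t = ∫ t in s..(s + h), (h - (t - s)) • f t := by
      apply intervalIntegral.integral_congr
      intro t ht
      rw [uIcc_of_le (by linarith)] at ht
      simp only
      rw [abs_of_nonneg (by linarith [ht.1])]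
    rw [this]
    have hd : ∀ t, HasDerivAt (fun t => (h - (t - s)) • v t + g t) ((h - (t - s)) • f t) t := by
      intro t
      have h1 : HasDerivAt (fun t : ℝ => h - (t - s)) (-1) t :=
        ((hasDerivAt_id t).sub_const s).const_sub h
      have := (h1.smul (hv t)).add (hg t)
      refine this.congr_deriv ?_
      simp
    rw [intervalIntegral.integral_eq_sub_of_hasDerivAt (fun t _ => hd t)
      (Continuous.intervalIntegrable (by fun_prop) _ _)]
    have e2 : h - (s - s) = h := by ring
    have e3 : h - (s + h - s) = 0 := by ring
    rw [e2, e3, zero_smul]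
    abel
  rw [e1, e2, two_smul]
  abel

variable {U : E → ℝ} {R : ℝ} {A B : Set E} {S : ℝ} {q : ℝ → E} {G : ℝ → ℝ}

lemma IsMin.regular [CompleteSpace E]
    (hm : IsMin U R A B S q G) (hU : Continuous U) {K : NNReal}
    (hK : LipschitzOnWith K U (closedBall 0 R)) {g : E → E} (hg : Continuous g)
    (hgU : ∀ t ∈ Ioo 0 S, HasGradientAt U (g (q t)) (q t))
    (hR : ∀ t ∈ Ioo 0 S, ‖q t‖ ≤ R - 1) (hS : 0 < S) :
    ∃ Q v : ℝ → E, (∀ t, HasDerivAt Q (v t) t) ∧ (∀ t, HasDerivAt v (g (q t)) t) ∧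
      ∀ t ∈ Icc 0 S, q t = Q t := by
  have hqc := hm.continuous
  have hgq : Continuous fun t => g (q t) := hg.comp hqc
  let v0 : ℝ → E := fun t => ∫ r in (0 : ℝ)..t, g (q r)
  have hv0 : ∀ t, HasDerivAt v0 (g (q t)) t := fun t => hgq.integral_hasStrictDerivAt 0 t |>.hasDerivAt
  have hv0c : Continuous v0 := continuous_iff_continuousAt.2 fun t => (hv0 t).continuousAt
  let g2 : ℝ → E := fun t => ∫ r in (0 : ℝ)..t, v0 r
  have hg2 : ∀ t, HasDerivAt g2 (v0 t) t := fun t => hv0c.integral_hasStrictDerivAt 0 t |>.hasDerivAt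
  have hg2c : Continuous g2 := continuous_iff_continuousAt.2 fun t => (hg2 t).continuousAt
  let r : ℝ → E := fun t => q t - g2 t
  have haff := affine_of_midpoint (r := r) (by fun_prop) hS (by
    intro s h hh h0 h1
    have e1 := hm.second_diff hU hK hg hgU hR hh h0 h1
    have e2 := tent_identity hgq hv0 hg2 s hh
    rw [← e2] at e1
    have : r (s + h) - (2 : ℝ) • r s + r (s - h) = (q (s + h) - (2 : ℝ) • q s + q (s - h)) -
      (g2 (s + h) - (2 : ℝ) • g2 s + g2 (s - h)) := by
      simp only [r, two_smul]; abel
    rw [this, e1, sub_self])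
  set w := S⁻¹ • (r S - r 0) with hw
  refine ⟨fun t => g2 t + (r 0 + t • w), fun t => v0 t + w, ?_, ?_, ?_⟩
  · intro t
    have h1 := (hg2 t).add (((hasDerivAt_id t).smul_const w).const_add (r 0))
    refine h1.congr_deriv ?_
    simp
  · intro t
    exact (hv0 t).add_const w
  · intro t ht
    have := haff t ht
    show q t = g2 t + (r 0 + t • w)
    rw [hw, smul_smul, ← div_eq_mul_inv, ← this]
    simp [r]

lemma IsMin.energy
    (hm : IsMin U R A B S q G) (hU : Continuous U) {ε : ℝ} (hε : 0 < ε)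
    (hUε : ∀ x, ε ≤ U x) (hS : 0 < S) {Q v : ℝ → E} (hv : Continuous v)
    (hQ : ∀ t, HasDerivAt Q (v t) t) (hqQ : ∀ t ∈ Icc 0 S, q t = Q t) :
    ∀ t ∈ Icc 0 S, ‖v t‖ ^ 2 = 2 * U (q t) := by
  intro t0 ht0
  have key : ∀ η > 0, ‖v t0‖ ≤ η + √(2 * (U (q t0) + η)) ∧
      2 * (U (q t0) - η) ≤ (‖v t0‖ + η) ^ 2 := by
    intro η hη
    have c1 := Metric.continuous_iff.1 hv t0 η hη
    have c2 := Metric.continuous_iff.1 (hm.hUq hU) t0 η hη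
    obtain ⟨δ1, hδ1, c1⟩ := c1
    obtain ⟨δ2, hδ2, c2⟩ := c2
    set δ := min δ1 δ2 / 2 with hδ
    have hδ0 : 0 < δ := half_pos (lt_min hδ1 hδ2)
    have hδ1' : δ < δ1 := by have := min_le_left δ1 δ2; linarith
    have hδ2' : δ < δ2 := by have := min_le_right δ1 δ2; linarith
    obtain ⟨a, b, ha, hab, hb, haδ, hbδ⟩ : ∃ a b, 0 ≤ a ∧ a < b ∧ b ≤ S ∧ t0 - δ ≤ a ∧ b ≤ t0 + δ := by
      refine ⟨max 0 (t0 - δ), min S (t0 + δ), le_max_left _ _, ?_, min_le_left _ _,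
        le_max_right _ _, min_le_right _ _⟩
      have := ht0.1; have := ht0.2
      simp only [max_lt_iff, lt_min_iff]
      refine ⟨⟨?_, ?_⟩, ?_, ?_⟩ <;> linarith
    have hnear : ∀ t ∈ Icc a b, dist t t0 ≤ δ := by
      intro t ht
      rw [Real.dist_eq, abs_le]; constructor <;> linarith [ht.1, ht.2]
    have hvn : ∀ t ∈ Icc a b, ‖v t - v t0‖ ≤ η := fun t ht => by
      rw [← dist_eq_norm]; exact (c1 t ((hnear t ht).trans_lt hδ1')).le
    have hUn : ∀ t ∈ Icc a b, |U (q t) - U (q t0)| ≤ η := fun t ht => by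
      rw [← Real.dist_eq]; exact (c2 t ((hnear t ht).trans_lt hδ2')).le
    have hba : 0 < b - a := sub_pos.2 hab
    have heq := hm.equip hU hε hUε ha hab.le hb
    have hq_a := hqQ a ⟨ha, hab.le.trans hb⟩
    have hq_b := hqQ b ⟨ha.trans hab.le, hb⟩
    constructor
    · have h1 : ∫ t in a..b, U (q t) ≤ ∫ t in a..b, (U (q t0) + η) :=
        intervalIntegral.integral_mono_on hab.le ((hm.hUq hU).intervalIntegrable _ _) (by simp)
          (fun t ht => by have := (abs_le.1 (hUn t ht)).2; linarith)
      simp only [intervalIntegral.integral_const, smul_eq_mul] at h1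
      have h2 := hm.adm a b a b le_rfl hab.le le_rfl
      rw [heq] at h2
      have h0 : 0 ≤ U (q t0) + η := by have := hUε (q t0); linarith
      have h3 : ‖q b - q a‖ ≤ (b - a) * √(2 * (U (q t0) + η)) := by
        refine abs_le_of_sq_le_sq' ?_ (by positivity) |>.2
        rw [mul_pow, Real.sq_sqrt (by positivity)]
        nlinarith
      have h4 : ‖(Q b - b • v t0) - (Q a - a • v t0)‖ ≤ η * ‖b - a‖ := by
        refine (convex_Icc a b).norm_image_sub_le_of_norm_hasDerivWithin_le
          (f := fun t => Q t - t • v t0) (f' := fun t => v t - v t0) ?_ hvn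
          (left_mem_Icc.2 hab.le) (right_mem_Icc.2 hab.le)
        intro t ht
        have := (hQ t).sub ((hasDerivAt_id t).smul_const (v t0))
        exact (this.congr_deriv (by simp)).hasDerivWithinAt
      rw [Real.norm_of_nonneg hba.le] at h4
      have h5 : (b - a) • v t0 = (q b - q a) - ((Q b - b • v t0) - (Q a - a • v t0)) := by
        rw [hq_a, hq_b, sub_smul]; abel
      have h6 : (b - a) * ‖v t0‖ ≤ (b - a) * (η + √(2 * (U (q t0) + η))) := by
        have : ‖(b - a) • v t0‖ = (b - a) * ‖v t0‖ := by
          rw [norm_smul, Real.norm_of_nonneg hba.le]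
        rw [← this, h5]
        refine (norm_sub_le _ _).trans ?_
        linarith
      exact le_of_mul_le_mul_left h6 hba
    · set M := ‖v t0‖ + η with hM
      have hMv : ∀ t ∈ Icc a b, ‖v t‖ ≤ M := by
        intro t ht
        have : v t = v t0 + (v t - v t0) := by abel
        rw [this]
        exact (norm_add_le _ _).trans (by have := hvn t ht; linarith)
      have hc : Cost U R (q a) (q b) (Act U q (fun t => M ^ 2 * t) a b) := by
        refine ⟨a, b, hab.le, q, fun t => M ^ 2 * t, ?_, rfl, rfl, fun t _ => hm.ball t, le_rfl⟩
        intro s t hs hst ht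
        have hsab : s ∈ Icc a b := ⟨hs, hst.trans ht⟩
        have htab : t ∈ Icc a b := ⟨hs.trans hst, ht⟩
        have h1 : ‖Q t - Q s‖ ≤ M * ‖t - s‖ :=
          (convex_Icc a b).norm_image_sub_le_of_norm_hasDerivWithin_le
            (fun r _ => (hQ r).hasDerivWithinAt) hMv hsab htab
        rw [Real.norm_of_nonneg (sub_nonneg.2 hst)] at h1
        rw [hqQ s ⟨ha.trans hsab.1, hsab.2.trans hb⟩, hqQ t ⟨ha.trans htab.1, htab.2.trans hb⟩]
        calc _ ≤ (M * (t - s)) ^ 2 := by gcongr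
          _ = _ := by ring
      have h2 := hm.opt hU ha hab.le hb hc
      unfold Act at h2
      have h3 : ∫ t in a..b, (U (q t0) - η) ≤ ∫ t in a..b, U (q t) :=
        intervalIntegral.integral_mono_on hab.le (by simp) ((hm.hUq hU).intervalIntegrable _ _)
          (fun t ht => by have := (abs_le.1 (hUn t ht)).1; linarith)
      simp only [intervalIntegral.integral_const, smul_eq_mul] at h3
      have h4 : (b - a) * (2 * (U (q t0) - η)) ≤ (b - a) * M ^ 2 := by linarith
      exact le_of_mul_le_mul_left h4 hba
  have hu0 : 0 ≤ U (q t0) := hε.le.trans (hUε _)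
  apply le_antisymm
  · have h1 : Tendsto (fun η : ℝ => η + √(2 * (U (q t0) + η))) (𝓝[>] 0)
        (𝓝 (0 + √(2 * (U (q t0) + 0)))) :=
      (Continuous.tendsto (by fun_prop) 0).mono_left nhdsWithin_le_nhds
    have h2 : ‖v t0‖ ≤ √(2 * U (q t0)) := by
      have := ge_of_tendsto h1 (by filter_upwards [self_mem_nhdsWithin] with η hη using (key η hη).1)
      simpa using this
    calc _ ≤ (√(2 * U (q t0))) ^ 2 := by gcongr
      _ = _ := Real.sq_sqrt (by positivity)
  · have h1 : Tendsto (fun η : ℝ => (‖v t0‖ + η) ^ 2 - 2 * (U (q t0) - η)) (𝓝[>] 0)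
        (𝓝 ((‖v t0‖ + 0) ^ 2 - 2 * (U (q t0) - 0))) :=
      (Continuous.tendsto (by fun_prop) 0).mono_left nhdsWithin_le_nhds
    have := ge_of_tendsto h1 (b := 0) (by
      filter_upwards [self_mem_nhdsWithin] with η hη
      have := (key η hη).2; linarith)
    simp only [add_zero, sub_zero] at this
    linarith

end Duff

namespace Duff

variable {E : Type*} [NormedAddCommGroup E] [InnerProductSpace ℝ E]

lemma mv_est {f f' : ℝ → E} {a b η : ℝ} {c : E} (hab : a ≤ b)
    (hf : ∀ t ∈ Icc a b, HasDerivAt f (f' t) t) (hc : ∀ t ∈ Icc a b, ‖f' t - c‖ ≤ η) :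
    ‖f b - f a - (b - a) • c‖ ≤ η * (b - a) := by
  have h4 : ‖(f b - b • c) - (f a - a • c)‖ ≤ η * ‖b - a‖ := by
    refine (convex_Icc a b).norm_image_sub_le_of_norm_hasDerivWithin_le
      (f := fun t => f t - t • c) (f' := fun t => f' t - c) ?_ hc
      (left_mem_Icc.2 hab) (right_mem_Icc.2 hab)
    intro t ht
    have := (hf t ht).sub ((hasDerivAt_id t).smul_const c)
    exact (this.congr_deriv (by simp)).hasDerivWithinAt
  rw [Real.norm_of_nonneg (sub_nonneg.2 hab)] at h4
  have : f b - f a - (b - a) • c = (f b - b • c) - (f a - a • c) := by rw [sub_smul]; abel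
  rwa [this]

/-- The pieces of the reflected path. -/
def pn (S : ℝ) (Q : ℝ → E) (n : ℤ) (t : ℝ) : E :=
  if Even n then Q (t - n * S) else Q ((n + 1) * S - t)

/-- The velocities of the pieces of the reflected path. -/
def wn (S : ℝ) (v : ℝ → E) (n : ℤ) (t : ℝ) : E :=
  if Even n then v (t - n * S) else - v ((n + 1) * S - t)

lemma fold_pieces {g : E → E} {S L M e : ℝ} {Q v : ℝ → E} (hS : 0 < S)
    (hQ : ∀ t, HasDerivAt Q (v t) t) (hv : ∀ t ∈ Icc 0 S, HasDerivAt v (g (Q t)) t) (n : ℤ) :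
    (∀ t, HasDerivAt (pn S Q n) (wn S v n t) t) ∧
    (∀ t ∈ Icc (n * S) ((n + 1) * S), HasDerivAt (wn S v n) (g (pn S Q n t)) t) ∧
    (∀ t ∈ Icc (n * S) ((n + 1) * S), ∃ x ∈ Icc 0 S, pn S Q n t = Q x ∧ ‖wn S v n t‖ = ‖v x‖) ∧
    pn S Q n ((n + 1) * S) = pn S Q (n + 1) ((n + 1) * S) ∧
    (‖v 0‖ ≤ e → ‖v S‖ ≤ e → ‖wn S v n ((n + 1) * S)‖ ≤ e ∧ ‖wn S v (n + 1) ((n + 1) * S)‖ ≤ e)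
    := by
  have e1 : ((n : ℝ) + 1) * S - n * S = S := by ring
  have e2 : ((n : ℝ) + 1 + 1) * S - (n + 1) * S = S := by ring
  by_cases hn : Even n
  · have hn' : ¬ Even (n + 1) := by simpa [Int.even_add_one] using hn
    have hp : pn S Q n = fun t => Q (t - n * S) := by funext t; simp [pn, hn]
    have hw : wn S v n = fun t => v (t - n * S) := by funext t; simp [wn, hn]
    have hp' : pn S Q (n + 1) = fun t => Q ((n + 1 + 1) * S - t) := by funext t; simp [pn, hn']
    have hw' : wn S v (n + 1) = fun t => - v ((n + 1 + 1) * S - t) := by funext t; simp [wn, hn']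
    rw [hp, hw, hp', hw']
    refine ⟨fun t => ?_, fun t ht => ?_, fun t ht => ?_, ?_, ?_⟩
    · exact (hQ (t - n * S)).comp_sub_const t _
    · exact (hv (t - n * S) ⟨by linarith [ht.1], by linarith [ht.2]⟩).comp_sub_const t _
    · exact ⟨t - n * S, ⟨by linarith [ht.1], by linarith [ht.2]⟩, rfl, rfl⟩
    · simp only [e1, e2]
    · simp only [e1, e2, norm_neg]
      intro h1 h2; exact ⟨h2, h2⟩
  · have hn' : Even (n + 1) := by simpa [Int.even_add_one] using hn
    have hp : pn S Q n = fun t => Q ((n + 1) * S - t) := by funext t; simp [pn, hn]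
    have hw : wn S v n = fun t => - v ((n + 1) * S - t) := by funext t; simp [wn, hn]
    have hp' : pn S Q (n + 1) = fun t => Q (t - (n + 1) * S) := by funext t; simp [pn, hn']
    have hw' : wn S v (n + 1) = fun t => v (t - (n + 1) * S) := by funext t; simp [wn, hn']
    rw [hp, hw, hp', hw']
    refine ⟨fun t => ?_, fun t ht => ?_, fun t ht => ?_, ?_, ?_⟩
    · exact (hQ ((n + 1) * S - t)).comp_const_sub _ t
    · have := ((hv ((n + 1) * S - t) ⟨by linarith [ht.2], by linarith [ht.1]⟩).comp_const_sub _ t).neg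
      rw [neg_neg] at this
      exact this
    · exact ⟨(n + 1) * S - t, ⟨by linarith [ht.2], by linarith [ht.1]⟩, rfl, norm_neg _⟩
    · simp
    · simp only [sub_self, norm_neg]
      intro h1 h2; exact ⟨h1, h1⟩

lemma fold {g : E → E} {S L M e : ℝ} {Q v : ℝ → E} (hS : 0 < S)
    (hQ : ∀ t, HasDerivAt Q (v t) t) (hv : ∀ t ∈ Icc 0 S, HasDerivAt v (g (Q t)) t)
    (hL : ∀ t ∈ Icc 0 S, ‖v t‖ ≤ L) (hM : ∀ t ∈ Icc 0 S, ‖g (Q t)‖ ≤ M)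
    (h0 : ‖v 0‖ ≤ e) (hSe : ‖v S‖ ≤ e) :
    ∃ P w : ℝ → E, (∀ t ∈ Icc 0 S, P t = Q t) ∧
      (∀ t, ∃ x ∈ Icc 0 S, P t = Q x ∧ ‖w t‖ = ‖v x‖) ∧
      (∀ a b, a ≤ b → b - a < S → ‖P b - P a‖ ≤ L * (b - a)) ∧
      (∀ a b, a ≤ b → b - a < S →
        ‖P b - P a - (b - a) • w a‖ ≤ (M * (b - a) + 2 * e) * (b - a)) ∧
      (∀ a b η, a ≤ b → b - a < S →
        (∀ x ∈ Icc 0 S, ∀ y ∈ Icc 0 S, ‖Q x - Q y‖ ≤ L * (b - a) → ‖g (Q x) - g (Q y)‖ ≤ η) →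
        ‖w b - w a - (b - a) • g (P a)‖ ≤ η * (b - a) + 2 * e) := by
  have he : 0 ≤ e := (norm_nonneg _).trans h0
  have hL0 : 0 ≤ L := (norm_nonneg _).trans (hL 0 ⟨le_rfl, hS.le⟩)
  have hM0 : 0 ≤ M := (norm_nonneg _).trans (hM 0 ⟨le_rfl, hS.le⟩)
  let P : ℝ → E := fun t => pn S Q ⌊t / S⌋ t
  let w : ℝ → E := fun t => wn S v ⌊t / S⌋ t
  have hfl : ∀ t, (⌊t / S⌋ : ℝ) * S ≤ t ∧ t < (⌊t / S⌋ + 1) * S := fun t =>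
    ⟨(le_div_iff₀ hS).1 (Int.floor_le _), (div_lt_iff₀ hS).1 (Int.lt_floor_add_one _)⟩
  have pc := fun n => fold_pieces (e := e) (L := L) (M := M) (g := g) hS hQ hv n
  have hpn : ∀ (n : ℤ) t, t ∈ Icc (n * S) ((n + 1) * S) → ‖wn S v n t‖ ≤ L ∧ ‖g (pn S Q n t)‖ ≤ M := by
    intro n t ht
    obtain ⟨x, hx, h1, h2⟩ := (pc n).2.2.1 t ht
    rw [h1, h2]
    exact ⟨hL x hx, hM x hx⟩
  -- generic piece estimates
  have q1 : ∀ (n : ℤ) a b, a ≤ b → n * S ≤ a → b ≤ (n + 1) * S →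
      ‖pn S Q n b - pn S Q n a‖ ≤ L * (b - a) := by
    intro n a b hab ha hb
    have := mv_est (c := 0) (η := L) hab (fun t _ => (pc n).1 t)
      (fun t ht => by rw [sub_zero]; exact (hpn n t ⟨ha.trans ht.1, ht.2.trans hb⟩).1)
    simpa using this
  have q2 : ∀ (n : ℤ) a b, a ≤ b → n * S ≤ a → b ≤ (n + 1) * S →
      ‖wn S v n b - wn S v n a‖ ≤ M * (b - a) := by
    intro n a b hab ha hb
    have := mv_est (c := 0) (η := M) hab
      (fun t ht => (pc n).2.1 t ⟨ha.trans ht.1, ht.2.trans hb⟩)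
      (fun t ht => by rw [sub_zero]; exact (hpn n t ⟨ha.trans ht.1, ht.2.trans hb⟩).2)
    simpa using this
  -- the two cases
  have hcase : ∀ a b, a ≤ b → b - a < S →
      (⌊b / S⌋ = ⌊a / S⌋) ∨ (⌊b / S⌋ = ⌊a / S⌋ + 1) := by
    intro a b hab hlt
    have h1 : ⌊a / S⌋ ≤ ⌊b / S⌋ := Int.floor_le_floor (by gcongr)
    have h2 : ⌊b / S⌋ < ⌊a / S⌋ + 2 := by
      rw [Int.floor_lt, div_lt_iff₀ hS]
      have := (hfl a).2
      push_cast
      linarith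
    omega
  refine ⟨P, w, ?_, ?_, ?_, ?_, ?_⟩
  · intro t ht
    rcases ht.2.lt_or_eq with h | h
    · have : ⌊t / S⌋ = 0 := by
        rw [Int.floor_eq_zero_iff]
        exact ⟨div_nonneg ht.1 hS.le, (div_lt_one hS).2 h⟩
      simp [P, pn, this]
    · have : ⌊t / S⌋ = 1 := by rw [h, div_self hS.ne']; simp
      simp only [P, pn, this]
      rw [if_neg (by decide), h]
      congr 1; push_cast; ring
  · intro t
    exact (pc _).2.2.1 t ⟨(hfl t).1, (hfl t).2.le⟩
  · intro a b hab hlt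
    have ha := hfl a
    have hb := hfl b
    rcases hcase a b hab hlt with h | h
    · simp only [P]
      rw [h] at hb ⊢
      exact q1 _ a b hab ha.1 hb.2.le
    · simp only [P]
      rw [h] at hb ⊢
      set n := ⌊a / S⌋
      push_cast at hb
      have k1 := q1 n a ((n + 1) * S) ha.2.le ha.1 le_rfl
      have k2 := q1 (n + 1) ((n + 1) * S) b hb.1 (by push_cast; rfl) (by push_cast; exact hb.2.le)
      rw [(pc n).2.2.2.1] at k1
      have : pn S Q (n + 1) b - pn S Q n a = (pn S Q (n + 1) b - pn S Q (n + 1) ((n + 1) * S)) +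
        (pn S Q (n + 1) ((n + 1) * S) - pn S Q n a) := by abel
      rw [this]
      refine (norm_add_le _ _).trans ?_
      linarith
  · intro a b hab hlt
    have ha := hfl a
    have hb := hfl b
    rcases hcase a b hab hlt with h | h
    · simp only [P, w]
      rw [h] at hb ⊢
      set n := ⌊a / S⌋
      have := mv_est (c := wn S v n a) (η := M * (b - a)) hab (fun t _ => (pc n).1 t)
        (fun t ht => (q2 n a t ht.1 ha.1 (ht.2.trans hb.2.le)).trans (by gcongr; exact ht.2))
      refine this.trans ?_
      have := sub_nonneg.2 hab
      gcongr; linarith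
    · simp only [P, w]
      rw [h] at hb ⊢
      set n := ⌊a / S⌋
      push_cast at hb
      set τ := ((n : ℝ) + 1) * S with hτ
      have hj := (pc n).2.2.2.2 h0 hSe
      rw [← hτ] at hj
      have k1 := mv_est (c := wn S v n a) (η := M * (b - a) + 2 * e) ha.2.le (fun t _ => (pc n).1 t)
        (fun t ht => (q2 n a t ht.1 ha.1 ht.2).trans (by
          have : M * (t - a) ≤ M * (b - a) := by gcongr; exact ht.2.trans hb.1
          linarith))
      have k2 := mv_est (c := wn S v n a) (η := M * (b - a) + 2 * e) hb.1
        (fun t _ => (pc (n + 1)).1 t)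
        (fun t ht => by
          have l1 := q2 (n + 1) τ t ht.1 (by push_cast; rfl) (by push_cast; exact ht.2.trans hb.2.le)
          have l2 := q2 n a τ ha.2.le ha.1 le_rfl
          have : wn S v (n + 1) t - wn S v n a = (wn S v (n + 1) t - wn S v (n + 1) τ) +
            (wn S v (n + 1) τ - wn S v n τ) + (wn S v n τ - wn S v n a) := by abel
          rw [this]
          refine (norm_add₃_le).trans ?_
          have l3 := norm_sub_le (wn S v (n + 1) τ) (wn S v n τ)
          have l4 : M * (t - a) ≤ M * (b - a) := by gcongr; exact ht.2
          linarith [hj.1, hj.2])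
      rw [(pc n).2.2.2.1] at k1
      have : pn S Q (n + 1) b - pn S Q n a - (b - a) • wn S v n a =
        (pn S Q (n + 1) b - pn S Q (n + 1) τ - (b - τ) • wn S v n a) +
        (pn S Q (n + 1) τ - pn S Q n a - (τ - a) • wn S v n a) := by
        simp only [sub_smul]; abel
      rw [this]
      refine (norm_add_le _ _).trans ?_
      linarith
  · intro a b η hab hlt hη
    have ha := hfl a
    have hb := hfl b
    have hη' : ∀ (n m : ℤ), ∀ t ∈ Icc (n * S) ((n + 1) * S), ∀ t' ∈ Icc (m * S) ((m + 1) * S),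
        ‖pn S Q n t - pn S Q m t'‖ ≤ L * (b - a) → ‖g (pn S Q n t) - g (pn S Q m t')‖ ≤ η := by
      intro n m t ht t' ht' hle
      obtain ⟨x, hx, h1, -⟩ := (pc n).2.2.1 t ht
      obtain ⟨y, hy, h2, -⟩ := (pc m).2.2.1 t' ht'
      rw [h1, h2] at hle ⊢
      exact hη x hx y hy hle
    rcases hcase a b hab hlt with h | h
    · simp only [P, w]
      rw [h] at hb ⊢
      set n := ⌊a / S⌋
      have := mv_est (c := g (pn S Q n a)) (η := η) hab
        (fun t ht => (pc n).2.1 t ⟨ha.1.trans ht.1, ht.2.trans hb.2.le⟩)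
        (fun t ht => hη' n n t ⟨ha.1.trans ht.1, ht.2.trans hb.2.le⟩ a ⟨ha.1, ha.2.le⟩
          ((q1 n a t ht.1 ha.1 (ht.2.trans hb.2.le)).trans (by gcongr; exact ht.2)))
      linarith
    · simp only [P, w]
      rw [h] at hb ⊢
      set n := ⌊a / S⌋
      push_cast at hb
      have hpc := (pc n).2.2.2.1
      set τ := ((n : ℝ) + 1) * S with hτ
      have hj := (pc n).2.2.2.2 h0 hSe
      rw [← hτ] at hj
      have k1 := mv_est (c := g (pn S Q n a)) (η := η) ha.2.le
        (fun t ht => (pc n).2.1 t ⟨ha.1.trans ht.1, ht.2⟩)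
        (fun t ht => hη' n n t ⟨ha.1.trans ht.1, ht.2⟩ a ⟨ha.1, ha.2.le⟩
          ((q1 n a t ht.1 ha.1 ht.2).trans (by gcongr; exact ht.2.trans hb.1)))
      have hI : ∀ t ∈ Icc τ b, t ∈ Icc (((n + 1 : ℤ) : ℝ) * S) (((n + 1 : ℤ) + 1) * S) := by
        intro t ht
        push_cast
        exact ⟨ht.1, ht.2.trans hb.2.le⟩
      have k2 := mv_est (c := g (pn S Q n a)) (η := η) hb.1
        (fun t ht => (pc (n + 1)).2.1 t (hI t ht))
        (fun t ht => hη' (n + 1) n t (hI t ht) a ⟨ha.1, ha.2.le⟩ (by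
          have l1 := q1 (n + 1) τ t ht.1 (by push_cast; rfl) (by push_cast; exact ht.2.trans hb.2.le)
          have l2 := q1 n a τ ha.2.le ha.1 le_rfl
          rw [hpc] at l2
          have : pn S Q (n + 1) t - pn S Q n a = (pn S Q (n + 1) t - pn S Q (n + 1) τ) +
            (pn S Q (n + 1) τ - pn S Q n a) := by abel
          rw [this]
          refine (norm_add_le _ _).trans ?_
          have l4 : L * (t - a) ≤ L * (b - a) := by gcongr; exact ht.2
          linarith))
      have : wn S v (n + 1) b - wn S v n a - (b - a) • g (pn S Q n a) =
        (wn S v (n + 1) b - wn S v (n + 1) τ - (b - τ) • g (pn S Q n a)) +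
        (wn S v (n + 1) τ - wn S v n τ) +
        (wn S v n τ - wn S v n a - (τ - a) • g (pn S Q n a)) := by
        simp only [sub_smul]; abel
      rw [this]
      refine (norm_add₃_le).trans ?_
      have l3 := norm_sub_le (wn S v (n + 1) τ) (wn S v n τ)
      linarith [hj.1, hj.2]

end Duff

namespace Duff

variable {E : Type*} [NormedAddCommGroup E] [InnerProductSpace ℝ E]

lemma hasDerivAt_of_right {f f' : ℝ → E} (hf' : Continuous f')
    (h : ∀ η > 0, ∃ δ > 0, ∀ a b, a ≤ b → b - a < δ → ‖f b - f a - (b - a) • f' a‖ ≤ η * (b - a))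
    (t : ℝ) : HasDerivAt f (f' t) t := by
  apply hasDerivAt_of_est
  intro η hη
  obtain ⟨δ, hδ, h1⟩ := h (η / 2) (half_pos hη)
  obtain ⟨δ', hδ', h2⟩ := Metric.continuous_iff.1 hf' t (η / 2) (half_pos hη)
  refine ⟨min δ δ', lt_min hδ hδ', fun s hs => ?_⟩
  have hs1 := hs.trans_le (min_le_left _ _)
  have hs2 := hs.trans_le (min_le_right _ _)
  rcases le_total t s with hts | hst
  · rw [abs_of_nonneg (sub_nonneg.2 hts)] at hs1 ⊢
    refine (h1 t s hts hs1).trans ?_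
    have := sub_nonneg.2 hts
    gcongr; linarith
  · have e1 : |s - t| = t - s := by rw [abs_sub_comm, abs_of_nonneg (sub_nonneg.2 hst)]
    have h3 := (h2 s hs2).le
    rw [dist_eq_norm] at h3
    rw [e1] at hs1 ⊢
    have h4 := h1 s t hst hs1
    have : f s - f t - (s - t) • f' t = -(f t - f s - (t - s) • f' s) - (t - s) • (f' s - f' t) := by
      simp only [sub_smul, smul_sub]; abel
    rw [this]
    refine (norm_sub_le _ _).trans ?_
    rw [norm_neg, norm_smul, Real.norm_of_nonneg (sub_nonneg.2 hst)]
    have := sub_nonneg.2 hst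
    nlinarith

lemma limit [ProperSpace E] {g : E → E} (hg : Continuous g) {R L M σ : ℝ} (hσ : 0 < σ)
    {e : ℕ → ℝ} (he : Tendsto e atTop (𝓝 0)) {P w : ℕ → ℝ → E}
    (hL : 0 ≤ L) (hM : 0 ≤ M)
    (hPR : ∀ k t, ‖P k t‖ ≤ R) (hwL : ∀ k t, ‖w k t‖ ≤ L)
    (hE1 : ∀ k a b, a ≤ b → b - a < σ → ‖P k b - P k a‖ ≤ L * (b - a))
    (hE2 : ∀ k a b, a ≤ b → b - a < σ →
        ‖P k b - P k a - (b - a) • w k a‖ ≤ (M * (b - a) + 2 * e k) * (b - a))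
    (hE3 : ∀ k a b η, a ≤ b → b - a < σ →
        (∀ x y, ‖x‖ ≤ R → ‖y‖ ≤ R → ‖x - y‖ ≤ L * (b - a) → ‖g x - g y‖ ≤ η) →
        ‖w k b - w k a - (b - a) • g (P k a)‖ ≤ η * (b - a) + 2 * e k) :
    ∃ Q v : ℝ → E, (∀ t, HasDerivAt Q (v t) t) ∧ (∀ t, HasDerivAt v (g (Q t)) t) ∧
      ∀ t, Tendsto (fun k => P k t) (hyperfilter ℕ) (𝓝 (Q t)) ∧
        Tendsto (fun k => w k t) (hyperfilter ℕ) (𝓝 (v t)) := by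
  have he' : Tendsto e (hyperfilter ℕ) (𝓝 0) := he.mono_left Nat.hyperfilter_le_atTop
  have hQ : ∀ t, ∃ x ∈ closedBall (0 : E) R, Tendsto (fun k => P k t) (hyperfilter ℕ) (𝓝 x) :=
    fun t => ultra_lim _ _ (isCompact_closedBall 0 R) (fun k => mem_closedBall_zero_iff.2 (hPR k t))
  have hv : ∀ t, ∃ x ∈ closedBall (0 : E) L, Tendsto (fun k => w k t) (hyperfilter ℕ) (𝓝 x) :=
    fun t => ultra_lim _ _ (isCompact_closedBall 0 L) (fun k => mem_closedBall_zero_iff.2 (hwL k t))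
  choose Q hQR hQ using hQ
  choose v hvL hv using hv
  have hQR' : ∀ t, ‖Q t‖ ≤ R := fun t => mem_closedBall_zero_iff.1 (hQR t)
  have l1 : ∀ a b, a ≤ b → b - a < σ → ‖Q b - Q a‖ ≤ L * (b - a) := fun a b hab hlt =>
    le_of_tendsto ((hQ b).sub (hQ a)).norm (Eventually.of_forall fun k => hE1 k a b hab hlt)
  have l2 : ∀ a b, a ≤ b → b - a < σ → ‖Q b - Q a - (b - a) • v a‖ ≤ M * (b - a) * (b - a) := by
    intro a b hab hlt
    have h1 := (((hQ b).sub (hQ a)).sub ((hv a).const_smul (b - a))).norm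
    have h2 : Tendsto (fun k => (M * (b - a) + 2 * e k) * (b - a)) (hyperfilter ℕ)
        (𝓝 ((M * (b - a) + 2 * 0) * (b - a))) := ((he'.const_mul 2).const_add _).mul_const _
    have := le_of_tendsto_of_tendsto h1 h2 (Eventually.of_forall fun k => hE2 k a b hab hlt)
    simpa using this
  have l3 : ∀ a b η, a ≤ b → b - a < σ →
        (∀ x y, ‖x‖ ≤ R → ‖y‖ ≤ R → ‖x - y‖ ≤ L * (b - a) → ‖g x - g y‖ ≤ η) →
        ‖v b - v a - (b - a) • g (Q a)‖ ≤ η * (b - a) := by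
    intro a b η hab hlt hη
    have h1 := (((hv b).sub (hv a)).sub
      (((hg.tendsto (Q a)).comp (hQ a)).const_smul (b - a))).norm
    have h2 : Tendsto (fun k => η * (b - a) + 2 * e k) (hyperfilter ℕ)
        (𝓝 (η * (b - a) + 2 * 0)) := ((he'.const_mul 2).const_add _)
    have := le_of_tendsto_of_tendsto h1 h2 (Eventually.of_forall fun k => hE3 k a b η hab hlt hη)
    simpa using this
  have huc : ∀ η > 0, ∃ δ > 0, ∀ r, r < δ →
      ∀ x y, ‖x‖ ≤ R → ‖y‖ ≤ R → ‖x - y‖ ≤ L * r → ‖g x - g y‖ ≤ η := by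
    intro η hη
    have huc := (isCompact_closedBall (0 : E) R).uniformContinuousOn_of_continuous hg.continuousOn
    rw [Metric.uniformContinuousOn_iff] at huc
    obtain ⟨δ, hδ, huc⟩ := huc η hη
    refine ⟨δ / (L + 1), by positivity, fun r hr x y hx hy hxy => ?_⟩
    rw [lt_div_iff₀ (by positivity)] at hr
    rw [← dist_eq_norm]
    refine (huc x (mem_closedBall_zero_iff.2 hx) y (mem_closedBall_zero_iff.2 hy) ?_).le
    rw [dist_eq_norm]
    rcases le_or_gt 0 r with h | h
    · nlinarith
    · nlinarith
  have hQc : Continuous Q := by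
    rw [Metric.continuous_iff]
    intro b ε hε
    refine ⟨min σ (ε / (L + 1)), lt_min hσ (by positivity), fun a ha => ?_⟩
    have ha1 := ha.trans_le (min_le_left _ _)
    have ha2 := ha.trans_le (min_le_right _ _)
    rw [lt_div_iff₀ (by positivity), Real.dist_eq] at ha2
    rw [Real.dist_eq] at ha1
    have : ‖Q a - Q b‖ ≤ L * |a - b| := by
      rcases le_total a b with h | h
      · rw [abs_sub_comm, abs_of_nonneg (sub_nonneg.2 h)] at ha1 ⊢
        rw [norm_sub_rev]; exact l1 a b h ha1
      · rw [abs_of_nonneg (sub_nonneg.2 h)] at ha1 ⊢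
        exact l1 b a h ha1
    rw [dist_eq_norm]
    rcases (abs_nonneg (a - b)).eq_or_lt with h | h
    · rw [← h] at this; linarith
    · nlinarith
  obtain ⟨M', hM'⟩ := (isCompact_closedBall (0 : E) R).exists_bound_of_continuousOn hg.continuousOn
  have hM'' : ∀ t, ‖g (Q t)‖ ≤ M' := fun t => hM' _ (hQR t)
  have hM'0 : 0 ≤ M' := (norm_nonneg _).trans (hM'' 0)
  obtain ⟨δ1, hδ1, huc1⟩ := huc 1 one_pos
  have l4 : ∀ a b, a ≤ b → b - a < min σ δ1 → ‖v b - v a‖ ≤ (M' + 1) * (b - a) := by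
    intro a b hab hlt
    have h1 := l3 a b 1 hab (hlt.trans_le (min_le_left _ _)) (huc1 _ (hlt.trans_le (min_le_right _ _)))
    have : v b - v a = (v b - v a - (b - a) • g (Q a)) + (b - a) • g (Q a) := by abel
    rw [this]
    refine (norm_add_le _ _).trans ?_
    rw [norm_smul, Real.norm_of_nonneg (sub_nonneg.2 hab)]
    have := sub_nonneg.2 hab
    nlinarith [hM'' a]
  have hvc : Continuous v := by
    rw [Metric.continuous_iff]
    intro b ε hε
    refine ⟨min (min σ δ1) (ε / (M' + 1)), lt_min (lt_min hσ hδ1) (by positivity), fun a ha => ?_⟩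
    have ha1 := ha.trans_le (min_le_left _ _)
    have ha2 := ha.trans_le (min_le_right _ _)
    rw [lt_div_iff₀ (by positivity), Real.dist_eq] at ha2
    rw [Real.dist_eq] at ha1
    have : ‖v a - v b‖ ≤ (M' + 1) * |a - b| := by
      rcases le_total a b with h | h
      · rw [abs_sub_comm, abs_of_nonneg (sub_nonneg.2 h)] at ha1 ⊢
        rw [norm_sub_rev]; exact l4 a b h ha1
      · rw [abs_of_nonneg (sub_nonneg.2 h)] at ha1 ⊢
        exact l4 b a h ha1
    rw [dist_eq_norm]
    linarith
  refine ⟨Q, v, hasDerivAt_of_right hvc ?_, hasDerivAt_of_right (hg.comp hQc) ?_,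
    fun t => ⟨hQ t, hv t⟩⟩
  · intro η hη
    refine ⟨min σ (η / (M + 1)), lt_min hσ (by positivity), fun a b hab hlt => ?_⟩
    have h1 := hlt.trans_le (min_le_left _ _)
    have h2 := hlt.trans_le (min_le_right _ _)
    rw [lt_div_iff₀ (by positivity)] at h2
    refine (l2 a b hab h1).trans ?_
    have := sub_nonneg.2 hab
    gcongr
    linarith
  · intro η hη
    obtain ⟨δ, hδ, hu⟩ := huc η hη
    refine ⟨min σ δ, lt_min hσ hδ, fun a b hab hlt => ?_⟩
    exact l3 a b η hab (hlt.trans_le (min_le_left _ _)) (hu _ (hlt.trans_le (min_le_right _ _)))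

end Duff

namespace Duff

variable {E : Type*} [NormedAddCommGroup E] [InnerProductSpace ℝ E] [ProperSpace E]

/-- The standing assumptions on the potential. -/
structure Setup (V : E → ℝ) (c R d : ℝ) (Vm Vp : Set E) : Prop where
  hV : ContDiff ℝ 1 V
  hVm : IsClosed Vm
  hVp : IsClosed Vp
  split : ∀ x, V x ≤ c ↔ x ∈ Vm ∨ x ∈ Vp
  hd : 0 < d
  sep : ∀ x ∈ Vm, ∀ y ∈ Vp, d ≤ dist x y
  hR : ∀ x, c < V x → ‖x‖ ≤ R - 1
  ex : ∃ x ∈ Vm, ‖x‖ ≤ R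
  ey : ∃ y ∈ Vp, ‖y‖ ≤ R

/-- The truncated potential. -/
def WW (V : E → ℝ) (c : ℝ) (x : E) : ℝ := max (V x - c) 0

/-- The penalized potential. -/
def UU (V : E → ℝ) (c ε : ℝ) (x : E) : ℝ := WW V c x + ε

lemma continuous_gradient {V : E → ℝ} (hV : ContDiff ℝ 1 V) : Continuous (gradient V) := by
  have : Continuous (fderiv ℝ V) := hV.continuous_fderiv one_ne_zero
  exact (InnerProductSpace.toDual ℝ E).symm.continuous.comp this

namespace Setup

variable {V : E → ℝ} {c R d : ℝ} {Vm Vp : Set E}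

lemma WWc (h : Setup V c R d Vm Vp) : Continuous (WW V c) := by
  have := h.hV.continuous
  unfold WW; fun_prop

lemma UUc (h : Setup V c R d Vm Vp) (ε : ℝ) : Continuous (UU V c ε) := by
  have := h.WWc
  unfold UU; fun_prop

lemma infDist_add (h : Setup V c R d Vm Vp) (x : E) : d ≤ infDist x Vm + infDist x Vp := by
  obtain ⟨y, hy, e1⟩ := h.hVm.exists_infDist_eq_dist (h.ex.imp fun _ h => h.1) x
  obtain ⟨z, hz, e2⟩ := h.hVp.exists_infDist_eq_dist (h.ey.imp fun _ h => h.1) x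
  rw [e1, e2]
  have := h.sep y hy z hz
  have := dist_triangle_left y z x
  linarith

lemma lower (h : Setup V c R d Vm Vp) {ρ : ℝ} (hρ : 0 < ρ) :
    ∃ ω > 0, ∀ x, ‖x‖ ≤ R → ρ ≤ infDist x Vm → ρ ≤ infDist x Vp → ω ≤ WW V c x := by
  set K := closedBall (0 : E) R ∩ ({x | ρ ≤ infDist x Vm} ∩ {x | ρ ≤ infDist x Vp}) with hK
  have hKc : IsCompact K := (isCompact_closedBall 0 R).inter_right
    ((isClosed_le continuous_const (continuous_infDist_pt _)).inter
      (isClosed_le continuous_const (continuous_infDist_pt _)))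
  rcases K.eq_empty_or_nonempty with he | hne
  · refine ⟨1, one_pos, fun x h1 h2 h3 => ?_⟩
    have : x ∈ K := ⟨mem_closedBall_zero_iff.2 h1, h2, h3⟩
    rw [he] at this
    exact this.elim
  · obtain ⟨z, ⟨hz1, hz2, hz3⟩, hz⟩ := hKc.exists_isMinOn hne h.WWc.continuousOn
    refine ⟨WW V c z, ?_, fun x h1 h2 h3 => hz ⟨mem_closedBall_zero_iff.2 h1, h2, h3⟩⟩
    by_contra hcon
    have h1 : V z ≤ c := by
      have := le_max_left (V z - c) 0
      unfold WW at hcon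
      linarith
    have hz2' : ρ ≤ infDist z Vm := hz2
    have hz3' : ρ ≤ infDist z Vp := hz3
    rcases (h.split z).1 h1 with h2 | h2
    · rw [infDist_zero_of_mem h2] at hz2'; linarith
    · rw [infDist_zero_of_mem h2] at hz3'; linarith

lemma perEps (h : Setup V c R d Vm Vp) {ε : ℝ} (hε : 0 < ε) :
    ∃ (S : ℝ) (q : ℝ → E) (G : ℝ → ℝ) (Q v : ℝ → E), IsMin (UU V c ε) R Vm Vp S q G ∧ 0 < S ∧
      (∀ t, HasDerivAt Q (v t) t) ∧ (∀ t ∈ Icc 0 S, HasDerivAt v (gradient V (Q t)) t) ∧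
      (∀ t ∈ Icc 0 S, q t = Q t) ∧ (∀ t ∈ Icc 0 S, ‖v t‖ ^ 2 = 2 * UU V c ε (q t)) ∧
      (∀ t ∈ Icc 0 S, c ≤ V (q t)) ∧ (∀ t ∈ Ioo 0 S, ‖q t‖ ≤ R - 1) := by
  obtain ⟨x₀, hx₀, hx₀R⟩ := h.ex
  obtain ⟨y₀, hy₀, hy₀R⟩ := h.ey
  have hU := h.UUc ε
  have hUε : ∀ x, ε ≤ UU V c ε x := fun x => by
    have := le_max_right (V x - c) 0
    unfold UU WW; linarith
  obtain ⟨S, q, G, h1, h2, h3, h4, h5, h6⟩ :=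
    exists_min hU hε hUε h.hVm h.hVp hx₀ hy₀ hx₀R hy₀R
  have hm : IsMin (UU V c ε) R Vm Vp S q G := ⟨h1, h2, h3, h4, h5, h6⟩
  have hS : 0 < S := by
    rcases h1.lt_or_eq with h7 | h7
    · exact h7
    · have := h.sep _ h3 _ h4
      rw [← h7, dist_self] at this
      linarith [h.hd]
  have hpos : ∀ t ∈ Ioo 0 S, c < V (q t) := by
    intro t ht
    by_contra hcon
    rcases (h.split _).1 (not_lt.1 hcon) with h7 | h7
    · exact hm.notMemA hU hε hUε ⟨ht.1, ht.2.le⟩ h7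
    · exact hm.notMemB hU hε hUε ⟨ht.1.le, ht.2⟩ h7
  have hRq : ∀ t ∈ Ioo 0 S, ‖q t‖ ≤ R - 1 := fun t ht => h.hR _ (hpos t ht)
  have hgc := continuous_gradient h.hV
  have hgU : ∀ t ∈ Ioo 0 S, HasGradientAt (UU V c ε) (gradient V (q t)) (q t) := by
    intro t ht
    have e1 : ∀ᶠ x in 𝓝 (q t), UU V c ε x = V x - c + ε := by
      filter_upwards [h.hV.continuous.continuousAt.eventually_const_lt (hpos t ht)] with x hx
      unfold UU WW
      rw [max_eq_left (by linarith)]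
    have e2 : HasGradientAt V (gradient V (q t)) (q t) :=
      (h.hV.differentiable one_ne_zero (q t)).hasGradientAt
    rw [hasGradientAt_iff_hasFDerivAt] at e2 ⊢
    exact ((e2.sub_const c).add_const ε).congr_of_eventuallyEq e1
  have hfc : Continuous (fderiv ℝ V) := h.hV.continuous_fderiv one_ne_zero
  obtain ⟨K, hK⟩ := (isCompact_closedBall (0 : E) R).exists_bound_of_continuousOn hfc.continuousOn
  have hLip : LipschitzOnWith (Real.toNNReal K) (UU V c ε) (closedBall 0 R) := by
    have l1 : LipschitzOnWith (Real.toNNReal K) V (closedBall 0 R) :=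
      (convex_closedBall (0 : E) R).lipschitzOnWith_of_nnnorm_fderiv_le
        (fun x _ => h.hV.differentiable one_ne_zero x)
        (fun x hx => by
          rw [← NNReal.coe_le_coe]
          exact (hK x hx).trans (Real.le_coe_toNNReal K))
    rw [lipschitzOnWith_iff_dist_le_mul] at l1 ⊢
    intro x hx y hy
    refine le_trans ?_ (l1 x hx y hy)
    rw [Real.dist_eq, Real.dist_eq]
    unfold UU WW
    have := abs_max_sub_max_le_abs (V x - c) (V y - c) 0
    have e1 : max (V x - c) 0 + ε - (max (V y - c) 0 + ε) = max (V x - c) 0 - max (V y - c) 0 := by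
      ring
    have e2 : V x - c - (V y - c) = V x - V y := by ring
    rw [e1, ← e2]
    exact this
  obtain ⟨Q, v, hQ, hv, hqQ⟩ := hm.regular hU hLip hgc hgU hRq hS
  have hvc : Continuous v := continuous_iff_continuousAt.2 fun t => (hv t).continuousAt
  have hen := hm.energy hU hε hUε hS hvc hQ hqQ
  refine ⟨S, q, G, Q, v, hm, hS, hQ, fun t ht => ?_, hqQ, hen, ?_, hRq⟩
  · rw [← hqQ t ht]; exact hv t
  · have hcl : IsClosed {t | c ≤ V (q t)} :=
      isClosed_le continuous_const (h.hV.continuous.comp hm.continuous)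
    have : closure (Ioo 0 S) ⊆ {t | c ≤ V (q t)} :=
      closure_minimal (fun t ht => (hpos t ht).le) hcl
    rw [closure_Ioo hS.ne] at this
    exact this

lemma center (h : Setup V c R d Vm Vp) {U : E → ℝ} (hU : Continuous U) {ε C k : ℝ} (hε : 0 < ε)
    (hUε : ∀ x, ε ≤ U x) (hC : ∀ z, ‖z‖ ≤ R → U z ≤ C)
    (hk : ∀ x, ‖x‖ ≤ R → d / 4 ≤ infDist x Vm → d / 4 ≤ infDist x Vp → k ≤ U x)
    {S : ℝ} {q : ℝ → E} {G : ℝ → ℝ} (hm : IsMin U R Vm Vp S q G) {δ : ℝ} (hδ : 0 < δ)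
    (hδL : √(2 * C) * δ ≤ d / 4) :
    ∃ s, δ ≤ s ∧ s + δ ≤ S ∧ k * δ ≤ Act U q G (s - δ) s ∧ k * δ ≤ Act U q G s (s + δ) := by
  have hd := h.hd
  have hqc := hm.continuous
  have hf : Continuous fun t => infDist (q t) Vm - infDist (q t) Vp :=
    ((continuous_infDist_pt _).comp hqc).sub ((continuous_infDist_pt _).comp hqc)
  have := intermediate_value_Icc hm.hS hf.continuousOn
  obtain ⟨s, hs, hs0⟩ : (0 : ℝ) ∈ (fun t => infDist (q t) Vm - infDist (q t) Vp) '' Icc 0 S := by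
    apply this
    simp only [mem_Icc]
    rw [infDist_zero_of_mem hm.hA, infDist_zero_of_mem hm.hB]
    have h1 : 0 ≤ infDist (q 0) Vp := infDist_nonneg
    have h2 : 0 ≤ infDist (q S) Vm := infDist_nonneg
    constructor <;> linarith
  simp only at hs0
  have hadd := h.infDist_add (q s)
  have hnear : ∀ t ∈ Icc 0 S, |t - s| ≤ δ → d / 4 ≤ infDist (q t) Vm ∧ d / 4 ≤ infDist (q t) Vp := by
    intro t ht hts
    have hl : dist (q s) (q t) ≤ d / 4 := by
      refine le_trans ?_ hδL
      rcases le_total s t with hst | hst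
      · rw [abs_of_nonneg (sub_nonneg.2 hst)] at hts
        rw [dist_eq_norm, norm_sub_rev]
        exact (hm.lip hU hε hUε hC hs.1 hst ht.2).trans (by gcongr)
      · rw [abs_sub_comm, abs_of_nonneg (sub_nonneg.2 hst)] at hts
        rw [dist_eq_norm]
        exact (hm.lip hU hε hUε hC ht.1 hst hs.2).trans (by gcongr)
    have h1 : infDist (q s) Vm ≤ infDist (q t) Vm + dist (q s) (q t) := infDist_le_infDist_add_dist
    have h2 : infDist (q s) Vp ≤ infDist (q t) Vp + dist (q s) (q t) := infDist_le_infDist_add_dist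
    constructor <;> linarith
  have hs1 : δ ≤ s := by
    by_contra hcon
    have := (hnear 0 ⟨le_rfl, hm.hS⟩ (by
      rw [zero_sub, abs_neg, abs_of_nonneg hs.1]; exact (not_le.1 hcon).le)).1
    rw [infDist_zero_of_mem hm.hA] at this
    linarith
  have hs2 : s + δ ≤ S := by
    by_contra hcon
    have := (hnear S ⟨hm.hS, le_rfl⟩ (by
      rw [abs_of_nonneg (sub_nonneg.2 hs.2)]; linarith)).2
    rw [infDist_zero_of_mem hm.hB] at this
    linarith
  refine ⟨s, hs1, hs2, ?_, ?_⟩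
  · have := hm.act_lower hU (u := k) (a := s - δ) (b := s) (by linarith) (fun t ht => by
      have := hnear t ⟨by linarith [ht.1], by linarith [ht.2]⟩
        (by rw [abs_le]; constructor <;> linarith [ht.1, ht.2])
      exact hk _ (hm.ball t) this.1 this.2)
    simpa using this
  · have := hm.act_lower hU (u := k) (a := s) (b := s + δ) (by linarith) (fun t ht => by
      have := hnear t ⟨by linarith [ht.1], by linarith [ht.2]⟩
        (by rw [abs_le]; constructor <;> linarith [ht.1, ht.2])
      exact hk _ (hm.ball t) this.1 this.2)
    simpa using this

lemma reach (h : Setup V c R d Vm Vp) {U : E → ℝ} (hU : Continuous U) {ε C κ δ s M ρ ω : ℝ}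
    (hε : 0 < ε) (hUε : ∀ x, ε ≤ U x) (hC : ∀ z, ‖z‖ ≤ R → U z ≤ C)
    {S : ℝ} {q : ℝ → E} {G : ℝ → ℝ} (hm : IsMin U R Vm Vp S q G) (hδ : 0 < δ)
    (hs1 : δ ≤ s) (hs2 : s + δ ≤ S)
    (ha1 : κ ≤ Act U q G (s - δ) s) (ha2 : κ ≤ Act U q G s (s + δ))
    (hRq : ∀ t ∈ Ioo 0 S, ‖q t‖ ≤ R - 1) (hM : Act U q G 0 S ≤ M) (hM0 : 0 ≤ M)
    (hρ : 0 < ρ) (hρ1 : ρ ≤ 1) (hρκ : (2⁻¹ + C) * ρ < κ) (hω : 0 < ω)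
    (hω' : ∀ x, ‖x‖ ≤ R → ρ ≤ infDist x Vm → ρ ≤ infDist x Vp → ω ≤ U x) :
    (∃ t ∈ Icc 0 S, |t - s| ≤ M / ω + 1 ∧ infDist (q t) Vm ≤ ρ) ∧
    (∃ t ∈ Icc 0 S, |t - s| ≤ M / ω + 1 ∧ infDist (q t) Vp ≤ ρ) := by
  set B := M / ω + 1 with hB
  have hB0 : 0 < B := by positivity
  have hBω : ω * B = M + ω := by rw [hB]; field_simp
  have hU0 : ∀ x, 0 ≤ U x := fun x => hε.le.trans (hUε x)
  have hC0 : 0 ≤ C := (hU0 (q 0)).trans (hC _ (hm.ball 0))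
  have hmono : ∀ a b a' b', 0 ≤ a → a ≤ a' → a' ≤ b' → b' ≤ b → b ≤ S →
      Act U q G a' b' ≤ Act U q G a b := by
    intro a b a' b' h1 h2 h3 h4 h5
    rw [Act.add (hm.adm 0 S) hU h1 h2 (h3.trans h4) h5,
      Act.add (hm.adm 0 S) hU (h1.trans h2) h3 h4 h5]
    have := Act.nonneg (hm.adm a a') hU0 h2
    have := Act.nonneg (hm.adm b' b) hU0 h4
    linarith
  constructor
  · by_cases hsB : s ≤ B
    · refine ⟨0, ⟨le_rfl, hm.hS⟩, ?_, ?_⟩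
      · rw [zero_sub, abs_neg, abs_of_nonneg (by linarith)]; exact hsB
      · rw [infDist_zero_of_mem hm.hA]; exact hρ.le
    push Not at hsB
    obtain ⟨t, ht, hUt⟩ : ∃ t ∈ Icc (s - B) s, U (q t) < ω := by
      by_contra! hcon
      have h1 := hm.act_lower hU (by linarith : s - B ≤ s) hcon
      have h2 := hmono 0 S (s - B) s le_rfl (by linarith) (by linarith) (by linarith) le_rfl
      have h3 : ω * (s - (s - B)) = M + ω := by rw [← hBω]; ring
      linarith
    have ht0 : t ∈ Ioo 0 S := ⟨by linarith [ht.1], by linarith [ht.2]⟩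
    refine ⟨t, ⟨ht0.1.le, ht0.2.le⟩, ?_, ?_⟩
    · rw [abs_le]; constructor <;> linarith [ht.1, ht.2]
    by_contra hcon
    have hp : infDist (q t) Vp < ρ := by
      by_contra hcon2
      have := hω' _ (hm.ball t) (not_le.1 hcon).le (not_lt.1 hcon2)
      linarith
    obtain ⟨y, hy, e1⟩ := h.hVp.exists_infDist_eq_dist (h.ey.imp fun _ h => h.1) (q t)
    rw [e1, dist_eq_norm, norm_sub_rev] at hp
    have hyR : ‖y‖ ≤ R := by
      have h1 : y = q t + (y - q t) := by abel
      rw [h1]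
      refine (norm_add_le _ _).trans ?_
      linarith [hRq t ht0]
    have h1 := hm.optR hU ht0.1.le ht0.2.le hy (Cost.segment hU hC (hm.ball t) hyR)
    have h2 := hmono t S s (s + δ) ht0.1.le ht.2 (by linarith) hs2 le_rfl
    have h3 : (2⁻¹ + C) * ‖y - q t‖ ≤ (2⁻¹ + C) * ρ := by gcongr
    linarith
  · by_cases hsB : S - s ≤ B
    · refine ⟨S, ⟨hm.hS, le_rfl⟩, ?_, ?_⟩
      · rw [abs_of_nonneg (by linarith)]; exact hsB
      · rw [infDist_zero_of_mem hm.hB]; exact hρ.le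
    push Not at hsB
    obtain ⟨t, ht, hUt⟩ : ∃ t ∈ Icc s (s + B), U (q t) < ω := by
      by_contra! hcon
      have h1 := hm.act_lower hU (by linarith : s ≤ s + B) hcon
      have h2 := hmono 0 S s (s + B) le_rfl (by linarith) (by linarith) (by linarith) le_rfl
      have h3 : ω * (s + B - s) = M + ω := by rw [← hBω]; ring
      linarith
    have ht0 : t ∈ Ioo 0 S := ⟨by linarith [ht.1], by linarith [ht.2]⟩
    refine ⟨t, ⟨ht0.1.le, ht0.2.le⟩, ?_, ?_⟩
    · rw [abs_le]; constructor <;> linarith [ht.1, ht.2]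
    by_contra hcon
    have hp : infDist (q t) Vm < ρ := by
      by_contra hcon2
      have := hω' _ (hm.ball t) (not_lt.1 hcon2) (not_le.1 hcon).le
      linarith
    obtain ⟨y, hy, e1⟩ := h.hVm.exists_infDist_eq_dist (h.ex.imp fun _ h => h.1) (q t)
    rw [e1, dist_eq_norm] at hp
    have hyR : ‖y‖ ≤ R := by
      have h1 : y = q t - (q t - y) := by abel
      rw [h1]
      refine (norm_sub_le _ _).trans ?_
      linarith [hRq t ht0]
    have h1 := hm.optL hU ht0.1.le ht0.2.le hy (Cost.segment hU hC hyR (hm.ball t))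
    have h2 := hmono 0 t (s - δ) s le_rfl (by linarith) (by linarith) ht.1 ht0.2.le
    have h3 : (2⁻¹ + C) * ‖q t - y‖ ≤ (2⁻¹ + C) * ρ := by gcongr
    linarith

end Setup

end Duff

namespace Duff

variable {E : Type*} [NormedAddCommGroup E] [InnerProductSpace ℝ E] [ProperSpace E]

namespace Setup

variable {V : E → ℝ} {c R d : ℝ} {Vm Vp : Set E}

/-- Uniform approximating family, for the parameter `ε`. -/
lemma approx (h : Setup V c R d Vm Vp) :
    ∃ L M σ : ℝ, 0 ≤ L ∧ 0 ≤ M ∧ 0 < σ ∧ ∃ Br : ℝ → ℝ, ∃ ρ₀ > 0, ∀ ε, 0 < ε → ε ≤ 1 →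
    ∃ P w : ℝ → E, (∀ t, ‖P t‖ ≤ R) ∧ (∀ t, ‖w t‖ ≤ L) ∧
      (∀ t, ‖w t‖ ^ 2 = 2 * (V (P t) - c + ε)) ∧
      (∀ a b, a ≤ b → b - a < σ → ‖P b - P a‖ ≤ L * (b - a)) ∧
      (∀ a b, a ≤ b → b - a < σ →
        ‖P b - P a - (b - a) • w a‖ ≤ (M * (b - a) + 2 * √(2 * ε)) * (b - a)) ∧
      (∀ a b η, a ≤ b → b - a < σ →
        (∀ x y, ‖x‖ ≤ R → ‖y‖ ≤ R → ‖x - y‖ ≤ L * (b - a) →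
          ‖gradient V x - gradient V y‖ ≤ η) →
        ‖w b - w a - (b - a) • gradient V (P a)‖ ≤ η * (b - a) + 2 * √(2 * ε)) ∧
      ∀ ρ, 0 < ρ → ρ ≤ ρ₀ → (∃ t, |t| ≤ Br ρ ∧ infDist (P t) Vm ≤ ρ) ∧
        (∃ t, |t| ≤ Br ρ ∧ infDist (P t) Vp ≤ ρ) := by
  obtain ⟨x₀, hx₀, hx₀R⟩ := h.ex
  obtain ⟨y₀, hy₀, hy₀R⟩ := h.ey
  have hd := h.hd
  have hW0 : ∀ x, 0 ≤ WW V c x := fun x => le_max_right _ _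
  obtain ⟨C', hC'⟩ := (isCompact_closedBall (0 : E) R).bddAbove_image h.WWc.continuousOn
  have hC'' : ∀ z, ‖z‖ ≤ R → WW V c z ≤ C' := fun z hz =>
    hC' (mem_image_of_mem _ (mem_closedBall_zero_iff.2 hz))
  have hC'0 : 0 ≤ C' := (hW0 x₀).trans (hC'' x₀ hx₀R)
  set C := C' + 1 with hCdef
  obtain ⟨M, hM⟩ := (isCompact_closedBall (0 : E) R).exists_bound_of_continuousOn
    (continuous_gradient h.hV).continuousOn
  have hM' : ∀ z, ‖z‖ ≤ R → ‖gradient V z‖ ≤ M := fun z hz => hM z (mem_closedBall_zero_iff.2 hz)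
  have hM0 : 0 ≤ M := (norm_nonneg _).trans (hM' _ hx₀R)
  set L := √(2 * C) with hL
  have hLpos : 0 < L := Real.sqrt_pos.2 (by positivity)
  set δ := d / (4 * L) with hδ
  have hδ0 : 0 < δ := by positivity
  have hLδ : L * δ ≤ d / 4 := by rw [hδ]; field_simp; exact le_rfl
  obtain ⟨k, hk0, hk⟩ := h.lower (ρ := d / 4) (by positivity)
  have hlow : ∀ ρ, ∃ ω > 0, 0 < ρ → ∀ x, ‖x‖ ≤ R → ρ ≤ infDist x Vm → ρ ≤ infDist x Vp →
      ω ≤ WW V c x := by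
    intro ρ
    by_cases hρ : 0 < ρ
    · obtain ⟨ω, h1, h2⟩ := h.lower hρ
      exact ⟨ω, h1, fun _ => h2⟩
    · exact ⟨1, one_pos, fun h => (hρ h).elim⟩
  choose ω hω0 hω using hlow
  set A := (2⁻¹ + C) * ‖y₀ - x₀‖ with hA
  have hA0 : 0 ≤ A := by positivity
  refine ⟨L, M, δ, hLpos.le, hM0, hδ0, fun ρ => A / ω ρ + 1, min 1 (k * δ / (2 * (2⁻¹ + C))),
    lt_min one_pos (by positivity), ?_⟩
  intro ε hε hε1
  obtain ⟨S, q, G, Q, v, hm, hS, hQ, hv, hqQ, hen, hcV, hRq⟩ := h.perEps hε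
  have hU := h.UUc ε
  have hUε : ∀ x, ε ≤ UU V c ε x := fun x => by
    have := hW0 x
    unfold UU; linarith
  have hWU : ∀ x, WW V c x ≤ UU V c ε x := fun x => by unfold UU; linarith
  have hC : ∀ z, ‖z‖ ≤ R → UU V c ε z ≤ C := fun z hz => by
    have := hC'' z hz
    unfold UU; linarith
  obtain ⟨s, hs1, hs2, ha1, ha2⟩ := h.center hU hε hUε hC
    (fun x h1 h2 h3 => (hk x h1 h2 h3).trans (hWU x)) hm hδ0 hLδ
  have hUq : ∀ t ∈ Icc 0 S, UU V c ε (q t) = V (q t) - c + ε := by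
    intro t ht
    unfold UU WW
    rw [max_eq_left (by linarith [hcV t ht])]
  have hend : ∀ x ∈ Icc 0 S, V (q x) ≤ c → ‖v x‖ ≤ √(2 * ε) := by
    intro x hx hVx
    apply Real.le_sqrt_of_sq_le
    rw [hen x hx, hUq x hx]
    linarith
  have hLv : ∀ t ∈ Icc 0 S, ‖v t‖ ≤ L := by
    intro t ht
    apply Real.le_sqrt_of_sq_le
    rw [hen t ht]
    have := hC _ (hm.ball t)
    linarith
  have hQR : ∀ t ∈ Icc 0 S, ‖Q t‖ ≤ R := fun t ht => by rw [← hqQ t ht]; exact hm.ball t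
  have hl : (0 : ℝ) ∈ Icc 0 S := ⟨le_rfl, hS.le⟩
  have hr : S ∈ Icc 0 S := ⟨hS.le, le_rfl⟩
  obtain ⟨P, w, f0, f1, f2, f3, f4⟩ := fold hS hQ hv hLv (fun t ht => hM' _ (hQR t ht))
    (hend 0 hl ((h.split _).2 (Or.inl hm.hA))) (hend S hr ((h.split _).2 (Or.inr hm.hB)))
  have hσ : ∀ a b, b - a < δ → (b + s) - (a + s) < S := by
    intro a b hab; linarith
  have hsub : ∀ a b : ℝ, (b + s) - (a + s) = b - a := fun a b => by ring
  refine ⟨fun t => P (t + s), fun t => w (t + s), ?_, ?_, ?_, ?_, ?_, ?_, ?_⟩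
  · intro t
    obtain ⟨x, hx, e1, -⟩ := f1 (t + s)
    simp only
    rw [e1]; exact hQR x hx
  · intro t
    obtain ⟨x, hx, -, e2⟩ := f1 (t + s)
    simp only
    rw [e2]; exact hLv x hx
  · intro t
    obtain ⟨x, hx, e1, e2⟩ := f1 (t + s)
    simp only
    rw [e1, e2, hen x hx, hUq x hx, hqQ x hx]
  · intro a b hab hlt
    have := f2 (a + s) (b + s) (by linarith) (hσ a b hlt)
    rwa [hsub] at this
  · intro a b hab hlt
    have := f3 (a + s) (b + s) (by linarith) (hσ a b hlt)
    rwa [hsub] at this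
  · intro a b η hab hlt hη
    have := f4 (a + s) (b + s) η (by linarith) (hσ a b hlt) (fun x hx y hy hxy =>
      hη _ _ (hQR x hx) (hQR y hy) (by rwa [hsub] at hxy))
    rwa [hsub] at this
  · intro ρ hρ hρ₀
    have hρ1 := hρ₀.trans (min_le_left _ _)
    have hρ2 := hρ₀.trans (min_le_right _ _)
    have hact : Act (UU V c ε) q G 0 S ≤ A :=
      hm.hmin _ hx₀ _ hy₀ _ (Cost.segment hU hC hx₀R hy₀R)
    have hρκ : (2⁻¹ + C) * ρ < k * δ := by
      rw [le_div_iff₀ (by positivity)] at hρ2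
      have : 0 < k * δ := by positivity
      nlinarith
    obtain ⟨⟨t, ht, ht1, ht2⟩, ⟨t', ht', ht1', ht2'⟩⟩ := h.reach hU hε hUε hC hm hδ0 hs1 hs2 ha1 ha2 hRq
      hact hA0 hρ hρ1 hρκ (hω0 ρ) (fun x h1 h2 h3 => (hω ρ hρ x h1 h2 h3).trans (hWU x))
    refine ⟨⟨t - s, ht1, ?_⟩, ⟨t' - s, ht1', ?_⟩⟩
    · simp only [sub_add_cancel]
      rwa [f0 t ht, ← hqQ t ht]
    · simp only [sub_add_cancel]
      rwa [f0 t' ht', ← hqQ t' ht']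

theorem connecting (h : Setup V c R d Vm Vp) :
    ∃ Q v : ℝ → E, (∀ t, HasDerivAt Q (v t) t) ∧ (∀ t, HasDerivAt v (gradient V (Q t)) t) ∧
      (∀ t, ‖v t‖ ^ 2 = 2 * (V (Q t) - c)) ∧
      (∀ ρ > 0, ∃ t, infDist (Q t) Vm ≤ ρ) ∧ (∀ ρ > 0, ∃ t, infDist (Q t) Vp ≤ ρ) := by
  obtain ⟨L, M, σ, hL, hM, hσ, Br, ρ₀, hρ₀, hap⟩ := h.approx
  have hap' : ∀ k : ℕ, _ := fun k => hap (1 / ((k : ℝ) + 1)) (by positivity)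
    (by rw [div_le_one (by positivity)]; linarith [(Nat.cast_nonneg k : (0 : ℝ) ≤ k)])
  choose P w hPR hwL hen hE1 hE2 hE3 hreach using hap'
  have hεlim : Tendsto (fun k : ℕ => 1 / ((k : ℝ) + 1)) atTop (𝓝 0) :=
    tendsto_one_div_add_atTop_nhds_zero_nat
  have he : Tendsto (fun k : ℕ => √(2 * (1 / ((k : ℝ) + 1)))) atTop (𝓝 0) := by
    have := (hεlim.const_mul 2).sqrt
    simpa using this
  obtain ⟨Q, v, hQ, hv, hlim⟩ := limit (continuous_gradient h.hV) hσ he hL hM hPR hwL hE1 hE2 hE3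
  have key : ∀ (T : Set E), (∀ ρ, 0 < ρ → ρ ≤ ρ₀ → ∀ k, ∃ t, |t| ≤ Br ρ ∧ infDist (P k t) T ≤ ρ) →
      ∀ ρ > 0, ∃ t, infDist (Q t) T ≤ ρ := by
    intro T hT ρ' hρ'
    obtain ⟨ρ, hρ, hρ1, hρ2⟩ : ∃ ρ, 0 < ρ ∧ ρ ≤ ρ₀ ∧ ρ ≤ ρ' :=
      ⟨min ρ₀ ρ', lt_min hρ₀ hρ', min_le_left _ _, min_le_right _ _⟩
    choose τ hτ1 hτ2 using hT ρ hρ hρ1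
    obtain ⟨t, -, ht⟩ := ultra_lim (hyperfilter ℕ) τ (isCompact_Icc (a := -Br ρ) (b := Br ρ))
      (fun k => abs_le.1 (hτ1 k))
    refine ⟨t, le_trans ?_ hρ2⟩
    have h1 : Tendsto (fun k => infDist (P k t) T) (hyperfilter ℕ) (𝓝 (infDist (Q t) T)) :=
      ((continuous_infDist_pt T).tendsto _).comp (hlim t).1
    have h0 : Tendsto (fun k => |τ k - t|) (hyperfilter ℕ) (𝓝 0) := by
      have := (ht.sub_const t).abs
      simpa using this
    have h2 : Tendsto (fun k => ρ + L * |τ k - t|) (hyperfilter ℕ) (𝓝 (ρ + L * 0)) :=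
      (h0.const_mul L).const_add ρ
    have h3 := le_of_tendsto_of_tendsto h1 h2 (by
      filter_upwards [h0.eventually_lt_const hσ] with k hk
      have l1 : infDist (P k t) T ≤ infDist (P k (τ k)) T + dist (P k t) (P k (τ k)) :=
        infDist_le_infDist_add_dist
      have l2 : dist (P k t) (P k (τ k)) ≤ L * |τ k - t| := by
        rcases le_total t (τ k) with hle | hle
        · rw [abs_of_nonneg (sub_nonneg.2 hle)] at hk ⊢
          rw [dist_comm, dist_eq_norm]
          exact hE1 k _ _ hle hk
        · rw [abs_sub_comm, abs_of_nonneg (sub_nonneg.2 hle)] at hk ⊢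
          rw [dist_eq_norm]
          exact hE1 k _ _ hle hk
      linarith [hτ2 k])
    simpa using h3
  refine ⟨Q, v, hQ, hv, ?_, key Vm fun ρ h1 h2 k => (hreach k ρ h1 h2).1,
    key Vp fun ρ h1 h2 k => (hreach k ρ h1 h2).2⟩
  intro t
  have h1 := ((hlim t).2.norm.pow 2)
  have h2 : Tendsto (fun k => 2 * (V (P k t) - c + 1 / ((k : ℝ) + 1))) (hyperfilter ℕ)
      (𝓝 (2 * (V (Q t) - c + 0))) :=
    (((((h.hV.continuous.tendsto _).comp (hlim t).1).sub_const c).add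
      (hεlim.mono_left Nat.hyperfilter_le_atTop)).const_mul 2)
  have h3 : ‖v t‖ ^ 2 = 2 * (V (Q t) - c + 0) :=
    tendsto_nhds_unique h1 (h2.congr fun k => (hen k t).symm)
  simpa using h3

end Setup

end Duff

namespace Duff

variable {E : Type*} [NormedAddCommGroup E] [InnerProductSpace ℝ E] [ProperSpace E]

lemma mem_closure_pos {V : E → ℝ} (hV : ContDiff ℝ 1 V) {y : E} (h0 : 0 ≤ V y)
    (hg : gradient V y ≠ 0) : y ∈ closure {x | 0 < V x} := by
  set w := gradient V y with hw
  have h1 : HasFDerivAt V (InnerProductSpace.toDual ℝ E w) y :=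
    (hV.differentiable one_ne_zero y).hasGradientAt.hasFDerivAt
  have hl : HasDerivAt (fun r : ℝ => y + r • w) w 0 := by
    have := ((hasDerivAt_id (0 : ℝ)).smul_const w).const_add y
    simpa using this
  have h2 : HasDerivAt (fun r : ℝ => V (y + r • w)) (‖w‖ ^ 2) 0 := by
    have h1' : HasFDerivAt V (InnerProductSpace.toDual ℝ E w) (y + (0 : ℝ) • w) := by simpa using h1
    have := h1'.comp_hasDerivAt (0 : ℝ) hl
    simpa [Function.comp_def] using this
  have hpos : 0 < ‖w‖ ^ 2 := by have := norm_pos_iff.2 hg; positivity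
  have h3 : ∀ᶠ r in 𝓝[>] (0 : ℝ), 0 < slope (fun r : ℝ => V (y + r • w)) 0 r := by
    have := (hasDerivAt_iff_tendsto_slope.1 h2).eventually_const_lt hpos
    exact this.filter_mono (nhdsWithin_mono _ (fun r hr => ne_of_gt hr))
  have h4 : ∀ᶠ r in 𝓝[>] (0 : ℝ), y + r • w ∈ {x | 0 < V x} := by
    filter_upwards [h3, self_mem_nhdsWithin] with r hr hr0
    have hr0' : 0 < r := hr0
    rw [slope_def_field, sub_zero] at hr
    have := (div_pos_iff_of_pos_right hr0').1 hr
    simp only [zero_smul, add_zero] at this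
    show 0 < V (y + r • w)
    linarith
  have h5 : Tendsto (fun r : ℝ => y + r • w) (𝓝[>] 0) (𝓝 y) := by
    have : Tendsto (fun r : ℝ => y + r • w) (𝓝 0) (𝓝 (y + (0 : ℝ) • w)) :=
      Continuous.tendsto (by fun_prop) 0
    simp only [zero_smul, add_zero] at this
    exact this.mono_left nhdsWithin_le_nhds
  exact mem_closure_of_tendsto h5 h4

lemma mem_closure_of_gamma {V : E → ℝ} {c R d : ℝ} {Vm Vp : Set E} (h : Setup V c R d Vm Vp)
    (hc : 0 ≤ c)
    (hgrad : ∀ x ∈ frontier ({x : E | 0 < V x} ∪ {0}), gradient V x ≠ 0)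
    {q : ℝ → E} (hq : Continuous q) (hVq : ∀ t, c ≤ V (q t))
    (hm : ∃ t, infDist (q t) Vm < d) (hp : ∃ t, infDist (q t) Vp < d) (t : ℝ) :
    q t ∈ closure ({x : E | 0 < V x} ∪ {0}) := by
  rcases hc.lt_or_eq with hc | hc
  · exact subset_closure (Or.inl (hc.trans_le (hVq t)))
  set A : Set ℝ := {t | q t ∈ closure ({x : E | 0 < V x} ∪ {0})} with hA
  have hcl : IsClosed A := isClosed_closure.preimage hq
  have hop : IsOpen A := by
    rw [isOpen_iff_mem_nhds]
    intro s hs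
    by_cases hIntg : q s ∈ interior ({x : E | 0 < V x} ∪ {0})
    · have : ∀ᶠ r in 𝓝 s, q r ∈ interior ({x : E | 0 < V x} ∪ {0}) :=
        hq.continuousAt.eventually (isOpen_interior.mem_nhds hIntg)
      filter_upwards [this] with r hr
      exact subset_closure (interior_subset hr)
    · have h1 := hgrad (q s) ⟨hs, hIntg⟩
      have h2 : ∀ᶠ r in 𝓝 s, gradient V (q r) ≠ 0 :=
        ((continuous_gradient h.hV).comp hq).continuousAt.eventually_ne h1
      filter_upwards [h2] with r hr
      exact closure_mono subset_union_left (mem_closure_pos h.hV (hc.le.trans (hVq r)) hr)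
  rcases isClopen_iff.1 ⟨hcl, hop⟩ with he | he
  · exfalso
    have hle : ∀ t, q t ∈ Vm ∨ q t ∈ Vp := by
      intro t
      rw [← h.split]
      by_contra hcon
      have : t ∈ A := subset_closure (Or.inl (by
        show 0 < V (q t)
        linarith [not_le.1 hcon]))
      rw [he] at this
      exact this
    have hno : ∀ t, q t ∈ Vm → q t ∈ Vp → False := by
      intro t h1 h2
      have := h.sep _ h1 _ h2
      rw [dist_self] at this
      linarith [h.hd]
    have hcm : IsClosed {t | q t ∈ Vm} := h.hVm.preimage hq
    have hcp : IsClosed {t | q t ∈ Vp} := h.hVp.preimage hq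
    have hom : IsOpen {t | q t ∈ Vm} := by
      have : {t | q t ∈ Vm} = {t | q t ∈ Vp}ᶜ := by
        ext t
        constructor
        · intro h1 h2; exact hno t h1 h2
        · intro h1; exact (hle t).resolve_right h1
      rw [this]
      exact hcp.isOpen_compl
    rcases isClopen_iff.1 ⟨hcm, hom⟩ with h1 | h1
    · obtain ⟨t, ht⟩ := hm
      have h2 : q t ∈ Vp := (hle t).resolve_left fun h2 => by
        have : t ∈ {t | q t ∈ Vm} := h2
        rw [h1] at this; exact this
      have := h.infDist_add (q t)
      rw [infDist_zero_of_mem h2] at this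
      linarith
    · obtain ⟨t, ht⟩ := hp
      have h2 : q t ∈ Vm := by
        have : t ∈ {t | q t ∈ Vm} := by rw [h1]; trivial
        exact this
      have := h.infDist_add (q t)
      rw [infDist_zero_of_mem h2] at this
      linarith
  · have : t ∈ A := by rw [he]; trivial
    exact this

end Duff

/-- Proposition 3.3 (Duffing-like systems): for every `c ≥ 0` such that `(V^c)` holds,
coercivity (1.7) holds and there is a connecting solution with energy `−c`. -/
theorem duffing_existence {N : ℕ} (hN : 0 < N) (V : Euc N → ℝ) (hV : ContDiff ℝ 1 V)
    (r₀ : ℝ) (hr₀ : 0 < r₀) (hV0 : V 0 = 0)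
    (hVpos : ∀ x ∈ closedBall (0 : Euc N) (4 * r₀), x ≠ 0 → 0 < V x)
    (hC₀bdd : Bornology.IsBounded ({x : Euc N | 0 < V x} ∪ {0}))
    (hC₀grad : ∀ x ∈ frontier ({x : Euc N | 0 < V x} ∪ {0}), gradient V x ≠ 0)
    (c : ℝ) (hc : 0 ≤ c)
    (Vm Vp : Set (Euc N)) (hVm : IsClosed Vm) (hVp : IsClosed Vp)
    (hsplit : {x | V x ≤ c} = Vm ∪ Vp) (hsep : 0 < setDist Vm Vp) :
    (∃ R > (0 : ℝ), Coercive V c Vm Vp R) ∧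
    ∃ q : ℝ → Euc N, ContDiff ℝ 2 q ∧
      (∀ t, deriv (deriv q) t = gradient V (q t)) ∧
      (⨅ t : ℝ, infDist (q t) Vm) = 0 ∧
      (⨅ t : ℝ, infDist (q t) Vp) = 0 ∧
      (∀ t, 2⁻¹ * ‖deriv q t‖ ^ 2 - V (q t) = -c) := by
  have hne : Vm.Nonempty ∧ Vp.Nonempty := by
    rw [← prod_nonempty_iff, nonempty_iff_ne_empty]
    intro he
    unfold setDist at hsep
    rw [he, image_empty, Real.sInf_empty] at hsep
    exact lt_irrefl _ hsep
  obtain ⟨⟨x₀, hx₀⟩, ⟨y₀, hy₀⟩⟩ := hne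
  obtain ⟨R₀, hR₀⟩ := hC₀bdd.subset_closedBall (0 : Euc N)
  obtain ⟨R, hRpos, hR1, hR2, hR3⟩ : ∃ R : ℝ, 0 < R ∧ R₀ + 1 ≤ R ∧ ‖x₀‖ ≤ R ∧ ‖y₀‖ ≤ R :=
    ⟨max 1 (max (R₀ + 1) (max ‖x₀‖ ‖y₀‖)), lt_max_of_lt_left one_pos,
      (le_max_left _ _).trans (le_max_right _ _),
      ((le_max_left _ _).trans (le_max_right _ _)).trans (le_max_right _ _),
      ((le_max_right _ _).trans (le_max_right _ _)).trans (le_max_right _ _)⟩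
  have hset : Duff.Setup V c R (setDist Vm Vp) Vm Vp := by
    refine ⟨hV, hVm, hVp, ?_, hsep, ?_, ?_, ⟨x₀, hx₀, hR2⟩, ⟨y₀, hy₀, hR3⟩⟩
    · intro x
      have : x ∈ {x | V x ≤ c} ↔ x ∈ Vm ∪ Vp := by rw [hsplit]
      exact this
    · intro x hx y hy
      refine csInf_le ⟨0, ?_⟩ ⟨(x, y), ⟨hx, hy⟩, rfl⟩
      rintro _ ⟨p, -, rfl⟩
      exact dist_nonneg
    · intro x hx
      have := mem_closedBall_zero_iff.1 (hR₀ (Or.inl (hc.trans_lt hx)))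
      linarith
  refine ⟨⟨R, hRpos, ?_⟩, ?_⟩
  · have hb : ∀ p ∈ Gamma V c Vm Vp, ∀ t, ‖p.1 t‖ ≤ R := by
      rintro p ⟨⟨hl, -, hIntg⟩, hVq, hm, hp⟩ t
      have hq : Continuous p.1 := by
        have h1 : p.1 = fun t => p.1 0 + ∫ s in (0 : ℝ)..t, p.2 s := by
          funext t
          rw [← hIntg 0 t]; abel
        rw [h1]
        exact continuous_const.add (intervalIntegral.continuous_primitive
          (fun a b => (MeasureTheory.LocallyIntegrable.integrableOn_isCompact hl
            (isCompact_uIcc (a := a) (b := b))).intervalIntegrable) 0)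
      have h2 := Duff.mem_closure_of_gamma hset hc hC₀grad hq hVq (hm _ hsep).exists
        (hp _ hsep).exists t
      have h3 : closure ({x : Euc N | 0 < V x} ∪ {0}) ⊆ closedBall 0 R₀ :=
        closure_minimal hR₀ isClosed_closedBall
      have := mem_closedBall_zero_iff.1 (h3 h2)
      linarith
    unfold Coercive mc
    apply le_antisymm
    · exact le_iInf fun p => le_iInf fun hp => le_iInf fun _ => iInf₂_le p hp
    · refine le_iInf fun p => le_iInf fun hp => ?_
      exact (iInf_le _ p).trans ((iInf_le _ hp).trans (iInf_le _ (hb p hp)))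
  · obtain ⟨Q, v, hQ, hv, hen, h1, h2⟩ := hset.connecting
    have hdQ : deriv Q = v := funext fun t => (hQ t).deriv
    have hdv : deriv v = fun t => gradient V (Q t) := funext fun t => (hv t).deriv
    have hQc : Continuous Q := continuous_iff_continuousAt.2 fun t => (hQ t).continuousAt
    have hinf : ∀ T : Set (Euc N), (∀ ρ > 0, ∃ t, infDist (Q t) T ≤ ρ) →
        (⨅ t : ℝ, infDist (Q t) T) = 0 := by
      intro T hT
      have hbdd : BddBelow (range fun t : ℝ => infDist (Q t) T) :=
        ⟨0, by rintro _ ⟨t, rfl⟩; exact infDist_nonneg⟩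
      apply le_antisymm
      · refine le_of_forall_pos_le_add fun ρ hρ => ?_
        obtain ⟨t, ht⟩ := hT ρ hρ
        rw [zero_add]
        exact (ciInf_le hbdd t).trans ht
      · exact le_ciInf fun t => infDist_nonneg
    have hvC1 : ContDiff ℝ 1 v := by
      rw [contDiff_one_iff_deriv]
      refine ⟨fun t => (hv t).differentiableAt, ?_⟩
      rw [hdv]
      exact (Duff.continuous_gradient hV).comp hQc
    refine ⟨Q, ?_, ?_, hinf Vm h1, hinf Vp h2, ?_⟩
    · have : (2 : WithTop ℕ∞) = 1 + 1 := by norm_num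
      rw [this, contDiff_succ_iff_deriv]
      refine ⟨fun t => (hQ t).differentiableAt, by simp, ?_⟩
      rw [hdQ]
      exact hvC1
    · intro t
      rw [hdQ, hdv]
    · intro t
      rw [hdQ, hen t]
      ring
end
end

section
/- Assume V ∈ C¹(ℝ^N) satisfies (V3) and (V4) and that ∇V is locally Lipschitz continuous on ℝ^N. Set ν₁ := min{V(x) : |x| = r₀} > 0, and for c ∈ [0, ν₁) use the decomposition 𝒱^c₋ := 𝒱^c ∩ B_{r₀}(0) and 𝒱^c₊ := 𝒱^c \ B_{r₀}(0). Let c_n → 0⁺ with c_n ∈ (0, ν₁), and for each n let q_n be a C² solution of q̈ = ∇V(q) on ℝ with ½|q̇_n|² − V(q_n) ≡ −c_n, admitting a connecting time interval (α_n, ω_n) with −∞ ≤ α_n < ω_n < +∞ such that: V(q_n(t)) > c_n on (α_n, ω_n); dist(q_n(t), 𝒱^{c_n}₋) → 0 as t → α_n⁺ (with q̇_n(α_n) = 0, V(q_n(α_n)) = c_n and q_n(α_n) ∈ 𝒱^{c_n}₋ if α_n > −∞); q̇_n(ω_n) = 0, V(q_n(ω_n)) = c_n and q_n(ω_n) ∈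 𝒱^{c_n}₊; J_{c_n,(α_n,ω_n)}(q_n) = m_{c_n}; and q_n(ℝ) ⊆ 𝒞₀. Then there exist translations and a subsequence along which the translated q_n converge in C²_loc(ℝ, ℝ^N) to a solution q₀ of q̈ = ∇V(q) of homoclinic type at 0: q₀ is nonconstant, q₀(t) → 0 and q̇₀(t) → 0 as t → ±∞. -/
open MeasureTheory Filter Metric Set Topology
open scoped ENNReal

noncomputable section

theorem aux_barbalat {E : Type*} [NormedAddCommGroup E] [NormedSpace ℝ E] (f f' : ℝ → E)
    (hf : ∀ t, HasDerivAt f (f' t) t) (hu : UniformContinuous f') (l : E)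
    (hl : Tendsto f atTop (𝓝 l)) : Tendsto f' atTop (𝓝 0) := by
  rw [Metric.tendsto_nhds]
  intro ε hε
  obtain ⟨δ, hδ, h⟩ := Metric.uniformContinuous_iff.1 hu (ε / 2) (by positivity)
  set η := δ / 2 with hη
  have hηp : 0 < η := by positivity
  have h1 : Tendsto (fun t => f (t + η) - f t) atTop (𝓝 0) := by
    have := (hl.comp (tendsto_atTop_add_const_right atTop η tendsto_id)).sub hl
    simpa using this
  have h2 := Metric.tendsto_nhds.1 h1 (η * (ε / 2)) (by positivity)
  filter_upwards [h2] with t ht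
  rw [dist_zero_right] at ht ⊢
  have key : ‖(f (t + η) - (t + η) • f' t) - (f t - t • f' t)‖ ≤ (ε / 2) * ‖(t + η) - t‖ := by
    refine (convex_Icc t (t + η)).norm_image_sub_le_of_norm_hasDerivWithin_le
      (f := fun s => f s - s • f' t) (f' := fun s => f' s - f' t) ?_ ?_ ?_ ?_
    · intro x _
      have := (hf x).sub ((hasDerivAt_id x).smul_const (f' t))
      rw [one_smul] at this
      exact this.hasDerivWithinAt
    · intro x hx
      rw [← dist_eq_norm]
      apply (h _).le
      rw [Real.dist_eq, abs_lt]
      constructor <;> linarith [hx.1, hx.2]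
    · simp [hηp.le]
    · simp [hηp.le]
  have e1 : (f (t + η) - (t + η) • f' t) - (f t - t • f' t) = (f (t + η) - f t) - η • f' t := by
    rw [add_smul]; abel
  rw [e1] at key
  have e2 : ‖η • f' t‖ ≤ ‖f (t + η) - f t‖ + ‖(f (t + η) - f t) - η • f' t‖ := by
    have := norm_sub_le (f (t + η) - f t) ((f (t + η) - f t) - η • f' t)
    simpa using this
  rw [norm_smul, Real.norm_eq_abs, abs_of_pos hηp] at e2
  have e3 : ‖t + η - t‖ = η := by simp [abs_of_pos hηp]
  rw [e3] at key
  have : η * ‖f' t‖ < η * ε := by nlinarith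
  exact lt_of_mul_lt_mul_left this hηp.le

theorem aux_ode_unique {E : Type*} [NormedAddCommGroup E] [NormedSpace ℝ E] [ProperSpace E]
    (g : E → E) (hg : LocallyLipschitz g) (u u' w w' : ℝ → E) (R : ℝ)
    (hu : ∀ t, HasDerivAt u (u' t) t) (hu' : ∀ t, HasDerivAt u' (g (u t)) t)
    (hw : ∀ t, HasDerivAt w (w' t) t) (hw' : ∀ t, HasDerivAt w' (g (w t)) t)
    (hub : ∀ t, ‖u t‖ ≤ R) (hwb : ∀ t, ‖w t‖ ≤ R) (t₀ : ℝ) (h0 : u t₀ = w t₀)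
    (h1 : u' t₀ = w' t₀) : u = w := by
  obtain ⟨K, hK⟩ := LocallyLipschitzOn.exists_lipschitzOnWith_of_compact
    (isCompact_closedBall (0 : E) R) (hg.locallyLipschitzOn (s := closedBall 0 R))
  have := ODE_solution_unique_univ (v := fun _ (x : E × E) => (x.2, g x.1))
    (s := fun _ => closedBall (0 : E) R ×ˢ univ) (K := max 1 K) (f := fun t => (u t, u' t))
    (g := fun t => (w t, w' t)) (t₀ := t₀) ?_ ?_ ?_ (by simp [h0, h1])
  · funext t
    exact congrArg Prod.fst (congrFun this t)
  · intro t
    apply LipschitzOnWith.prodMk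
    · exact LipschitzWith.prod_snd.lipschitzOnWith
    · have := hK.comp (LipschitzWith.prod_fst.lipschitzOnWith
        (s := closedBall (0 : E) R ×ˢ (univ : Set E))) (fun x hx => hx.1)
      rw [mul_one] at this
      exact this
  · intro t
    exact ⟨(hu t).prodMk (hu' t), by simp [hub t]⟩
  · intro t
    exact ⟨(hw t).prodMk (hw' t), by simp [hwb t]⟩

theorem aux_uc {E F : Type*} [NormedAddCommGroup E] [ProperSpace E] [NormedAddCommGroup F]
    (g : E → F) (hg : Continuous g) (u : ℝ → E) (R : ℝ) (hub : ∀ t, ‖u t‖ ≤ R)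
    (hu : UniformContinuous u) : UniformContinuous (fun t => g (u t)) := by
  have h := (isCompact_closedBall (0 : E) R).uniformContinuousOn_of_continuous hg.continuousOn
  rw [Metric.uniformContinuousOn_iff] at h
  rw [Metric.uniformContinuous_iff] at *
  intro ε hε
  obtain ⟨δ, hδ, h⟩ := h ε hε
  obtain ⟨η, hη, h'⟩ := hu δ hδ
  exact ⟨η, hη, fun a b hab => h _ (by simp [hub]) _ (by simp [hub]) (h' hab)⟩

theorem aux_lip {E : Type*} [NormedAddCommGroup E] [NormedSpace ℝ E]
    (u u' : ℝ → E) (C : ℝ)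
    (hu : ∀ t, HasDerivAt u (u' t) t) (hb : ∀ t, ‖u' t‖ ≤ C) :
    LipschitzWith C.toNNReal u := by
  apply lipschitzWith_of_nnnorm_deriv_le (fun t => (hu t).differentiableAt)
  intro t
  rw [(hu t).deriv, ← NNReal.coe_le_coe]
  exact (hb t).trans (Real.le_coe_toNNReal C)

theorem aux_compact {E : Type*} [NormedAddCommGroup E] [NormedSpace ℝ E] [ProperSpace E]
    (g : E → E) (hg : Continuous g) (p p' : ℕ → ℝ → E) (R M : ℝ)
    (hp : ∀ n t, HasDerivAt (p n) (p' n t) t)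
    (hp' : ∀ n t, HasDerivAt (p' n) (g (p n t)) t)
    (hR : ∀ n t, ‖p n t‖ ≤ R) (hM : ∀ n t, ‖p' n t‖ ≤ M) :
    ∃ φ : ℕ → ℕ, StrictMono φ ∧ ∃ q₀ q₁ : ℝ → E,
      (∀ t, HasDerivAt q₀ (q₁ t) t) ∧ (∀ t, HasDerivAt q₁ (g (q₀ t)) t) ∧
      TendstoLocallyUniformly (fun n => p (φ n)) q₀ atTop ∧
      TendstoLocallyUniformly (fun n => p' (φ n)) q₁ atTop ∧
      TendstoLocallyUniformly (fun n t => g (p (φ n) t)) (fun t => g (q₀ t)) atTop := by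
  obtain ⟨G, hG⟩ := ((isCompact_closedBall (0 : E) R).image hg).isBounded.exists_norm_le
  have hG' : ∀ n t, ‖g (p n t)‖ ≤ G := fun n t =>
    hG _ ⟨_, by simp [hR], rfl⟩
  have lp : ∀ n, LipschitzWith (max M.toNNReal G.toNNReal) (fun t => (p n t, p' n t)) := by
    intro n
    exact (aux_lip _ _ M (hp n) (hM n)).prodMk (aux_lip _ _ G (hp' n) (hG' n))
  let r : ℕ → C(ℝ, E × E) := fun n => ⟨fun t => (p n t, p' n t), (lp n).continuous⟩
  have hc : IsCompact (closure (range r)) := by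
    apply ArzelaAscoli.isCompact_closure_of_isClosedEmbedding (𝔖 := {K | IsCompact K})
      (F := fun f : C(ℝ, E × E) => (f : ℝ → E × E)) (fun K hK => hK)
    · have : T2Space (UniformOnFun ℝ (E × E) {K | IsCompact K}) :=
        UniformOnFun.t2Space_of_covering
          (eq_univ_iff_forall.mpr (fun x => mem_sUnion_of_mem (mem_singleton x) isCompact_singleton))
      exact ContinuousMap.isUniformEmbedding_toUniformOnFunIsCompact.isClosedEmbedding
    · intro K hK
      apply Equicontinuous.equicontinuousOn
      apply UniformEquicontinuous.equicontinuous
      apply LipschitzWith.uniformEquicontinuous _ (max M.toNNReal G.toNNReal)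
      rintro ⟨_, n, rfl⟩
      exact lp n
    · intro K hK x hx
      refine ⟨closedBall 0 R ×ˢ closedBall 0 M,
        (isCompact_closedBall _ _).prod (isCompact_closedBall _ _), ?_⟩
      rintro _ ⟨n, rfl⟩
      simp [r, hR, hM]
  obtain ⟨f, -, φ, hφ, hf⟩ := hc.tendsto_subseq (x := r) (fun n => subset_closure ⟨n, rfl⟩)
  have t1 : TendstoLocallyUniformly (fun n => p (φ n)) (fun t => (f t).1) atTop := by
    have := ((ContinuousMap.continuous_postcomp (⟨Prod.fst, continuous_fst⟩ : C(E × E, E))).tendsto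
      f).comp hf
    exact ContinuousMap.tendsto_iff_tendstoLocallyUniformly.1 this
  have t2 : TendstoLocallyUniformly (fun n => p' (φ n)) (fun t => (f t).2) atTop := by
    have := ((ContinuousMap.continuous_postcomp (⟨Prod.snd, continuous_snd⟩ : C(E × E, E))).tendsto
      f).comp hf
    exact ContinuousMap.tendsto_iff_tendstoLocallyUniformly.1 this
  have t3 : TendstoLocallyUniformly (fun n t => g (p (φ n) t)) (fun t => g (f t).1) atTop := by
    have := ((ContinuousMap.continuous_postcomp
      (⟨fun x => g x.1, hg.comp continuous_fst⟩ : C(E × E, E))).tendsto f).comp hf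
    exact ContinuousMap.tendsto_iff_tendstoLocallyUniformly.1 this
  refine ⟨φ, hφ, fun t => (f t).1, fun t => (f t).2, ?_, ?_, t1, t2, t3⟩
  · intro t
    refine hasDerivAt_of_tendstoLocallyUniformlyOn isOpen_univ
      (tendstoLocallyUniformlyOn_univ.2 t2) (f := fun n => p (φ n))
      (Eventually.of_forall fun n x _ => hp _ x) ?_ (mem_univ t)
    intro x _
    exact (tendstoLocallyUniformlyOn_univ.2 t1).tendsto_at (mem_univ x)
  · intro t
    refine hasDerivAt_of_tendstoLocallyUniformlyOn isOpen_univ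
      (tendstoLocallyUniformlyOn_univ.2 t3) (f := fun n => p' (φ n))
      (Eventually.of_forall fun n x _ => hp' _ x) ?_ (mem_univ t)
    intro x _
    exact (tendstoLocallyUniformlyOn_univ.2 t2).tendsto_at (mem_univ x)

theorem aux_cross (f : ℝ → ℝ) (hf : Continuous f) (c s₁ s₂ : ℝ) (h : s₁ ≤ s₂) (h1 : f s₁ ≤ c)
    (h2 : c ≤ f s₂) : ∃ a ∈ Icc s₁ s₂, f a = c ∧ ∀ t ∈ Icc a s₂, c ≤ f t := by
  have hc : IsCompact (Icc s₁ s₂ ∩ {t | f t ≤ c}) :=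
    isCompact_Icc.inter_right (isClosed_le hf continuous_const)
  obtain ⟨a, ⟨ha, hac⟩, ham⟩ := hc.exists_isGreatest ⟨s₁, ⟨le_rfl, h⟩, h1⟩
  have hfa : f a = c := by
    obtain ⟨b, hb, hbc⟩ := intermediate_value_Icc ha.2 hf.continuousOn ⟨hac, h2⟩
    have : b ≤ a := ham ⟨⟨ha.1.trans hb.1, hb.2⟩, hbc.le⟩
    have : b = a := le_antisymm this hb.1
    rw [← this]; exact hbc
  refine ⟨a, ha, hfa, fun t ht => ?_⟩
  by_contra hlt
  push Not at hlt
  have : t ≤ a := ham ⟨⟨ha.1.trans ht.1, ht.2⟩, hlt.le⟩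
  have : t = a := le_antisymm this ht.1
  rw [this, hfa] at hlt
  exact lt_irrefl _ hlt

theorem aux_cross' (f : ℝ → ℝ) (hf : Continuous f) (c s₁ s₂ : ℝ) (h : s₁ ≤ s₂) (h1 : f s₂ ≤ c)
    (h2 : c ≤ f s₁) : ∃ b ∈ Icc s₁ s₂, f b = c ∧ ∀ t ∈ Icc s₁ b, c ≤ f t := by
  obtain ⟨a, ha, hac, h⟩ := aux_cross (fun t => f (-t)) (hf.comp continuous_neg) c (-s₂) (-s₁)
    (by linarith) (by simpa using h1) (by simpa using h2)
  refine ⟨-a, ⟨by linarith [ha.2], by linarith [ha.1]⟩, hac, fun t ht => ?_⟩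
  have := h (-t) ⟨by linarith [ht.2], by linarith [ht.1]⟩
  simpa using this

theorem aux_h1 {N : ℕ} (u : ℝ → Euc N) (K : NNReal) (hu : LipschitzWith K u) :
    IsH1loc u (deriv u) := by
  have hb : ∀ t, ‖deriv u t‖ ≤ K := fun t => norm_deriv_le_of_lipschitz hu
  have hm : AEStronglyMeasurable (deriv u) volume := (measurable_deriv u).aestronglyMeasurable
  have hint : ∀ a b : ℝ, IntegrableOn (deriv u) (Icc a b) volume := fun a b =>
    Measure.integrableOn_of_bounded (M := K) (by simp) hm (Eventually.of_forall hb)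
  refine ⟨?_, ?_, ?_⟩
  · rw [MeasureTheory.locallyIntegrable_iff]
    intro k hk
    exact Measure.integrableOn_of_bounded (M := K) hk.measure_lt_top.ne hm
      (Eventually.of_forall hb)
  · intro a b
    refine Measure.integrableOn_of_bounded (M := (K : ℝ) ^ 2) (by simp) ?_
      (Eventually.of_forall fun t => ?_)
    · exact ((measurable_deriv u).norm.pow_const 2).aestronglyMeasurable
    · simp only [norm_pow, norm_norm]
      exact pow_le_pow_left₀ (norm_nonneg _) (hb t) 2
  · intro a b
    have hii : IntervalIntegrable (deriv u) volume a b := by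
      rw [intervalIntegrable_iff]
      exact (hint (min a b) (max a b)).mono_set (by rw [uIoc]; exact Ioc_subset_Icc_self)
    ext i
    have h1 := ContinuousLinearMap.intervalIntegral_comp_comm
      (EuclideanSpace.proj i : Euc N →L[ℝ] ℝ) hii
    have hui : LipschitzWith (‖(EuclideanSpace.proj i : Euc N →L[ℝ] ℝ)‖₊ * K) (fun t => u t i) :=
      (EuclideanSpace.proj i : Euc N →L[ℝ] ℝ).lipschitz.comp hu
    have h2 := (hui.lipschitzOnWith (s := uIcc a b)).absolutelyContinuousOnInterval.integral_deriv_eq_sub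
    have h3 : ∫ t in a..b, (EuclideanSpace.proj i : Euc N →L[ℝ] ℝ) (deriv u t)
        = ∫ t in a..b, deriv (fun t => u t i) t := by
      apply intervalIntegral.integral_congr_ae
      filter_upwards [hu.ae_differentiableAt_real] with t ht _
      exact (((EuclideanSpace.proj i : Euc N →L[ℝ] ℝ).hasFDerivAt).comp_hasDerivAt t
        ht.hasDerivAt).deriv.symm
    rw [h3, h2] at h1
    simpa using h1

theorem aux_mc {N : ℕ} (V : Euc N → ℝ) (c : ℝ) (Vm Vp : Set (Euc N)) (γ : ℝ → Euc N) (K : NNReal)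
    (hγ : LipschitzWith K γ) (a b L M : ℝ) (hab : a ≤ b) (hL : b - a ≤ L) (hc : 0 ≤ c)
    (ha : V (γ a) = c) (hb : V (γ b) = c) (hV : ∀ t ∈ Icc a b, c ≤ V (γ t) ∧ V (γ t) ≤ M)
    (ham : γ a ∈ Vm) (hbp : γ b ∈ Vp) :
    mc V c Vm Vp ≤ ENNReal.ofReal (2⁻¹ * (K : ℝ) ^ 2 + M) * ENNReal.ofReal L := by
  set u : ℝ → Euc N := fun t => γ (max a (min t b)) with hu
  have hlu : LipschitzWith K u := by
    have : LipschitzWith 1 (fun t : ℝ => max a (min t b)) :=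
      (LipschitzWith.id.min_const b).const_max a
    have h2 := hγ.comp this
    rw [mul_one] at h2
    exact h2
  have hmem : ∀ t, max a (min t b) ∈ Icc a b := fun t =>
    ⟨le_max_left _ _, max_le hab (min_le_right _ _)⟩
  have ul : ∀ t, t ≤ a → u t = γ a := fun t ht => by
    simp only [hu]; rw [max_eq_left]; exact (min_le_left _ _).trans ht
  have ur : ∀ t, b ≤ t → u t = γ b := fun t ht => by
    simp only [hu]; rw [min_eq_right ht, max_eq_right hab]
  have hG : (u, deriv u) ∈ Gamma V c Vm Vp := by
    refine ⟨aux_h1 u K hlu, fun t => (hV _ (hmem t)).1, ?_, ?_⟩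
    · intro ε hε
      apply Eventually.frequently
      filter_upwards [eventually_le_atBot a] with t ht
      simp only [ul t ht, infDist_zero_of_mem ham, hε]
    · intro ε hε
      apply Eventually.frequently
      filter_upwards [eventually_ge_atTop b] with t ht
      simp only [ur t ht, infDist_zero_of_mem hbp, hε]
  refine (iInf₂_le (u, deriv u) hG).trans ?_
  simp only [lagJ, Measure.restrict_univ]
  calc ∫⁻ t, ENNReal.ofReal (2⁻¹ * ‖deriv u t‖ ^ 2 + (V (u t) - c))
      ≤ ∫⁻ t, (Icc a b).indicator (fun _ => ENNReal.ofReal (2⁻¹ * (K : ℝ) ^ 2 + M)) t := by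
        apply lintegral_mono
        intro t
        by_cases ht : t ∈ Icc a b
        · simp only [indicator_of_mem ht]
          apply ENNReal.ofReal_le_ofReal
          have h1 : ‖deriv u t‖ ≤ K := norm_deriv_le_of_lipschitz hlu
          have h2 : ‖deriv u t‖ ^ 2 ≤ (K : ℝ) ^ 2 := pow_le_pow_left₀ (norm_nonneg _) h1 2
          have h3 := (hV _ (hmem t)).2
          simp only [hu] at h3 ⊢
          linarith
        · simp only [indicator_of_notMem ht]
          rw [mem_Icc, not_and_or, not_le, not_le] at ht
          have : deriv u t = 0 ∧ V (u t) = c := by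
            rcases ht with ht | ht
            · refine ⟨?_, by rw [ul t ht.le, ha]⟩
              have : u =ᶠ[𝓝 t] fun _ => γ a := by
                filter_upwards [Iio_mem_nhds ht] with s hs using ul s (le_of_lt hs)
              rw [this.deriv_eq]; simp
            · refine ⟨?_, by rw [ur t ht.le, hb]⟩
              have : u =ᶠ[𝓝 t] fun _ => γ b := by
                filter_upwards [Ioi_mem_nhds ht] with s hs using ur s (le_of_lt hs)
              rw [this.deriv_eq]; simp
          rw [this.1, this.2]; simp
    _ = ENNReal.ofReal (2⁻¹ * (K : ℝ) ^ 2 + M) * ENNReal.ofReal (b - a) := by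
        rw [lintegral_indicator measurableSet_Icc]; simp
    _ ≤ _ := by gcongr

theorem aux_clamp (a b : ℝ) : LipschitzWith 1 (fun t : ℝ => max a (min t b)) :=
  (LipschitzWith.id.min_const b).const_max a

theorem aux_path {N : ℕ} (V : Euc N → ℝ) (hV : Continuous V) (r₀ : ℝ) (hr₀ : 0 < r₀)
    (hV0 : V 0 = 0) (μ : ℝ) (hμ : ∀ x, r₀ ≤ ‖x‖ → ‖x‖ ≤ 2 * r₀ → μ ≤ V x)
    (x₀ : Euc N) (hx₀ : V x₀ = 0) (hx₀r : 2 * r₀ ≤ ‖x₀‖)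
    (p : ℝ → Euc N) (Kp : NNReal) (hp : LipschitzWith Kp p) (t₀ t₁ c₀ : ℝ) (h01 : t₀ ≤ t₁)
    (h0 : ‖p t₀‖ ≤ 2 * r₀) (h1 : ‖p t₁ - x₀‖ ≤ r₀) (hc₀ : ∀ t, c₀ ≤ V (p t)) :
    ∃ C : ℝ, ∀ c, 0 < c → c < c₀ → c < μ →
      mc V c ({x | V x ≤ c} ∩ ball (0 : Euc N) r₀) ({x | V x ≤ c} \ ball (0 : Euc N) r₀)
        ≤ ENNReal.ofReal C := by
  set T := t₁ - t₀ with hT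
  have hT0 : 0 ≤ T := by linarith
  set P := p t₀ with hP
  set Q := p t₁ with hQ
  set γ : ℝ → Euc N := fun t => (max 0 (min t 1)) • P + p (t₀ + max 0 (min (t - 1) T)) +
    (max 0 (min (t - 1 - T) 1)) • (x₀ - Q) - P with hγ
  have g1 : ∀ t ∈ Icc (0 : ℝ) 1, γ t = t • P := by
    intro t ht
    simp only [hγ]
    rw [min_eq_left ht.2, max_eq_right ht.1, max_eq_left, max_eq_left]
    · simp [hP]
    · exact (min_le_left _ _).trans (by linarith [ht.2])
    · exact (min_le_left _ _).trans (by linarith [ht.2])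
  have g2 : ∀ t ∈ Icc (1 : ℝ) (1 + T), γ t = p (t₀ + (t - 1)) := by
    intro t ht
    simp only [hγ]
    rw [min_eq_right ht.1, min_eq_left (by linarith [ht.2] : t - 1 ≤ T),
      max_eq_right (by linarith [ht.1] : 0 ≤ t - 1), max_eq_right (zero_le_one), max_eq_left]
    · simp
    · exact (min_le_left _ _).trans (by linarith [ht.2])
  have g3 : ∀ t ∈ Icc (1 + T) (2 + T), γ t = Q + (t - 1 - T) • (x₀ - Q) := by
    intro t ht
    simp only [hγ]
    rw [min_eq_right (by linarith [ht.1] : 1 ≤ t), min_eq_right (by linarith [ht.1] : T ≤ t - 1),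
      max_eq_right hT0, max_eq_right (zero_le_one), min_eq_left (by linarith [ht.2]),
      max_eq_right (by linarith [ht.1])]
    rw [show t₀ + T = t₁ by rw [hT]; ring, ← hQ]
    simp only [one_smul]
    abel
  obtain ⟨K, hK⟩ : ∃ K, LipschitzWith K γ := by
    have sm : ∀ v : Euc N, ∃ K, LipschitzWith K (fun t : ℝ => t • v) := fun v =>
      ⟨_, (ContinuousLinearMap.toSpanSingleton ℝ v).lipschitz⟩
    obtain ⟨K1, hK1⟩ := sm P
    obtain ⟨K2, hK2⟩ := sm (x₀ - Q)
    have sh : ∀ s : ℝ, LipschitzWith 1 (fun t : ℝ => t - s) := fun s =>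
      LipschitzWith.of_dist_le_mul (fun x y => by simp)
    have sh' : LipschitzWith 1 (fun t : ℝ => t₀ + t) :=
      LipschitzWith.of_dist_le_mul (fun x y => by simp)
    have a1 := hK1.comp (aux_clamp 0 1)
    have a2 := hp.comp (sh'.comp ((aux_clamp 0 T).comp (sh 1)))
    have a3 := hK2.comp ((aux_clamp 0 1).comp ((sh T).comp (sh 1)))
    exact ⟨_, ((a1.add a2).add a3).sub (LipschitzWith.const P)⟩
  have hVγ : Continuous (fun t => V (γ t)) := hV.comp hK.continuous
  obtain ⟨M, hM⟩ := (isCompact_Icc (a := (0 : ℝ)) (b := 2 + T)).bddAbove_image hVγ.continuousOn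
  have hM' : ∀ t ∈ Icc (0 : ℝ) (2 + T), V (γ t) ≤ M := fun t ht => hM ⟨t, ht, rfl⟩
  refine ⟨(2⁻¹ * (K : ℝ) ^ 2 + M) * (2 + T), fun c hc hcc hcμ => ?_⟩
  have m1 : c ≤ V (γ 1) := by
    rw [g2 1 ⟨le_rfl, by linarith⟩]; exact hcc.le.trans (hc₀ _)
  have m2 : c ≤ V (γ (1 + T)) := by
    rw [g2 (1 + T) ⟨by linarith, by linarith⟩]; exact hcc.le.trans (hc₀ _)
  obtain ⟨a, ha, hac, haV⟩ := aux_cross _ hVγ c 0 1 zero_le_one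
    (by rw [g1 0 ⟨le_rfl, zero_le_one⟩]; simp [hV0, hc.le]) m1
  obtain ⟨b, hb, hbc, hbV⟩ := aux_cross' _ hVγ c (1 + T) (2 + T) (by linarith)
    (by
      rw [g3 (2 + T) ⟨by linarith, le_rfl⟩]
      rw [show (2 + T - 1 - T) = 1 by ring]
      simp [hx₀, hc.le]) m2
  have hbd : 0 ≤ 2⁻¹ * (K : ℝ) ^ 2 + M := by
    have := hM' 1 ⟨by linarith, by linarith⟩
    have h2 : 0 ≤ 2⁻¹ * (K : ℝ) ^ 2 := by positivity
    linarith
  rw [ENNReal.ofReal_mul hbd]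
  refine aux_mc V c _ _ γ K hK a b (2 + T) M (by linarith [ha.2, hb.1]) (by linarith [ha.1, hb.2])
    hc.le hac hbc ?_ ?_ ?_
  · intro t ht
    refine ⟨?_, hM' t ⟨by linarith [ha.1, ht.1], by linarith [hb.2, ht.2]⟩⟩
    rcases le_total t 1 with h | h
    · exact haV t ⟨ht.1, h⟩
    rcases le_total t (1 + T) with h' | h'
    · rw [g2 t ⟨h, h'⟩]; exact hcc.le.trans (hc₀ _)
    · exact hbV t ⟨h', ht.2⟩
  · refine ⟨le_of_eq hac, ?_⟩
    rw [mem_ball_zero_iff]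
    by_contra hn
    push Not at hn
    have : ‖γ a‖ ≤ 2 * r₀ := by
      rw [g1 a ha, norm_smul, Real.norm_eq_abs, abs_of_nonneg ha.1]
      nlinarith [ha.1, ha.2, norm_nonneg P]
    have := hμ _ hn this
    linarith
  · refine ⟨le_of_eq hbc, ?_⟩
    rw [mem_ball_zero_iff]
    push Not
    have e : x₀ = γ b + (1 - (b - 1 - T)) • (x₀ - Q) := by
      rw [g3 b hb]; module
    have h2 : ‖x₀‖ ≤ ‖γ b‖ + ‖(1 - (b - 1 - T)) • (x₀ - Q)‖ := by
      conv_lhs => rw [e]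
      exact norm_add_le _ _
    rw [norm_smul, Real.norm_eq_abs, abs_of_nonneg (by linarith [hb.2])] at h2
    rw [norm_sub_rev] at h1
    have : (1 - (b - 1 - T)) * ‖x₀ - Q‖ ≤ 1 * r₀ := by
      apply mul_le_mul _ h1 (norm_nonneg _) zero_le_one
      linarith [hb.1]
    linarith

/-- Conclusion for a bounded brake orbit of zero energy with integrable potential. -/
theorem aux_homoclinic {N : ℕ} (V : Euc N → ℝ) (hVc : Continuous V)
    (hlip : LocallyLipschitz (gradient V))
    (q₀ q₁ : ℝ → Euc N) (R M C : ℝ)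
    (hd0 : ∀ t, HasDerivAt q₀ (q₁ t) t) (hd1 : ∀ t, HasDerivAt q₁ (gradient V (q₀ t)) t)
    (hR : ∀ t, ‖q₀ t‖ ≤ R) (hM : ∀ t, ‖q₁ t‖ ≤ M)
    (hE : ∀ t, 2⁻¹ * ‖q₁ t‖ ^ 2 = V (q₀ t))
    (hz : q₁ 0 = 0)
    (hcl : ∀ t, q₀ t ∈ closure ({x : Euc N | 0 < V x} ∪ {0}))
    (hC₀grad : ∀ x ∈ frontier ({x : Euc N | 0 < V x} ∪ {0}), gradient V x ≠ 0)
    (hC : ∀ T, 0 ≤ T → ∫ t in (-T)..0, V (q₀ t) ≤ C) :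
    Tendsto q₀ atBot (𝓝 0) ∧ Tendsto q₀ atTop (𝓝 0) ∧
      Tendsto q₁ atBot (𝓝 0) ∧ Tendsto q₁ atTop (𝓝 0) := by
  have heven : (fun t => q₀ (-t)) = q₀ := by
    refine aux_ode_unique (gradient V) hlip (fun t => q₀ (-t)) (fun t => -q₁ (-t)) q₀ q₁ R
      ?_ ?_ hd0 hd1 (fun t => hR _) hR 0 (by simp) (by simp [hz])
    · intro t
      have := (hd0 (-t)).scomp t (hasDerivAt_neg t)
      rw [neg_one_smul] at this
      exact this
    · intro t
      have := ((hd1 (-t)).scomp t (hasDerivAt_neg t)).neg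
      rw [neg_one_smul, neg_neg] at this
      exact this
  have hcq : Continuous q₀ := continuous_iff_continuousAt.2 fun t => (hd0 t).continuousAt
  have hVq : Continuous (fun t => V (q₀ t)) := hVc.comp hcq
  have hVn : ∀ t, 0 ≤ V (q₀ t) := fun t => by rw [← hE]; positivity
  have huc : UniformContinuous q₀ := (aux_lip q₀ q₁ M hd0 hM).uniformContinuous
  have hF : ∀ t, HasDerivAt (fun T => ∫ s in (0 : ℝ)..T, V (q₀ s)) (V (q₀ t)) t := fun t =>
    intervalIntegral.integral_hasDerivAt_right (hVq.intervalIntegrable _ _)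
      hVq.aestronglyMeasurable.stronglyMeasurableAtFilter hVq.continuousAt
  have hmono : Monotone (fun T => ∫ s in (0 : ℝ)..T, V (q₀ s)) := by
    apply monotone_of_deriv_nonneg (fun t => (hF t).differentiableAt)
    intro t; rw [(hF t).deriv]; exact hVn t
  have hbdd : BddAbove (range (fun T => ∫ s in (0 : ℝ)..T, V (q₀ s))) := by
    refine ⟨C, ?_⟩
    rintro _ ⟨T, rfl⟩
    have h1 : ∫ s in (0 : ℝ)..T, V (q₀ s) ≤ ∫ s in (0 : ℝ)..(max T 0), V (q₀ s) :=
      hmono (le_max_left _ _)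
    refine h1.trans ?_
    have h2 := hC (max T 0) (le_max_right _ _)
    have h3 : ∫ t in (-(max T 0))..0, V (q₀ t) = ∫ t in (0 : ℝ)..(max T 0), V (q₀ (-t)) := by
      rw [intervalIntegral.integral_comp_neg (fun t => V (q₀ t))]; simp
    rw [h3] at h2
    have h4 : ∀ t, q₀ (-t) = q₀ t := fun t => congrFun heven t
    simpa only [h4] using h2
  have hV0 : Tendsto (fun t => V (q₀ t)) atTop (𝓝 0) :=
    aux_barbalat _ _ hF (aux_uc V hVc q₀ R hR huc) _ (tendsto_atTop_ciSup hmono hbdd)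
  have hq1 : Tendsto q₁ atTop (𝓝 0) := by
    rw [tendsto_zero_iff_norm_tendsto_zero]
    have h1 : Tendsto (fun t => Real.sqrt (2 * V (q₀ t))) atTop (𝓝 0) := by
      have := (hV0.const_mul 2).sqrt
      simpa using this
    refine h1.congr fun t => ?_
    rw [← hE, ← mul_assoc]
    norm_num
  have hg : Tendsto (fun t => gradient V (q₀ t)) atTop (𝓝 0) :=
    aux_barbalat _ _ hd1 (aux_uc _ hlip.continuous q₀ R hR huc) _ hq1
  have hq0 : Tendsto q₀ atTop (𝓝 0) := by
    refine (isCompact_closedBall (0 : Euc N) R).tendsto_nhds_of_unique_mapClusterPt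
      (Eventually.of_forall fun t => by simp [hR]) ?_
    intro x hx hcp
    have hVx : V x = 0 := by
      obtain ⟨s, hsx, hs⟩ := hcp.exists_seq_tendsto
      exact tendsto_nhds_unique ((hVc.tendsto x).comp hsx) (hV0.comp hs)
    have hgx : gradient V x = 0 := by
      obtain ⟨s, hsx, hs⟩ := hcp.exists_seq_tendsto
      exact tendsto_nhds_unique ((hlip.continuous.tendsto x).comp hsx) (hg.comp hs)
    by_contra hne
    refine hC₀grad x ⟨?_, fun hi => ?_⟩ hgx
    · have : MapClusterPt x atTop q₀ := hcp
      refine isClosed_closure.mem_of_mapClusterPt this (Eventually.of_forall hcl)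
    · rcases interior_subset hi with h | h
      · exact absurd hVx (ne_of_gt h)
      · exact hne h
  have hodd : ∀ t, q₁ (-t) = - q₁ t := by
    intro t
    have h1 : HasDerivAt q₀ (-q₁ (-t)) t := by
      have := (hd0 (-t)).scomp t (hasDerivAt_neg t)
      rw [neg_one_smul] at this
      rw [← heven]
      simpa only [Function.comp_def, heven] using this
    rw [(hd0 t).unique h1, neg_neg]
  refine ⟨?_, hq0, ?_, hq1⟩
  · rw [← heven]; exact hq0.comp tendsto_neg_atBot_atTop
  · have := (hq1.comp tendsto_neg_atBot_atTop).neg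
    rw [neg_zero] at this
    refine this.congr fun t => ?_
    simp [hodd]

/-- Proposition 3.4 (Duffing convergence): as `c_n → 0⁺` the brake/connecting solutions with
energies `−c_n`, suitably translated and up to a subsequence, converge in `C²_loc` to a
homoclinic solution at `0`. -/
theorem duffing_convergence {N : ℕ} (hN : 0 < N) (V : Euc N → ℝ) (hV : ContDiff ℝ 1 V)
    (hlip : LocallyLipschitz (gradient V))
    (r₀ : ℝ) (hr₀ : 0 < r₀) (hV0 : V 0 = 0)
    (hVpos : ∀ x ∈ closedBall (0 : Euc N) (4 * r₀), x ≠ 0 → 0 < V x)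
    (hC₀bdd : Bornology.IsBounded ({x : Euc N | 0 < V x} ∪ {0}))
    (hC₀grad : ∀ x ∈ frontier ({x : Euc N | 0 < V x} ∪ {0}), gradient V x ≠ 0)
    (ν₁ : ℝ) (hν₁ : ν₁ = sInf (V '' sphere (0 : Euc N) r₀))
    (c : ℕ → ℝ) (hcpos : ∀ n, 0 < c n) (hclt : ∀ n, c n < ν₁)
    (hc0 : Tendsto c atTop (𝓝 0))
    (q : ℕ → ℝ → Euc N)
    (hsol : ∀ n, ContDiff ℝ 2 (q n) ∧
      (∀ t, deriv (deriv (q n)) t = gradient V (q n t)) ∧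
      (∀ t, 2⁻¹ * ‖deriv (q n) t‖ ^ 2 - V (q n t) = -(c n)))
    (hrange : ∀ n, Set.range (q n) ⊆ {x : Euc N | 0 < V x} ∪ {0})
    (hconn : ∀ n, ∃ α : EReal, ∃ ω : ℝ, α < (ω : EReal) ∧
      (∀ t : ℝ, α < (t : EReal) → t < ω → c n < V (q n t)) ∧
      ((α = ⊥ → Tendsto
          (fun t => infDist (q n t) ({x | V x ≤ c n} ∩ ball (0 : Euc N) r₀)) atBot (𝓝 0)) ∧
       (∀ a : ℝ, α = (a : EReal) →
          Tendsto (fun t => infDist (q n t) ({x | V x ≤ c n} ∩ ball (0 : Euc N) r₀))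
            (𝓝[>] a) (𝓝 0) ∧
          deriv (q n) a = 0 ∧ V (q n a) = c n ∧
          q n a ∈ {x | V x ≤ c n} ∩ ball (0 : Euc N) r₀)) ∧
      (deriv (q n) ω = 0 ∧ V (q n ω) = c n ∧
        q n ω ∈ {x | V x ≤ c n} \ ball (0 : Euc N) r₀) ∧
      lagJ V (c n) (q n) (deriv (q n)) {t : ℝ | α < (t : EReal) ∧ t < ω}
        = mc V (c n) ({x | V x ≤ c n} ∩ ball (0 : Euc N) r₀)
            ({x | V x ≤ c n} \ ball (0 : Euc N) r₀)) :
    ∃ φ : ℕ → ℕ, StrictMono φ ∧ ∃ ζ : ℕ → ℝ, ∃ q₀ : ℝ → Euc N,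
      ContDiff ℝ 2 q₀ ∧
      (∀ t, deriv (deriv q₀) t = gradient V (q₀ t)) ∧
      (∃ t s : ℝ, q₀ t ≠ q₀ s) ∧
      Tendsto q₀ atBot (𝓝 0) ∧ Tendsto q₀ atTop (𝓝 0) ∧
      Tendsto (deriv q₀) atBot (𝓝 0) ∧ Tendsto (deriv q₀) atTop (𝓝 0) ∧
      TendstoLocallyUniformly (fun n t => q (φ n) (t - ζ n)) q₀ atTop ∧
      TendstoLocallyUniformly (fun n t => deriv (q (φ n)) (t - ζ n)) (deriv q₀) atTop ∧
      TendstoLocallyUniformly (fun n t => deriv (deriv (q (φ n))) (t - ζ n))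
        (deriv (deriv q₀)) atTop := by
  classical
  choose α ω hαω hVgt hα hω hJ using hconn
  have hVc : Continuous V := hV.continuous
  have hgc : Continuous (gradient V) := hlip.continuous
  have hd : ∀ n t, HasDerivAt (q n) (deriv (q n) t) t := fun n t =>
    (((hsol n).1.differentiable (by norm_num)) t).hasDerivAt
  have hd' : ∀ n t, HasDerivAt (deriv (q n)) (gradient V (q n t)) t := by
    intro n t
    have h := ((hsol n).1.differentiable_deriv_two t).hasDerivAt
    rwa [(hsol n).2.1 t] at h
  have hen : ∀ n t, 2⁻¹ * ‖deriv (q n) t‖ ^ 2 = V (q n t) - c n := fun n t => by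
    linarith [(hsol n).2.2 t]
  obtain ⟨R, hR⟩ := hC₀bdd.exists_norm_le
  have hqR : ∀ n t, ‖q n t‖ ≤ R := fun n t => hR _ (hrange n ⟨t, rfl⟩)
  obtain ⟨B, hB⟩ := (isCompact_closedBall (0 : Euc N) R).bddAbove_image hVc.continuousOn
  have hqB : ∀ n t, V (q n t) ≤ B := fun n t => hB ⟨_, by simp [hqR], rfl⟩
  set M := Real.sqrt (2 * B) with hMdef
  have hqM : ∀ n t, ‖deriv (q n) t‖ ≤ M := fun n t => by
    apply Real.le_sqrt_of_sq_le
    linarith [hen n t, hqB n t, hcpos n]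
  set p : ℕ → ℝ → Euc N := fun n t => q n (t + ω n) with hp
  set p' : ℕ → ℝ → Euc N := fun n t => deriv (q n) (t + ω n) with hp'
  have hpd : ∀ n t, HasDerivAt (p n) (p' n t) t := fun n t => (hd n _).comp_add_const t (ω n)
  have hpd' : ∀ n t, HasDerivAt (p' n) (gradient V (p n t)) t := fun n t =>
    (hd' n _).comp_add_const t (ω n)
  obtain ⟨φ, hφ, q₀, q₁, hq0, hq1, l0, l1, l2⟩ := aux_compact (gradient V) hgc p p' R M hpd hpd'
    (fun n t => hqR _ _) (fun n t => hqM _ _)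
  have hφt : Tendsto φ atTop atTop := hφ.tendsto_atTop
  have pt0 : ∀ t, Tendsto (fun n => p (φ n) t) atTop (𝓝 (q₀ t)) := fun t =>
    (tendstoLocallyUniformlyOn_univ.2 l0).tendsto_at (mem_univ t)
  have pt1 : ∀ t, Tendsto (fun n => p' (φ n) t) atTop (𝓝 (q₁ t)) := fun t =>
    (tendstoLocallyUniformlyOn_univ.2 l1).tendsto_at (mem_univ t)
  have hcφ : Tendsto (fun n => c (φ n)) atTop (𝓝 0) := hc0.comp hφt
  have c0 : Continuous q₀ := continuous_iff_continuousAt.2 fun t => (hq0 t).continuousAt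
  have c1 : Continuous q₁ := continuous_iff_continuousAt.2 fun t => (hq1 t).continuousAt
  have b0 : ∀ t, ‖q₀ t‖ ≤ R := fun t =>
    le_of_tendsto (pt0 t).norm (Eventually.of_forall fun n => hqR _ _)
  have b1 : ∀ t, ‖q₁ t‖ ≤ M := fun t =>
    le_of_tendsto (pt1 t).norm (Eventually.of_forall fun n => hqM _ _)
  have hE : ∀ t, 2⁻¹ * ‖q₁ t‖ ^ 2 = V (q₀ t) := by
    intro t
    have h1 : Tendsto (fun n => 2⁻¹ * ‖p' (φ n) t‖ ^ 2) atTop (𝓝 (2⁻¹ * ‖q₁ t‖ ^ 2)) :=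
      ((pt1 t).norm.pow 2).const_mul _
    have h2 : Tendsto (fun n => V (p (φ n) t) - c (φ n)) atTop (𝓝 (V (q₀ t) - 0)) :=
      ((hVc.tendsto _).comp (pt0 t)).sub hcφ
    rw [sub_zero] at h2
    refine tendsto_nhds_unique h1 (h2.congr fun n => (hen _ _).symm)
  have hz : q₁ 0 = 0 := by
    refine tendsto_nhds_unique (pt1 0) (tendsto_const_nhds.congr fun n => ?_)
    simp only [hp', zero_add]
    exact (hω (φ n)).1.symm
  have hcl : ∀ t, q₀ t ∈ closure ({x : Euc N | 0 < V x} ∪ {0}) := fun t =>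
    mem_closure_of_tendsto (pt0 t) (Eventually.of_forall fun n => hrange _ ⟨_, rfl⟩)
  have hVx : V (q₀ 0) = 0 := by rw [← hE, hz]; simp
  have hx0r : r₀ ≤ ‖q₀ 0‖ := by
    refine ge_of_tendsto (pt0 0).norm (Eventually.of_forall fun n => ?_)
    have := (hω (φ n)).2.2.2
    rw [mem_ball_zero_iff, not_lt] at this
    simpa [hp] using this
  have hx0ne : q₀ 0 ≠ 0 := by
    intro h; rw [h, norm_zero] at hx0r; linarith
  have hx04 : 4 * r₀ < ‖q₀ 0‖ := by
    by_contra h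
    push Not at h
    have := hVpos (q₀ 0) (by simpa using h) hx0ne
    linarith
  have hV0n : ∀ x ∈ closedBall (0 : Euc N) (4 * r₀), 0 ≤ V x := by
    intro x hx
    by_cases h : x = 0
    · rw [h, hV0]
    · exact (hVpos x hx h).le
  have hg0 : gradient V 0 = 0 := by
    have : IsLocalMin V 0 := by
      filter_upwards [closedBall_mem_nhds (0 : Euc N) (by positivity : 0 < 4 * r₀)] with x hx
      rw [hV0]; exact hV0n x hx
    rw [gradient, this.fderiv_eq_zero, map_zero]
  have hgx : gradient V (q₀ 0) ≠ 0 := by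
    refine hC₀grad _ ⟨hcl 0, fun hi => ?_⟩
    rcases interior_subset hi with h | h
    · exact absurd hVx (ne_of_gt h)
    · exact hx0ne h
  -- the action bound
  obtain ⟨μ, hμ0, hμ⟩ : ∃ μ : ℝ, 0 < μ ∧ ∀ x : Euc N, r₀ ≤ ‖x‖ → ‖x‖ ≤ 2 * r₀ → μ ≤ V x := by
    have hK : IsCompact (closedBall (0 : Euc N) (2 * r₀) \ ball 0 r₀) :=
      (isCompact_closedBall _ _).diff isOpen_ball
    obtain ⟨μ, h1, h2⟩ := hK.exists_forall_le' (f := V) hVc.continuousOn (a := 0) (by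
      rintro x ⟨hx1, hx2⟩
      rw [mem_closedBall_zero_iff] at hx1
      rw [mem_ball_zero_iff, not_lt] at hx2
      refine hVpos x (by rw [mem_closedBall_zero_iff]; linarith) ?_
      rintro rfl
      rw [norm_zero] at hx2; linarith)
    exact ⟨μ, h1, fun x hx hx' => h2 x ⟨by simpa using hx', by simpa using hx⟩⟩
  obtain ⟨C, hC⟩ : ∃ C : ℝ, ∀ᶠ n in atTop,
      lagJ V (c (φ n)) (q (φ n)) (deriv (q (φ n)))
        {t : ℝ | α (φ n) < (t : EReal) ∧ t < ω (φ n)} ≤ ENNReal.ofReal C := by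
    obtain ⟨k, hk⟩ := (Metric.tendsto_nhds.1 (pt0 0) r₀ hr₀).exists
    set m := φ k with hm
    have h0V : (0 : Euc N) ∈ {x | V x ≤ c m} ∩ ball (0 : Euc N) r₀ :=
      ⟨by simp [hV0, (hcpos m).le], by simp [hr₀]⟩
    obtain ⟨t₀, ht₀, ht₀r⟩ : ∃ t₀ ≤ (0 : ℝ), ‖p m t₀‖ ≤ 2 * r₀ := by
      rcases hcase : α m with _ | _ | a
      · have h1 := (hα m).1 hcase
        have h2 := (Metric.tendsto_nhds.1 h1 r₀ hr₀).and (eventually_le_atBot (ω m))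
        obtain ⟨t, ht, htω⟩ := h2.exists
        rw [dist_zero_right, Real.norm_eq_abs, abs_of_nonneg infDist_nonneg] at ht
        obtain ⟨y, hy, hyt⟩ := (infDist_lt_iff ⟨0, h0V⟩).1 ht
        refine ⟨t - ω m, by linarith, ?_⟩
        have hyr := hy.2
        rw [mem_ball_zero_iff] at hyr
        simp only [hp, sub_add_cancel]
        have : ‖q m t‖ ≤ ‖q m t - y‖ + ‖y‖ := norm_le_norm_sub_add _ _
        rw [dist_eq_norm] at hyt
        linarith
      · have := hαω m
        rw [hcase] at this
        exact absurd this not_top_lt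
      · have h1 := (hα m).2 a hcase
        have h2 := hαω m
        rw [hcase] at h2
        have h3 : a < ω m := EReal.coe_lt_coe_iff.1 h2
        refine ⟨a - ω m, by linarith, ?_⟩
        have := h1.2.2.2.2
        rw [mem_ball_zero_iff] at this
        simp only [hp, sub_add_cancel]
        linarith
    obtain ⟨C, hC⟩ := aux_path V hVc r₀ hr₀ hV0 μ hμ (q₀ 0) hVx (by linarith) (p m) _
      (aux_lip _ _ M (hpd m) (fun t => hqM _ _)) t₀ 0 (c m) ht₀ ht₀r
      (by rw [← dist_eq_norm]; exact hk.le)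
      (fun t => by
        have := hen m (t + ω m)
        have h2 : 0 ≤ 2⁻¹ * ‖deriv (q m) (t + ω m)‖ ^ 2 := by positivity
        simp only [hp]; linarith)
    refine ⟨C, ?_⟩
    filter_upwards [hcφ.eventually_lt_const (hcpos m), hcφ.eventually_lt_const hμ0] with n h1 h2
    rw [hJ]
    exact hC _ (hcpos _) h1 h2
  -- the connecting intervals become infinite
  have hlong : ∀ T : ℝ, ∀ᶠ n in atTop, α (φ n) < ((ω (φ n) - T : ℝ) : EReal) := by
    intro T
    by_contra hcon
    rw [not_eventually] at hcon
    obtain ⟨ψ, hψ, hψT⟩ := extraction_of_frequently_atTop hcon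
    have hs : ∀ k, ∃ s ∈ Icc (-T) 0, ‖p (φ (ψ k)) s‖ ≤ r₀ ∧ V (p (φ (ψ k)) s) = c (φ (ψ k)) ∧
        p' (φ (ψ k)) s = 0 := by
      intro k
      have h1 := hψT k
      rw [not_lt] at h1
      have h2 := hαω (φ (ψ k))
      obtain ⟨a, ha⟩ : ∃ a : ℝ, α (φ (ψ k)) = (a : EReal) := by
        rcases hcase : α (φ (ψ k)) with _ | _ | a
        · rw [hcase] at h1
          exact absurd h1 (not_le.2 (EReal.bot_lt_coe _))
        · rw [hcase] at h2
          exact absurd h2 not_top_lt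
        · exact ⟨a, rfl⟩
      have h3 := (hα (φ (ψ k))).2 a ha
      rw [ha] at h1 h2
      have h1' := EReal.coe_le_coe_iff.1 h1
      have h2' := EReal.coe_lt_coe_iff.1 h2
      refine ⟨a - ω (φ (ψ k)), ⟨by linarith, by linarith⟩, ?_⟩
      simp only [hp, hp', sub_add_cancel]
      have := h3.2.2.2.2
      rw [mem_ball_zero_iff] at this
      exact ⟨this.le, h3.2.2.1, h3.2.1⟩
    choose s hsI hsr hsV hs' using hs
    obtain ⟨s₀, -, χ, hχ, hχs⟩ := isCompact_Icc.tendsto_subseq hsI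
    have hψχ : Tendsto (fun k => ψ (χ k)) atTop atTop :=
      hψ.tendsto_atTop.comp hχ.tendsto_atTop
    have e0 : Tendsto (fun k => p (φ (ψ (χ k))) (s (χ k))) atTop (𝓝 (q₀ s₀)) := by
      have h : TendstoLocallyUniformly (fun k => p (φ (ψ (χ k)))) q₀ atTop := by
        intro u hu x
        obtain ⟨t, ht, h⟩ := l0 u hu x
        exact ⟨t, ht, hψχ.eventually h⟩
      exact h.tendsto_comp c0.continuousAt hχs
    have e1 : Tendsto (fun k => p' (φ (ψ (χ k))) (s (χ k))) atTop (𝓝 (q₁ s₀)) := by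
      have h : TendstoLocallyUniformly (fun k => p' (φ (ψ (χ k)))) q₁ atTop := by
        intro u hu x
        obtain ⟨t, ht, h⟩ := l1 u hu x
        exact ⟨t, ht, hψχ.eventually h⟩
      exact h.tendsto_comp c1.continuousAt hχs
    have f1 : q₁ s₀ = 0 :=
      tendsto_nhds_unique e1 (tendsto_const_nhds.congr fun k => (hs' (χ k)).symm)
    have f2 : V (q₀ s₀) = 0 := by rw [← hE, f1]; simp
    have f3 : ‖q₀ s₀‖ ≤ r₀ := le_of_tendsto e0.norm (Eventually.of_forall fun k => hsr _)
    have f4 : q₀ s₀ = 0 := by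
      by_contra hne
      have := hVpos (q₀ s₀) (by rw [mem_closedBall_zero_iff]; linarith) hne
      linarith
    have := aux_ode_unique (gradient V) hlip q₀ q₁ (fun _ => 0) (fun _ => 0) R hq0 hq1
      (fun t => hasDerivAt_const t 0) (fun t => by rw [hg0]; exact hasDerivAt_const t 0) b0
      (fun t => by simpa using (norm_nonneg _).trans (b0 t)) s₀ f4 f1
    exact hx0ne (congrFun this 0)
  -- integral bound
  have hint : ∀ T, 0 ≤ T → ∫ t in (-T)..0, V (q₀ t) ≤ max C 0 / 2 := by
    intro T hT
    have hlim : Tendsto (fun n => ∫ t in (-T)..0, ‖p' (φ n) t‖ ^ 2) atTop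
        (𝓝 (∫ t in (-T)..0, ‖q₁ t‖ ^ 2)) := by
      apply intervalIntegral.tendsto_integral_filter_of_dominated_convergence (fun _ => M ^ 2)
      · refine Eventually.of_forall fun n => Continuous.aestronglyMeasurable ?_
        have : Continuous (p' (φ n)) := continuous_iff_continuousAt.2 fun t =>
          (hpd' (φ n) t).continuousAt
        exact this.norm.pow 2
      · refine Eventually.of_forall fun n => Eventually.of_forall fun t _ => ?_
        rw [norm_pow, norm_norm]
        exact pow_le_pow_left₀ (norm_nonneg _) (hqM _ _) 2
      · exact intervalIntegrable_const
      · exact Eventually.of_forall fun t _ => (pt1 t).norm.pow 2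
    have hle : ∫ t in (-T)..0, ‖q₁ t‖ ^ 2 ≤ max C 0 := by
      refine le_of_tendsto hlim ?_
      filter_upwards [hC, hlong T] with n hn hn'
      have hcd : Continuous (fun t => ‖deriv (q (φ n)) t‖ ^ 2) := by
        have : Continuous (deriv (q (φ n))) := continuous_iff_continuousAt.2 fun t =>
          (hd' (φ n) t).continuousAt
        exact this.norm.pow 2
      have e1 : ∫ t in (-T)..0, ‖p' (φ n) t‖ ^ 2
          = ∫ t in (ω (φ n) - T)..(ω (φ n)), ‖deriv (q (φ n)) t‖ ^ 2 := by
        have := intervalIntegral.integral_comp_add_right (a := -T) (b := 0)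
          (fun t => ‖deriv (q (φ n)) t‖ ^ 2) (ω (φ n))
        simp only [hp']
        rw [this]
        congr 1 <;> ring
      rw [e1, intervalIntegral.integral_of_le (by linarith), integral_Ioc_eq_integral_Ioo]
      have hi : IntegrableOn (fun t => ‖deriv (q (φ n)) t‖ ^ 2) (Ioo (ω (φ n) - T) (ω (φ n))) :=
        (hcd.integrableOn_Icc).mono_set Ioo_subset_Icc_self
      have e2 : ENNReal.ofReal (∫ t in Ioo (ω (φ n) - T) (ω (φ n)), ‖deriv (q (φ n)) t‖ ^ 2)
          ≤ ENNReal.ofReal (max C 0) := by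
        rw [ofReal_integral_eq_lintegral_ofReal hi (Eventually.of_forall fun t => by positivity)]
        refine le_trans ?_ (hn.trans (ENNReal.ofReal_le_ofReal (le_max_left _ _)))
        unfold lagJ
        have e3 : ∀ t, 2⁻¹ * ‖deriv (q (φ n)) t‖ ^ 2 + (V (q (φ n) t) - c (φ n))
            = ‖deriv (q (φ n)) t‖ ^ 2 := fun t => by rw [← hen]; ring
        simp only [e3]
        apply lintegral_mono_set
        intro t ht
        exact ⟨hn'.trans (EReal.coe_lt_coe_iff.2 ht.1), ht.2⟩
      exact (ENNReal.ofReal_le_ofReal_iff (le_max_right _ _)).1 e2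
    have : ∫ t in (-T)..0, ‖q₁ t‖ ^ 2 = 2 * ∫ t in (-T)..0, V (q₀ t) := by
      rw [← intervalIntegral.integral_const_mul]
      congr 1
      funext t
      rw [← hE]; ring
    linarith
  obtain ⟨z1, z2, z3, z4⟩ := aux_homoclinic V hVc hlip q₀ q₁ R M (max C 0 / 2) hq0 hq1 b0 b1 hE hz
    hcl hC₀grad hint
  have d0 : deriv q₀ = q₁ := funext fun t => (hq0 t).deriv
  have d1 : deriv q₁ = fun t => gradient V (q₀ t) := funext fun t => (hq1 t).deriv
  refine ⟨φ, hφ, fun n => -ω (φ n), q₀, ?_, ?_, ?_, z1, z2, ?_, ?_, ?_, ?_, ?_⟩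
  · rw [show (2 : WithTop ℕ∞) = 1 + 1 by norm_num, contDiff_succ_iff_deriv]
    refine ⟨fun t => (hq0 t).differentiableAt, by simp, ?_⟩
    rw [d0, contDiff_one_iff_deriv, d1]
    exact ⟨fun t => (hq1 t).differentiableAt, hgc.comp c0⟩
  · intro t; rw [d0, d1]
  · by_contra hcon
    push Not at hcon
    have e : q₀ = fun _ => q₀ 0 := funext fun t => hcon t 0
    have e1 : q₁ = fun _ => 0 := by
      rw [← d0, e]; simp
    have e2 := congrFun d1 0
    rw [e1] at e2
    simp at e2
    exact hgx e2.symm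
  · rw [d0]; exact z3
  · rw [d0]; exact z4
  · simpa only [sub_neg_eq_add] using l0
  · rw [d0]; simpa only [sub_neg_eq_add] using l1
  · rw [d0, d1]
    simp only [sub_neg_eq_add, (hsol _).2.1]
    exact l2
end
end
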